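/- Let Y ⊂ P^{n_1} × P^{n_2} be an irreducible multiprojective variety of dimension e, let ℓ_1^{10},...,ℓ_e^{10} be general linear forms on P^{n_1} and ℓ_1^{01},...,ℓ_e^{01} general linear forms on P^{n_2}, and set M = (ℓ_1^{10}ℓ_1^{01}, ..., ℓ_e^{10}ℓ_e^{01}). Then the intersection Y ∩ V(M) is a transverse intersection consisting of exactly δ = Σ_{e_1+e_2=e} binomial(e, e_1) · Deg_Y(e_1,e_2) points, equal to the degree of the Segre embedding σ(Y) in P^{(n_1+1)(n_2+1)−1}; moreover Y ∩ V(M) is the disjoint union over partitions S ⊔ T = {1,...,e} of the sets Y ∩ V({ℓ_i^{10} : i∈S} ∪ {ℓ_j^{01} : j∈T}), each of cardinality Deg_Y(|S|,|T|). -/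

import Mathlib

/-!
The mathematical heart is an additivity statement: replacing one bilinear form of a generic system
on `Y` by a linear form on the first factor, respectively on the second factor, gives two generic
systems whose numbers of zeros add up to the number of zeros of the original one. Expanding the `e`
bilinear forms one at a time then writes the number of zeros of `e` generic bilinear forms, which is
the degree of the Segre image, as `∑_S Deg (|S|, e - |S|)` over subsets `S` of `{1, …, e}`
(`cnt_none`). On the other hand `ℓ_i^{10} ℓ_i^{01}` vanishes iff one of its two factors does, so
`Y ∩ V(M)` is the union over `S` of the multilinear sections. Each of these is a generic slice, hence
has the expected number of points, and they are disjoint because a common point of two of them is a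
zero of `e + 1` of the `2e` linear forms, while `e + 1` generic forms have no common zero on the
`e`-dimensional variety `Y`.

A form is linear on the factor `i` (type `some i`) or bilinear (type `none`), and a system is a
family of types `τ` with coefficients `c`. "Generic" means: off a hypersurface in coefficient space.

*Counts exist.* Let `R` be the coordinate ring of a nonempty affine chart of `Y`, of transcendence
degree `d` over `ℂ`. On the chart one monomial of each form, its pivot, equals `1`, so the
coefficient of the pivot can be eliminated from the equation. The incidence variety of zeros and
coefficients is therefore an affine space over the chart, with coordinate ring a polynomial ring
over `R`. For a system of at least `d` forms this ring is algebraic over the ring of coefficients,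
by a count of transcendence degrees, and the number of points in a generic fibre of a generically
finite algebra is constant (`generic_fibre`, `system_count`). The number is nonzero iff the
coefficient ring injects, and a transcendence basis of `R` consisting of coordinates yields a
multilinear slice for which this holds (`inc_injective`, `chart_basis`); this also identifies `d`
with the dimension `dimOf Y`, defined through slices (`exists_dim`). A generic system of at least
`d` forms has no zeros outside a given chart (`boundary`), so these counts are counts on `Y`
(`IsChartRing.gcount`).

*Additivity.* Fix `d - 1` of the forms with generic coefficients. Over the field `k` generated by
these coefficients they cut out a curve, with coordinate ring `S` finite and free over some
polynomial ring `k[X]`. The number of zeros on it of a further form `f` is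
`dim_k S/(f) = natDegree (norm f)`. For a valuation `v` with a pole at `X`, this degree is read off
from the product of `v (θ f)` over the embeddings `θ` of the function field of the curve into an
algebraic closure. For a generic combination `f = ∑ τ_i F_i`, the value `v (θ f)` is the largest
among the `v (θ F_i)`, and the largest value of `v (θ (F_i G_j)) = v (θ F_i) v (θ G_j)` is the
product of the two maxima (`norm_degree_add`, `curve_finrank`, `chart_split`).
-/


open scoped BigOperators

namespace MultiProj

variable {ι : Type*} [Fintype ι] [DecidableEq ι]

/-- Multiprojective space: a product of complex projective spaces `ℙ^{n i}`. -/
abbrev PStack (n : ι → ℕ) := (i : ι) → Projectivization ℂ (Fin (n i + 1) → ℂ)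

/-- A linear form (given by its coefficient vector) vanishes at a point of the
projectivization of a coordinate space. -/
def PLinVanish {κ : Type*} [Fintype κ] (c : κ → ℂ)
    (p : Projectivization ℂ (κ → ℂ)) : Prop :=
  ∀ (v : κ → ℂ) (hv : v ≠ 0), Projectivization.mk ℂ v hv = p → ∑ a, c a * v a = 0

/-- A polynomial in the multihomogeneous coordinates vanishes at a point of the
multiprojective space, i.e. at every system of homogeneous representatives. -/
def PolyVanish {n : ι → ℕ} (f : MvPolynomial ((i : ι) × Fin (n i + 1)) ℂ)
    (x : PStack n) : Prop :=
  ∀ v : (i : ι) → Fin (n i + 1) → ℂ,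
    (∀ i, ∃ hv : v i ≠ 0, Projectivization.mk ℂ (v i) hv = x i) →
    MvPolynomial.eval (fun p => v p.1 p.2) f = 0

/-- Algebraic subsets of multiprojective space. -/
def IsAlgebraicSet {n : ι → ℕ} (X : Set (PStack n)) : Prop :=
  ∃ F : Set (MvPolynomial ((i : ι) × Fin (n i + 1)) ℂ),
    X = {x | ∀ f ∈ F, PolyVanish f x}

/-- Irreducible multiprojective varieties: nonempty algebraic sets that are not
contained in the union of two algebraic sets without being contained in one. -/
def IsIrredVariety {n : ι → ℕ} (X : Set (PStack n)) : Prop :=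
  IsAlgebraicSet X ∧ X.Nonempty ∧
    ∀ A B : Set (PStack n), IsAlgebraicSet A → IsAlgebraicSet B →
      X ⊆ A ∪ B → (X ⊆ A ∨ X ⊆ B)

/-- An irreducible component of a multiprojective variety. -/
def IsComponentOf {n : ι → ℕ} (Y X : Set (PStack n)) : Prop :=
  IsIrredVariety Y ∧ Y ⊆ X ∧
    ∀ Y' : Set (PStack n), IsIrredVariety Y' → Y ⊆ Y' → Y' ⊆ X → Y' = Y

/-- Parameter space for a multilinear slice of type `e`: `e i` linear forms in
the variables of the `i`-th factor. -/
abbrev SliceParams (n : ι → ℕ) (e : ι → ℕ) :=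
  (i : ι) → Fin (e i) → (Fin (n i + 1) → ℂ)

/-- The common zero set in multiprojective space of a multilinear slice. -/
def SliceZeros {n : ι → ℕ} {e : ι → ℕ} (L : SliceParams n e) : Set (PStack n) :=
  {x | ∀ (i : ι) (j : Fin (e i)), PLinVanish (L i j) (x i)}

/-- A property holds generically (on a dense open set) of a parameter. -/
def Generic {α : Type*} [TopologicalSpace α] (P : α → Prop) : Prop :=
  ∃ U : Set α, IsOpen U ∧ Dense U ∧ ∀ a ∈ U, P a

/-- The multidimension `Dim(X)`: the set of vectors `e` such that a general
multilinear slice of type `e` meets `X` in finitely many, and at least one, points. -/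
def MDim {n : ι → ℕ} (X : Set (PStack n)) : Set (ι → ℕ) :=
  {e | (∀ i, e i ≤ n i) ∧
    Generic (fun L : SliceParams n e =>
      (X ∩ SliceZeros L).Finite ∧ (X ∩ SliceZeros L).Nonempty)}

/-- `Deg_X(e) = d`: a general multilinear slice of type `e` meets `X` in exactly
`d` points. -/
def DegIs {n : ι → ℕ} (X : Set (PStack n)) (e : ι → ℕ) (d : ℕ) : Prop :=
  Generic (fun L : SliceParams n e =>
    (X ∩ SliceZeros L).Finite ∧ (X ∩ SliceZeros L).ncard = d)

/-- The intrinsic dimension of a multiprojective variety, read off as the common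
total degree of the vectors in its multidimension. -/
noncomputable def dimOf {n : ι → ℕ} (X : Set (PStack n)) : ℕ :=
  sSup {m | ∃ e ∈ MDim X, ∑ i, e i = m}

/-- Projection of the multiprojective space onto the factors indexed by `I`. -/
def resMap {n : ι → ℕ} (I : Finset ι) (x : PStack n) :
    PStack (fun i : {j // j ∈ I} => n i.1) :=
  fun i => x i.1

/-- `dim π_I(X)`: the dimension of the projection of `X` onto the factors
indexed by `I`. -/
noncomputable def dimProj {n : ι → ℕ} (I : Finset ι) (X : Set (PStack n)) : ℕ :=
  dimOf (resMap I '' X)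

/-- An equidimensional multiprojective variety: all irreducible components have
the same multidimension. -/
def Equidimensional {n : ι → ℕ} (X : Set (PStack n)) : Prop :=
  IsAlgebraicSet X ∧ X.Nonempty ∧
    ∀ Y Y' : Set (PStack n), IsComponentOf Y X → IsComponentOf Y' X →
      MDim Y = MDim Y'

/-- The set of lattice points of a polymatroid polytope inside the box `[n]`,
cut out by a submodular, monotone rank function. -/
def IsPolymatroidSet (n : ι → ℕ) (P : Set (ι → ℕ)) : Prop :=
  ∃ r : Finset ι → ℕ,
    (∀ A B : Finset ι, r (A ∪ B) + r (A ∩ B) ≤ r A + r B) ∧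
    (∀ A B : Finset ι, A ⊆ B → r A ≤ r B) ∧
    P = {e | (∀ i, e i ≤ n i) ∧ (∑ i, e i = r Finset.univ) ∧
          ∀ S : Finset ι, ∑ i ∈ S, e i ≤ r S}

section Product

variable {ι₁ ι₂ : Type*} [Fintype ι₁] [DecidableEq ι₁] [Fintype ι₂] [DecidableEq ι₂]

/-- Combine points of two multiprojective spaces into a point of the product
multiprojective space, indexed by the disjoint union of the index sets. -/
def combine {n₁ : ι₁ → ℕ} {n₂ : ι₂ → ℕ} (y : PStack n₁) (z : PStack n₂) :
    PStack (Sum.elim n₁ n₂) := fun i =>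
  match i with
  | Sum.inl a => y a
  | Sum.inr b => z b

/-- The Cartesian product of multiprojective varieties in disjoint factors. -/
def prodSet {n₁ : ι₁ → ℕ} {n₂ : ι₂ → ℕ} (Y : Set (PStack n₁)) (Z : Set (PStack n₂)) :
    Set (PStack (Sum.elim n₁ n₂)) :=
  {x | ∃ y ∈ Y, ∃ z ∈ Z, x = combine y z}

/-- Projection of the product multiprojective space onto the first group of factors. -/
def projL {n₁ : ι₁ → ℕ} {n₂ : ι₂ → ℕ} (x : PStack (Sum.elim n₁ n₂)) : PStack n₁ :=
  fun a => x (Sum.inl a)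

/-- Projection of the product multiprojective space onto the second group of factors. -/
def projR {n₁ : ι₁ → ℕ} {n₂ : ι₂ → ℕ} (x : PStack (Sum.elim n₁ n₂)) : PStack n₂ :=
  fun b => x (Sum.inr b)

end Product

section Segre

/-- Degree `δ` of a subset `S` of the projective space `ℙ(ℂ^κ)` of dimension `d`:
a general collection of `d` hyperplanes meets `S` in exactly `δ` points. -/
def ProjDegIs {κ : Type*} [Fintype κ] (S : Set (Projectivization ℂ (κ → ℂ)))
    (d : ℕ) (δ : ℕ) : Prop :=
  Generic (fun c : Fin d → κ → ℂ =>
    (S ∩ {p | ∀ j, PLinVanish (c j) p}).Finite ∧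
    (S ∩ {p | ∀ j, PLinVanish (c j) p}).ncard = δ)

/-- `σ` is a Segre embedding: on homogeneous representatives it is given by the
tensor (outer) product of the coordinate vectors of the factors. -/
def IsSegreMap (n : ι → ℕ)
    (σ : PStack n → Projectivization ℂ (((i : ι) → Fin (n i + 1)) → ℂ)) : Prop :=
  ∀ (x : PStack n) (v : (i : ι) → Fin (n i + 1) → ℂ),
    (∀ i, ∃ hv : v i ≠ 0, Projectivization.mk ℂ (v i) hv = x i) →
    ∃ h : (fun a : (i : ι) → Fin (n i + 1) => ∏ i, v i (a i)) ≠ 0,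
      Projectivization.mk ℂ (fun a : (i : ι) → Fin (n i + 1) => ∏ i, v i (a i)) h = σ x

end Segre

end MultiProj

/-! ### Generic fibres of generically finite algebras -/

namespace Coarsening
open Polynomial

/-- A primitive element of `Frac B / Frac A`, scaled into `B`: it is a root `z` of a polynomial `P`
over `A` with `aeval z (derivative P) ≠ 0`, and after inverting a common denominator `c ∈ A` it generates `B`. -/
theorem exists_primitive {A B : Type} [CommRing A] [IsDomain A] [CharZero A] [CommRing B]
    [IsDomain B] [Algebra A B] [Algebra.FiniteType A B] [FaithfulSMul A B]
    [Algebra.IsAlgebraic A B] :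
    ∃ (z : B) (P : A[X]) (c : A), c ≠ 0 ∧ P ≠ 0 ∧ aeval z P = 0 ∧ aeval z (derivative P) ≠ 0 ∧
      ∀ b : B, ∃ m : ℕ, c ^ m • b ∈ Algebra.adjoin A {z} := by
  classical
  let K := FractionRing A
  let L := FractionRing B
  let : Algebra K L := FractionRing.liftAlgebra A L
  have hBL : Algebra.IsAlgebraic B L := IsLocalization.isAlgebraic _ (nonZeroDivisors B)
  have hAL : Algebra.IsAlgebraic A L := Algebra.IsAlgebraic.trans A B L
  have hKL : Algebra.IsAlgebraic K L := (IsFractionRing.comap_isAlgebraic_iff (A := A)).mp hAL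
  have : CharZero K := charZero_of_injective_algebraMap (IsFractionRing.injective A K)
  have hess : Algebra.EssFiniteType A L := by
    have : Algebra.EssFiniteType B L := Algebra.EssFiniteType.of_isLocalization _ (nonZeroDivisors B)
    exact Algebra.EssFiniteType.comp A B L
  have hessK : Algebra.EssFiniteType K L := Algebra.EssFiniteType.of_comp A K L
  have hfin : FiniteDimensional K L := by
    obtain ⟨s, hs⟩ := IntermediateField.fg_top_iff.mpr hessK
    have h1 : FiniteDimensional K (IntermediateField.adjoin K (s : Set L)) :=
      IntermediateField.finiteDimensional_adjoin (fun x _ => (hKL.isAlgebraic x).isIntegral)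
    rw [hs] at h1
    exact (IntermediateField.topEquiv (F := K) (E := L)).toLinearEquiv.finiteDimensional
  obtain ⟨z0, hz0⟩ := Field.exists_primitive_element K L
  -- clear denominators to move the primitive element into `B`
  obtain ⟨⟨z, ⟨_, a, ha, rfl⟩⟩, hz⟩ :=
    IsLocalization.surj (Algebra.algebraMapSubmonoid B (nonZeroDivisors A)) z0
  have ha0 : a ≠ 0 := nonZeroDivisors.ne_zero ha
  have haK : algebraMap A K a ≠ 0 := by
    simpa using ha0
  have hzK : algebraMap B L z = (algebraMap A K a) • z0 := by
    rw [Algebra.smul_def, ← hz, ← IsScalarTower.algebraMap_apply A K L,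
      IsScalarTower.algebraMap_apply A B L, mul_comm]
  have hprim : Algebra.adjoin K {algebraMap B L z} = ⊤ := by
    have h1 : IntermediateField.adjoin K {algebraMap B L z} = ⊤ := by
      rw [eq_top_iff, ← hz0, IntermediateField.adjoin_simple_le_iff]
      have h2 := IntermediateField.mem_adjoin_simple_self K (algebraMap B L z)
      have h3 : z0 = (algebraMap A K a)⁻¹ • algebraMap B L z := by
        rw [hzK, smul_smul, inv_mul_cancel₀ haK, one_smul]
      rw [h3]
      exact IntermediateField.smul_mem _ h2
    have h2 := IntermediateField.adjoin_simple_toSubalgebra_of_isAlgebraic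
      (hKL.isAlgebraic (algebraMap B L z))
    rw [← h2, h1]; rfl
  -- the minimal polynomial over `K`, with denominators cleared
  let q := minpoly K (algebraMap B L z)
  have hqi : IsIntegral K (algebraMap B L z) := (hKL.isAlgebraic _).isIntegral
  have hq0 : q ≠ 0 := minpoly.ne_zero hqi
  have hqs : aeval (algebraMap B L z) (derivative q) ≠ 0 :=
    (minpoly.irreducible hqi).separable.aeval_derivative_ne_zero (minpoly.aeval _ _)
  obtain ⟨d, hdm, hd⟩ := IsLocalization.integerNormalization_spec (nonZeroDivisors A) q
  set P := IsLocalization.integerNormalization (nonZeroDivisors A) q with hP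
  have hdK : algebraMap A K d ≠ 0 := by
    simpa using nonZeroDivisors.ne_zero hdm
  have key : ∀ R : A[X], algebraMap B L (aeval z R) = aeval (algebraMap B L z) (R.map (algebraMap A K)) := by
    intro R
    rw [aeval_map_algebraMap, aeval_algebraMap_apply]
  have hd' : P.map (algebraMap A K) = C (algebraMap A K d) * q := by
    rw [hd, Algebra.smul_def, Polynomial.algebraMap_apply]
  have inj := IsFractionRing.injective B L
  -- each element has its own denominator; finite generation then gives a common one
  have hgen : ∀ b : B, ∃ c : A, c ≠ 0 ∧ c • b ∈ Algebra.adjoin A {z} := by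
    intro b
    have hb : algebraMap B L b ∈ Algebra.adjoin K {algebraMap B L z} := by rw [hprim]; trivial
    rw [Algebra.adjoin_singleton_eq_range_aeval] at hb
    obtain ⟨p, hp⟩ := hb
    obtain ⟨d, hdm, hd⟩ := IsLocalization.integerNormalization_spec (nonZeroDivisors A) p
    refine ⟨d, nonZeroDivisors.ne_zero hdm, ?_⟩
    have : d • b = aeval z (IsLocalization.integerNormalization (nonZeroDivisors A) p) := by
      apply inj
      rw [key, hd, Algebra.smul_def, Algebra.smul_def, map_mul, map_mul,
        Polynomial.algebraMap_apply, aeval_C]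
      congr 1
      · rw [← IsScalarTower.algebraMap_apply A B L, ← IsScalarTower.algebraMap_apply A K L]
      · exact hp.symm
    rw [this]
    exact aeval_mem_adjoin_singleton _ _
  obtain ⟨s, hs⟩ := (inferInstance : Algebra.FiniteType A B).out
  choose cc hcc0 hcc using hgen
  refine ⟨z, P, ∏ b ∈ s, cc b, Finset.prod_ne_zero_iff.mpr fun b _ => hcc0 b, ?_, ?_, ?_, ?_⟩
  · intro h
    rw [h, Polynomial.map_zero] at hd'
    exact mul_ne_zero (C_ne_zero.mpr hdK) hq0 hd'.symm
  · apply inj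
    rw [key, hd', map_mul, map_zero, minpoly.aeval, mul_zero]
  · intro h
    have h1 := key (derivative P)
    rw [h, map_zero, ← derivative_map, hd', derivative_C_mul, map_mul, aeval_C] at h1
    rcases mul_eq_zero.mp h1.symm with h2 | h2
    · rw [map_eq_zero] at h2
      exact hdK h2
    · exact hqs h2
  · intro b
    have hb : b ∈ Algebra.adjoin A (s : Set B) := by rw [hs]; trivial
    induction hb using Algebra.adjoin_induction with
    | mem x hx =>
      refine ⟨1, ?_⟩
      rw [pow_one, ← Finset.prod_erase_mul s cc hx, mul_smul]
      exact Subalgebra.smul_mem _ (hcc x) _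
    | algebraMap r =>
      exact ⟨0, by simp⟩
    | add x y _ _ hx hy =>
      obtain ⟨m, hm⟩ := hx
      obtain ⟨n, hn⟩ := hy
      refine ⟨m + n, ?_⟩
      rw [smul_add]
      refine Subalgebra.add_mem _ ?_ ?_
      · rw [add_comm, pow_add, mul_smul]; exact Subalgebra.smul_mem _ hm _
      · rw [pow_add, mul_smul]; exact Subalgebra.smul_mem _ hn _
    | mul x y _ _ hx hy =>
      obtain ⟨m, hm⟩ := hx
      obtain ⟨n, hn⟩ := hy
      refine ⟨m + n, ?_⟩
      rw [pow_add, ← smul_mul_smul_comm]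
      exact Subalgebra.mul_mem _ hm hn

section Count

variable {A B Ag Bg : Type} [CommRing A] [CommRing B] [Algebra A B] [CommRing Ag] [CommRing Bg]
  [Algebra A Ag] [Algebra B Bg] [Algebra Ag Bg] [Algebra A Bg] [IsScalarTower A B Bg]
  [IsScalarTower A Ag Bg] (M : Submonoid A) [IsLocalization M Ag]
  [IsLocalization (Algebra.algebraMapSubmonoid B M) Bg]

/-- Points of `Spec B` over a point `f` of `Spec A` at which `M` is invertible are points of the
localization. -/
theorem homs_equiv {Ω : Type} [Field Ω] [Algebra Ag Ω] (f : A →+* Ω) (hfg : ∀ a, algebraMap Ag Ω (algebraMap A Ag a) = f a)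
    (hfM : ∀ y : M, IsUnit (f y)) :
    Nonempty ({φ : B →+* Ω | φ.comp (algebraMap A B) = f} ≃ (Bg →ₐ[Ag] Ω)) := by
  have hu : ∀ φ : {φ : B →+* Ω | φ.comp (algebraMap A B) = f},
      ∀ y : Algebra.algebraMapSubmonoid B M, IsUnit (φ.1 y) := by
    rintro φ ⟨_, a, ha, rfl⟩
    have : φ.1 (algebraMap A B a) = f a := congrArg (fun h => h a) φ.2
    simp only
    rw [this]
    exact hfM ⟨a, ha⟩
  have hl : ∀ φ : {φ : B →+* Ω | φ.comp (algebraMap A B) = f},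
      (IsLocalization.lift (S := Bg) (hu φ)).comp (algebraMap Ag Bg) = algebraMap Ag Ω := by
    intro φ
    apply IsLocalization.ringHom_ext M
    ext a
    simp only [RingHom.comp_apply]
    rw [← IsScalarTower.algebraMap_apply A Ag Bg, IsScalarTower.algebraMap_apply A B Bg,
      IsLocalization.lift_eq, hfg]
    exact congrArg (fun h => h a) φ.2
  have hψ : ∀ ψ : Bg →ₐ[Ag] Ω,
      (ψ.toRingHom.comp (algebraMap B Bg)).comp (algebraMap A B) = f := by
    intro ψ
    ext a
    simp only [RingHom.comp_apply]
    rw [← IsScalarTower.algebraMap_apply A B Bg, IsScalarTower.algebraMap_apply A Ag Bg]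
    exact (ψ.commutes _).trans (hfg a)
  refine ⟨Equiv.ofBijective (fun φ => (AlgHom.mk (IsLocalization.lift (S := Bg) (hu φ))
    (fun a => congrArg (fun h => h a) (hl φ)) : Bg →ₐ[Ag] Ω)) ⟨?_, ?_⟩⟩
  · intro φ φ' h
    ext b
    have h1 : IsLocalization.lift (S := Bg) (hu φ) = IsLocalization.lift (S := Bg) (hu φ') :=
      congrArg AlgHom.toRingHom h
    rw [← IsLocalization.lift_eq (S := Bg) (hu φ) b, h1, IsLocalization.lift_eq]
  · intro ψ
    refine ⟨⟨_, hψ ψ⟩, ?_⟩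
    apply AlgHom.coe_ringHom_injective
    apply IsLocalization.ringHom_ext (Algebra.algebraMapSubmonoid B M)
    ext b
    exact IsLocalization.lift_eq _ b

/-- If the derivative of the minimal polynomial of a generator is a unit, the polynomial specializes
to one with distinct roots, so every fibre over `ℂ` has as many points as the degree. -/
theorem card_homs_powerBasis [IsDomain Ag] [Algebra Ag ℂ] (pb : PowerBasis Ag Bg)
    (hQu : IsUnit (aeval pb.gen (derivative (minpoly Ag pb.gen)))) :
    Finite (Bg →ₐ[Ag] ℂ) ∧ Nat.card (Bg →ₐ[Ag] ℂ) = (minpoly Ag pb.gen).natDegree := by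
  classical
  set Q := minpoly Ag pb.gen with hQ
  have hQm : Q.Monic := minpoly.monic pb.isIntegral_gen
  have hnodup : (Q.aroots ℂ).Nodup := by
    rw [Multiset.nodup_iff_count_le_one]
    intro ζ
    by_contra hcon
    push Not at hcon
    rw [aroots, count_roots, one_lt_rootMultiplicity_iff_isRoot (hQm.map _).ne_zero] at hcon
    obtain ⟨h1, h2⟩ := hcon
    have h3 : aeval ζ (minpoly Ag pb.gen) = 0 := by
      rw [← eval_map_algebraMap]; exact h1
    have h4 := hQu.map (pb.lift ζ h3)
    rw [← aeval_algHom_apply, pb.lift_gen, ← eval_map_algebraMap, ← derivative_map] at h4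
    exact h4.ne_zero h2
  have hcard : (Q.aroots ℂ).card = Q.natDegree := by
    rw [aroots, IsAlgClosed.card_roots_eq_natDegree, hQm.natDegree_map]
  have e3 : {y : ℂ // y ∈ (minpoly Ag pb.gen).aroots ℂ} ≃ {y : ℂ // y ∈ (Q.aroots ℂ).toFinset} :=
    Equiv.subtypeEquivRight (fun y => by rw [Multiset.mem_toFinset])
  have e4 := pb.liftEquiv'.trans e3
  refine ⟨Finite.of_equiv _ e4.symm, ?_⟩
  rw [Nat.card_congr e4, Nat.card_eq_fintype_card, Fintype.card_coe,
    Multiset.toFinset_card_of_nodup hnodup, hcard]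

/-- If `B` becomes free after localizing at `M`, then its base change to a field in which `M` is
invertible has the same rank. -/
theorem finrank_pushout [Module.Free Ag Bg] [Nontrivial Ag] (k T : Type) [Field k] [CommRing T]
    [Algebra A k] [Algebra k T] [Algebra B T]
    [Algebra A T] [IsScalarTower A k T] [IsScalarTower A B T] [Algebra.IsPushout A k B T]
    (hfM : ∀ y : M, IsUnit (algebraMap A k y)) : Module.finrank k T = Module.finrank Ag Bg := by
  let : Algebra Ag k := (IsLocalization.lift hfM : Ag →+* k).toAlgebra
  have : IsScalarTower A Ag k := IsScalarTower.of_algebraMap_eq fun a =>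
    (IsLocalization.lift_eq hfM a).symm
  have hpo : Algebra.IsPushout A Ag B Bg :=
    (Algebra.isPushout_of_isLocalization M Ag B Bg).symm
  have E1 : TensorProduct A k B ≃ₗ[k] T := (Algebra.IsPushout.equiv A k B T).toLinearEquiv
  have E2 := TensorProduct.AlgebraTensorModule.cancelBaseChange A Ag k k B
  have E3 : TensorProduct A Ag B ≃ₗ[Ag] Bg := (Algebra.IsPushout.equiv A Ag B Bg).toLinearEquiv
  have : Module.Free Ag (TensorProduct A Ag B) := Module.Free.of_equiv E3.symm
  rw [← E1.finrank_eq, ← E2.finrank_eq, Module.finrank_baseChange, E3.finrank_eq]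

/-- After inverting `g = c · lc(P) · r`, where `r` is a multiple of the derivative of `P` at `z`, `B` is
generated by `z`, which is integral with a separable minimal polynomial. Hence `B` is free on the
powers of `z`, all complex fibres have the same number `N` of points, and `N` is also the
dimension of the base change to any field. -/
theorem generic_fibre_aux [IsDomain Ag] [IsDomain Bg] [IsIntegrallyClosed Ag] [FaithfulSMul Ag Bg]
    (z : B) (P : A[X]) (c r g : A) (hM : M = Submonoid.powers g)
    (hg : g = c * P.leadingCoeff * r) (hPz : aeval z P = 0)
    (hgen : ∀ b : B, ∃ m : ℕ, c ^ m • b ∈ Algebra.adjoin A {z})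
    (hrd : aeval z (derivative P) ∣ algebraMap A B r) :
    ∃ N : ℕ, N ≠ 0 ∧
      (∀ f : A →+* ℂ, f g ≠ 0 →
        {φ : B →+* ℂ | φ.comp (algebraMap A B) = f}.Finite ∧
        {φ : B →+* ℂ | φ.comp (algebraMap A B) = f}.ncard = N) ∧
      (∀ (k T : Type) [Field k] [CommRing T] [Algebra A k] [Algebra k T] [Algebra B T]
        [Algebra A T] [IsScalarTower A k T] [IsScalarTower A B T] [Algebra.IsPushout A k B T],
        algebraMap A k g ≠ 0 → Module.finrank k T = N) := by
  have hgu : IsUnit (algebraMap A Ag g) :=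
    IsLocalization.map_units Ag (⟨g, hM ▸ Submonoid.mem_powers g⟩ : M)
  have hgB : ∀ x : A, IsUnit (algebraMap A Ag x) → IsUnit (algebraMap B Bg (algebraMap A B x)) := by
    intro x hx
    rw [← IsScalarTower.algebraMap_apply A B Bg, IsScalarTower.algebraMap_apply A Ag Bg]
    exact hx.map _
  have hcu : IsUnit (algebraMap A Ag c) := by
    refine isUnit_of_dvd_unit (map_dvd _ ?_) hgu
    exact ⟨P.leadingCoeff * r, by rw [hg, mul_assoc]⟩
  have hlu : IsUnit (algebraMap A Ag P.leadingCoeff) := by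
    refine isUnit_of_dvd_unit (map_dvd _ ?_) hgu
    exact ⟨c * r, by rw [hg]; ring⟩
  have hru : IsUnit (algebraMap A Ag r) := by
    refine isUnit_of_dvd_unit (map_dvd _ ?_) hgu
    exact ⟨c * P.leadingCoeff, by rw [hg]; ring⟩
  set z' : Bg := algebraMap B Bg z with hz'
  have haev : ∀ R : A[X], aeval z' (R.map (algebraMap A Ag)) = algebraMap B Bg (aeval z R) := by
    intro R
    rw [aeval_map_algebraMap, aeval_algebraMap_apply]
  have hz'int : IsIntegral Ag z' := by
    obtain ⟨u, hu⟩ := hlu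
    refine ⟨C (↑u⁻¹ : Ag) * P.map (algebraMap A Ag), ?_, ?_⟩
    · rw [Monic, leadingCoeff_mul, leadingCoeff_C, leadingCoeff_map_of_leadingCoeff_ne_zero, ← hu,
        Units.inv_mul]
      rw [← hu]; exact u.ne_zero
    · rw [← aeval_def, map_mul, haev, hPz, map_zero, mul_zero]
  have hadj : Algebra.adjoin Ag {z'} = ⊤ := by
    have hB : ∀ b : B, algebraMap B Bg b ∈ Algebra.adjoin Ag {z'} := by
      intro b
      obtain ⟨m, hm⟩ := hgen b
      obtain ⟨u, hu⟩ := hcu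
      rw [Algebra.adjoin_singleton_eq_range_aeval] at hm
      obtain ⟨R, hR⟩ := hm
      have h1 : aeval z' (R.map (algebraMap A Ag)) = (algebraMap A Ag c) ^ m • algebraMap B Bg b := by
        rw [haev]
        have : aeval z R = c ^ m • b := hR
        rw [this, Algebra.smul_def, map_mul, ← IsScalarTower.algebraMap_apply A B Bg,
          Algebra.smul_def, ← map_pow, ← IsScalarTower.algebraMap_apply A Ag Bg]
      have h2 : algebraMap B Bg b = (↑(u⁻¹ ^ m) : Ag) • aeval z' (R.map (algebraMap A Ag)) := by
        rw [h1, ← hu, smul_smul, ← Units.val_pow_eq_pow_val, ← Units.val_mul, ← mul_pow]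
        simp
      rw [h2]
      exact Subalgebra.smul_mem _ (aeval_mem_adjoin_singleton _ _) _
    rw [eq_top_iff]
    rintro x -
    obtain ⟨⟨b, ⟨_, a, ha, rfl⟩⟩, hx⟩ := IsLocalization.surj (Algebra.algebraMapSubmonoid B M) x
    obtain ⟨v, hv⟩ := IsLocalization.map_units Ag (⟨a, ha⟩ : M)
    have h3 : x = (↑v⁻¹ : Ag) • algebraMap B Bg b := by
      rw [← hx, Algebra.smul_def]
      change _ = _ * (x * algebraMap B Bg (algebraMap A B a))
      rw [← IsScalarTower.algebraMap_apply A B Bg, IsScalarTower.algebraMap_apply A Ag Bg, ← hv,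
        mul_left_comm, ← map_mul, Units.inv_mul, map_one, mul_one]
    rw [h3]
    exact Subalgebra.smul_mem _ (hB b) _
  let pb : PowerBasis Ag Bg := PowerBasis.ofAdjoinEqTop' hz'int hadj
  have hgenz : pb.gen = z' := PowerBasis.ofAdjoinEqTop'_gen _ _
  let Q := minpoly Ag z'
  have hQm : Q.Monic := minpoly.monic hz'int
  -- the derivative of the minimal polynomial is a unit at the generator
  have hQu : IsUnit (aeval z' (derivative Q)) := by
    obtain ⟨h, hh⟩ := minpoly.isIntegrallyClosed_dvd hz'int
      (show aeval z' (P.map (algebraMap A Ag)) = 0 by rw [haev, hPz, map_zero])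
    have h1 : aeval z' (derivative (P.map (algebraMap A Ag))) =
        aeval z' (derivative Q) * aeval z' h := by
      rw [hh, derivative_mul, map_add, map_mul, map_mul, minpoly.aeval, zero_mul, add_zero]
    rw [derivative_map, haev] at h1
    have h2 : IsUnit (algebraMap B Bg (aeval z (derivative P))) :=
      isUnit_of_dvd_unit (map_dvd _ hrd) (hgB r hru)
    rw [h1] at h2
    exact isUnit_of_mul_isUnit_left h2
  have hfM : ∀ {k : Type} [Field k] (f : A →+* k), f g ≠ 0 → ∀ y : M, IsUnit (f y) := by
    rintro k _ f hf ⟨y, hy⟩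
    rw [hM] at hy
    obtain ⟨m, rfl⟩ := hy
    simp only [map_pow]
    exact (IsUnit.mk0 _ hf).pow m
  have hNd : pb.dim = Q.natDegree := PowerBasis.ofAdjoinEqTop'_dim _ _
  clear_value pb
  refine ⟨Q.natDegree, ?_, ?_, ?_⟩
  · exact (minpoly.natDegree_pos hz'int).ne'
  · intro f hf
    let fg : Ag →+* ℂ := IsLocalization.lift (hfM f hf)
    let : Algebra Ag ℂ := fg.toAlgebra
    obtain ⟨e⟩ := homs_equiv (B := B) (Bg := Bg) (Ag := Ag) M f
      (fun a => IsLocalization.lift_eq (hfM f hf) a) (hfM f hf)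
    have h := card_homs_powerBasis pb (by rw [hgenz]; exact hQu)
    have h1 := h.1
    have : Finite {φ : B →+* ℂ | φ.comp (algebraMap A B) = f} := Finite.of_equiv _ e.symm
    refine ⟨Set.toFinite _, ?_⟩
    rw [← Nat.card_coe_set_eq, Nat.card_congr e, h.2, hgenz]
  · intro k T _ _ _ _ _ _ _ _ _ hgk
    have : Module.Free Ag Bg := Module.Free.of_basis pb.basis
    rw [finrank_pushout (A := A) (B := B) (Ag := Ag) (Bg := Bg) M k T (hfM _ hgk), pb.finrank, hNd]

end Count

/-- The generic fibre of an injective, algebraic algebra of finite type is nonempty, with a constant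
number of points. -/
theorem generic_fibre_inj {A B : Type} [CommRing A] [IsDomain A] [CharZero A]
    [IsIntegrallyClosed A] [CommRing B] [IsDomain B] [Algebra A B] [Algebra.FiniteType A B]
    [FaithfulSMul A B] [Algebra.IsAlgebraic A B] :
    ∃ (N : ℕ) (g : A), N ≠ 0 ∧ g ≠ 0 ∧
      (∀ f : A →+* ℂ, f g ≠ 0 →
        {φ : B →+* ℂ | φ.comp (algebraMap A B) = f}.Finite ∧
        {φ : B →+* ℂ | φ.comp (algebraMap A B) = f}.ncard = N) ∧
      (∀ (k T : Type) [Field k] [CommRing T] [Algebra A k] [Algebra k T] [Algebra B T]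
        [Algebra A T] [IsScalarTower A k T] [IsScalarTower A B T] [Algebra.IsPushout A k B T],
        algebraMap A k g ≠ 0 → Module.finrank k T = N) := by
  obtain ⟨z, P, c, hc, hP0, hPz, hPz', hgen⟩ := exists_primitive (A := A) (B := B)
  obtain ⟨r, hr, hrd⟩ := (Algebra.IsAlgebraic.isAlgebraic (R := A)
    (aeval z (derivative P))).exists_nonzero_dvd (mem_nonZeroDivisors_of_ne_zero hPz')
  obtain ⟨g, hgd⟩ : ∃ g, g = c * P.leadingCoeff * r := ⟨_, rfl⟩
  have hg : g ≠ 0 := hgd ▸ mul_ne_zero (mul_ne_zero hc (leadingCoeff_ne_zero.mpr hP0)) hr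
  obtain ⟨M, hMd⟩ : ∃ M, M = Submonoid.powers g := ⟨_, rfl⟩
  have hM : M ≤ nonZeroDivisors A := hMd ▸ powers_le_nonZeroDivisors_of_noZeroDivisors hg
  have hMB : Algebra.algebraMapSubmonoid B M ≤ nonZeroDivisors B :=
    map_le_nonZeroDivisors_of_injective _ (FaithfulSMul.algebraMap_injective A B) hM
  have : IsDomain (Localization M) := IsLocalization.isDomain_localization hM
  have : IsDomain (Localization (Algebra.algebraMapSubmonoid B M)) :=
    IsLocalization.isDomain_localization hMB
  have hinj : Function.Injective (algebraMap (Localization M)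
      (Localization (Algebra.algebraMapSubmonoid B M))) := by
    have : IsLocalization (M.map (algebraMap A B))
      (Localization (Algebra.algebraMapSubmonoid B M)) := Localization.isLocalization
    exact IsLocalization.map_injective_of_injective M (Localization M) _
      (FaithfulSMul.algebraMap_injective A B)
  have : FaithfulSMul (Localization M) (Localization (Algebra.algebraMapSubmonoid B M)) :=
    (faithfulSMul_iff_algebraMap_injective _ _).mpr hinj
  have hic : IsIntegrallyClosed (Localization M) := isIntegrallyClosed_of_isLocalization _ M hM
  obtain ⟨N, h0, h1, h2⟩ := generic_fibre_aux (Ag := Localization M)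
    (Bg := Localization (Algebra.algebraMapSubmonoid B M)) M z P c r g hMd hgd hPz hgen hrd
  exact ⟨N, g, h0, hg, h1, h2⟩

/-- The generic fibre of an algebraic algebra of finite type has a constant number `N` of points,
which is also the dimension of a base change to a field `k` in which `g` does not vanish; `N = 0`
exactly when the structure map is not injective. The field `k` will be the field of fractions of a
coefficient ring, which links the number of complex points to a dimension over `k`. -/
theorem generic_fibre (A B : Type) [CommRing A] [IsDomain A] [CharZero A]
    [IsIntegrallyClosed A] [CommRing B] [IsDomain B] [Algebra A B] [Algebra.FiniteType A B]
    [Algebra.IsAlgebraic A B] :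
    ∃ (N : ℕ) (g : A), (Function.Injective (algebraMap A B) → N ≠ 0) ∧ g ≠ 0 ∧
      (¬ Function.Injective (algebraMap A B) → N = 0) ∧
      (∀ f : A →+* ℂ, f g ≠ 0 →
        {φ : B →+* ℂ | φ.comp (algebraMap A B) = f}.Finite ∧
        {φ : B →+* ℂ | φ.comp (algebraMap A B) = f}.ncard = N) ∧
      (∀ (k T : Type) [Field k] [CommRing T] [Algebra A k] [Algebra k T] [Algebra B T]
        [Algebra A T] [IsScalarTower A k T] [IsScalarTower A B T] [Algebra.IsPushout A k B T],
        algebraMap A k g ≠ 0 → Module.finrank k T = N) := by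
  by_cases hinj : Function.Injective (algebraMap A B)
  · have : FaithfulSMul A B := (faithfulSMul_iff_algebraMap_injective _ _).mpr hinj
    obtain ⟨N, g, h0, h1, h2, h3⟩ := generic_fibre_inj (A := A) (B := B)
    exact ⟨N, g, fun _ => h0, h1, fun h => absurd hinj h, h2, h3⟩
  · have hinj' := hinj
    rw [injective_iff_map_eq_zero] at hinj'
    push Not at hinj'
    obtain ⟨g, hg0, hg⟩ := hinj'
    refine ⟨0, g, fun h => absurd h hinj, hg, fun _ => rfl, ?_, ?_⟩
    · intro f hf
      have : {φ : B →+* ℂ | φ.comp (algebraMap A B) = f} = ∅ := by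
        ext φ
        simp only [Set.mem_setOf_eq, Set.mem_empty_iff_false, iff_false]
        rintro rfl
        simp [hg0] at hf
      simp [this]
    · intro k T _ _ _ _ _ _ _ _ _ hk
      have h1 : algebraMap k T (algebraMap A k g) = 0 := by
        rw [← IsScalarTower.algebraMap_apply, IsScalarTower.algebraMap_apply A B T, hg0, map_zero]
      have h2 : (1 : T) = 0 := by
        have := ((IsUnit.mk0 _ hk).map (algebraMap k T))
        rw [h1] at this
        exact ((isUnit_zero_iff).mp this).symm
      have : Subsingleton T := subsingleton_of_zero_eq_one h2.symm
      exact Module.finrank_zero_of_subsingleton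

end Coarsening

/-! ### Valuations at infinity -/

namespace Coarsening
open Polynomial

/-- A valuation of an extension of `k(X)` that is trivial on `k` and has a pole at `X`. -/
theorem exists_valuation {k Ω : Type} [Field k] [Field Ω] [Algebra k[X] Ω] [FaithfulSMul k[X] Ω] :
    ∃ V : ValuationSubring Ω, (∀ c : k, V.valuation (algebraMap k[X] Ω (C c)) ≤ 1) ∧
      1 < V.valuation (algebraMap k[X] Ω X) := by
  obtain ⟨y, hy⟩ : ∃ y, y = (algebraMap k[X] Ω X)⁻¹ := ⟨_, rfl⟩
  have hinj := FaithfulSMul.algebraMap_injective k[X] Ω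
  have hx0 : algebraMap k[X] Ω X ≠ 0 := by
    rw [Ne, map_eq_zero_iff _ hinj]; exact X_ne_zero
  let : Algebra k Ω := ((algebraMap k[X] Ω).comp C).toAlgebra
  have : IsScalarTower k k[X] Ω := IsScalarTower.of_algebraMap_eq fun c => rfl
  have htx : Transcendental k (algebraMap k[X] Ω X) := by
    rw [transcendental_iff]
    intro p hp
    rw [aeval_algebraMap_apply, aeval_X_left_apply] at hp
    exact (map_eq_zero_iff _ hinj).mp hp
  have hty : Transcendental k y := by
    intro h
    apply htx
    rw [hy] at h
    simpa using h.inv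
  let A : Subring Ω := (aeval (R := k) y).range.toSubring
  have hyA : y ∈ A := ⟨X, by simp⟩
  have hI : Ideal.span {(⟨y, hyA⟩ : A)} ≠ ⊤ := by
    rw [Ne, Ideal.eq_top_iff_one, Ideal.mem_span_singleton']
    rintro ⟨⟨a, p, hp⟩, ha⟩
    have h1 : a * y = 1 := congrArg Subtype.val ha
    have hp' : aeval y p = a := hp
    rw [transcendental_iff] at hty
    have := hty (p * X - 1) (by simp [hp', h1])
    have h2 : (p * X - 1).coeff 0 = 0 := by rw [this]; simp
    simp at h2
  obtain ⟨V, hV1, hV2⟩ := Ideal.image_subset_nonunits_valuationSubring _ hI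
  refine ⟨V, ?_, ?_⟩
  · intro c
    rw [ValuationSubring.valuation_le_one_iff]
    exact hV1 ⟨C c, by simp [IsScalarTower.algebraMap_apply k k[X] Ω]⟩
  · have h1 : y ∈ V.nonunits := hV2 ⟨⟨y, hyA⟩, Ideal.mem_span_singleton_self _, rfl⟩
    rw [ValuationSubring.mem_nonunits_iff, hy, map_inv₀] at h1
    have h3 : V.valuation (algebraMap k[X] Ω X) ≠ 0 := by simp
    exact (inv_lt_one₀ (zero_lt_iff.mpr h3)).mp h1

/-- Such a valuation sees exactly the degree of a polynomial. -/
theorem valuation_natDegree {k Ω Γ : Type} [Field k] [Field Ω] [Algebra k[X] Ω]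
    [LinearOrderedCommGroupWithZero Γ] (v : Valuation Ω Γ)
    (hc : ∀ c : k, v (algebraMap k[X] Ω (C c)) ≤ 1)
    (hx : 1 < v (algebraMap k[X] Ω X)) (p : k[X]) (hp : p ≠ 0) :
    v (algebraMap k[X] Ω p) = v (algebraMap k[X] Ω X) ^ p.natDegree := by
  have hc1 : ∀ c : k, c ≠ 0 → v (algebraMap k[X] Ω (C c)) = 1 := by
    intro c hc0
    apply le_antisymm (hc c)
    have h := hc c⁻¹
    have h1 : v (algebraMap k[X] Ω (C c)) * v (algebraMap k[X] Ω (C c⁻¹)) = 1 := by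
      rw [← map_mul, ← map_mul, ← C_mul, mul_inv_cancel₀ hc0]; simp
    calc 1 = _ := h1.symm
      _ ≤ v (algebraMap k[X] Ω (C c)) * 1 := by gcongr
      _ = _ := mul_one _
  have hx0 : v (algebraMap k[X] Ω X) ≠ 0 := (zero_lt_one.trans hx).ne'
  conv_lhs => rw [p.as_sum_range_C_mul_X_pow, Finset.sum_range_succ, map_add]
  have hlead : v (algebraMap k[X] Ω (C (p.coeff p.natDegree) * X ^ p.natDegree))
      = v (algebraMap k[X] Ω X) ^ p.natDegree := by
    rw [map_mul, map_mul, hc1, one_mul, map_pow, map_pow]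
    simpa using hp
  rw [Valuation.map_add_eq_of_lt_right, hlead]
  rw [hlead, map_sum]
  apply v.map_sum_lt (pow_ne_zero _ hx0)
  intro i hi
  rw [map_mul, map_mul, map_pow, map_pow]
  calc _ ≤ 1 * v (algebraMap k[X] Ω X) ^ i := by gcongr; exact hc _
    _ < _ := by
      rw [one_mul]
      exact pow_lt_pow_right₀ hx (Finset.mem_range.mp hi)

/-- A generic `k`-linear combination of the `f i` has the largest valuation possible: the `τ` for
which the valuation is smaller form a proper subspace of `K → k`. -/
theorem exists_max_form {k Ω Γ K : Type} [Field k] [Field Ω] [Algebra k Ω] [Fintype K]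
    [LinearOrderedCommGroupWithZero Γ] (v : Valuation Ω Γ)
    (hc : ∀ c : k, v (algebraMap k Ω c) ≤ 1) (f : K → Ω) (k1 : K) (hk1 : f k1 ≠ 0)
    (hmax : ∀ i, v (f i) ≤ v (f k1)) :
    ∃ Φ : MvPolynomial K k, Φ ≠ 0 ∧ ∀ τ : K → k, MvPolynomial.eval τ Φ ≠ 0 →
      v (∑ i, τ i • f i) = v (f k1) := by
  classical
  have h0 : 0 < v (f k1) := zero_lt_iff.mpr (by simpa using hk1)
  let W : Submodule k (K → k) :=
    { carrier := {τ | v (∑ i, τ i • f i) < v (f k1)}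
      add_mem' := by
        intro a b ha hb
        simp only [Set.mem_ofPred_eq, Pi.add_apply, add_smul, Finset.sum_add_distrib] at *
        exact v.map_add_lt ha hb
      zero_mem' := by simpa using h0
      smul_mem' := by
        intro c a ha
        simp only [Set.mem_ofPred_eq, Pi.smul_apply, smul_assoc, ← Finset.smul_sum] at *
        rw [Algebra.smul_def, map_mul]
        exact (mul_le_mul_left (hc c) _).trans_lt (by rwa [one_mul]) }
  have hW : Pi.single k1 (1 : k) ∉ W := by
    change ¬ (v (∑ i, (Pi.single k1 (1 : k) : K → k) i • f i) < v (f k1))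
    simp [Pi.single_apply]
  obtain ⟨l, hl, hlW⟩ := Submodule.exists_le_ker_of_notMem hW
  have heval : ∀ τ : K → k, MvPolynomial.eval τ
      (∑ i, MvPolynomial.C (l (Pi.single i 1)) * MvPolynomial.X i) = l τ := by
    intro τ
    rw [map_sum]
    conv_rhs => rw [← Finset.univ_sum_single τ, map_sum]
    refine Finset.sum_congr rfl fun i _ => ?_
    have : (Pi.single i (τ i) : K → k) = τ i • Pi.single i 1 := by
      rw [← Pi.single_smul]; simp
    rw [this, map_smul]
    simp [mul_comm]
  refine ⟨∑ i, MvPolynomial.C (l (Pi.single i 1)) * MvPolynomial.X i, ?_, ?_⟩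
  · intro h
    have := heval (Pi.single k1 1)
    rw [h, map_zero] at this
    exact hl this.symm
  · intro τ hτ
    rw [heval] at hτ
    refine le_antisymm ?_ ?_
    · apply v.map_sum_le
      intro i _
      rw [Algebra.smul_def, map_mul]
      exact (mul_le_mul_left (hc _) _).trans (by rw [one_mul]; exact hmax i)
    · by_contra h
      exact hτ (hlW (not_le.mp h : τ ∈ W))
end Coarsening

/-! ### Degree of the norm of a general linear combination -/

namespace Coarsening
open Polynomial

/-- The norm of `f` is the product of its images under the embeddings `θ` of `L` into `Ω`, so for a
generic combination of the `F i` its degree is determined by the product over `θ` of the largest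
valuation of the `θ (F i)`. -/
theorem norm_degree_form {k S Kx L Ω Γ K : Type} [Field k] [CommRing S] [IsDomain S]
    [Algebra k[X] S] [Module.Finite k[X] S] [FaithfulSMul k[X] S] [Algebra k S]
    [IsScalarTower k k[X] S] [Field Kx] [CharZero Kx] [Algebra k[X] Kx] [IsFractionRing k[X] Kx]
    [Field L] [Algebra S L] [IsFractionRing S L] [Algebra Kx L] [Algebra k[X] L]
    [IsScalarTower k[X] S L] [IsScalarTower k[X] Kx L] [FiniteDimensional Kx L]
    [IsLocalization (Algebra.algebraMapSubmonoid S (nonZeroDivisors k[X])) L]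
    [Field Ω] [IsAlgClosed Ω] [Algebra Kx Ω] [Algebra k[X] Ω] [IsScalarTower k[X] Kx Ω]
    [LinearOrderedCommGroupWithZero Γ] (v : Valuation Ω Γ)
    (hc : ∀ c : k, v (algebraMap k[X] Ω (C c)) ≤ 1)
    (hx : 1 < v (algebraMap k[X] Ω X)) [Fintype K] (F : K → S) (κ : (L →ₐ[Kx] Ω) → K)
    (hκ : ∀ θ : L →ₐ[Kx] Ω, θ (algebraMap S L (F (κ θ))) ≠ 0)
    (hmax : ∀ (θ : L →ₐ[Kx] Ω) i, v (θ (algebraMap S L (F i))) ≤ v (θ (algebraMap S L (F (κ θ))))) :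
    ∃ Φ : MvPolynomial K k, Φ ≠ 0 ∧ ∀ τ : K → k, MvPolynomial.eval τ Φ ≠ 0 →
      ∑ i, τ i • F i ≠ 0 ∧
      v (algebraMap k[X] Ω X) ^ (Algebra.norm k[X] (∑ i, τ i • F i)).natDegree
        = ∏ θ : L →ₐ[Kx] Ω, v (θ (algebraMap S L (F (κ θ)))) := by
  have : Module.IsTorsionFree k[X] S := inferInstance
  have : Module.Free k[X] S := inferInstance
  let : Algebra k Ω := ((algebraMap k[X] Ω).comp C).toAlgebra
  choose Φ hΦ0 hΦ using fun θ : L →ₐ[Kx] Ω => exists_max_form (k := k) v hc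
    (fun i => θ (algebraMap S L (F i))) (κ θ) (hκ θ) (hmax θ)
  refine ⟨∏ θ, Φ θ, Finset.prod_ne_zero_iff.mpr fun θ _ => hΦ0 θ, fun τ hτ => ?_⟩
  rw [map_prod, Finset.prod_ne_zero_iff] at hτ
  have key : v (algebraMap k[X] Ω (Algebra.norm k[X] (∑ i, τ i • F i)))
      = ∏ θ : L →ₐ[Kx] Ω, v (θ (algebraMap S L (F (κ θ)))) := by
    rw [IsScalarTower.algebraMap_apply k[X] Kx Ω,
      ← Algebra.norm_localization k[X] (nonZeroDivisors k[X]) (Sₘ := L),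
      Algebra.norm_eq_prod_embeddings, map_prod]
    refine Finset.prod_congr rfl fun θ _ => ?_
    rw [← hΦ θ τ (hτ θ (Finset.mem_univ _)), map_sum, map_sum]
    congr 1
    refine Finset.sum_congr rfl fun i _ => ?_
    rw [Algebra.smul_def, map_mul, map_mul, Algebra.smul_def]
    congr 1
    rw [IsScalarTower.algebraMap_apply k k[X] S, ← IsScalarTower.algebraMap_apply k[X] S L,
      IsScalarTower.algebraMap_apply k[X] Kx L, AlgHom.commutes,
      ← IsScalarTower.algebraMap_apply k[X] Kx Ω]
    rfl
  have hne : Algebra.norm k[X] (∑ i, τ i • F i) ≠ 0 := by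
    intro h
    rw [h, map_zero, map_zero] at key
    exact Finset.prod_ne_zero_iff.mpr (fun θ _ => (v.ne_zero_iff.mpr (hκ θ))) key.symm
  refine ⟨?_, ?_⟩
  · intro h
    apply hne
    rw [h, Algebra.norm_zero]
  · rw [← key, valuation_natDegree v hc hx _ hne]

theorem pow_inj_of_one_lt {Γ : Type} [LinearOrderedCommGroupWithZero Γ] {γ : Γ} (h : 1 < γ)
    {a b : ℕ} (hab : γ ^ a = γ ^ b) : a = b :=
  (pow_right_strictMono₀ h).injective hab

/-- The degree of the norm of a generic combination of the products `F i * G j` is the sum of the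
degrees for the `F i` and for the `G j`, since for every embedding the largest valuation of a
product is the product of the two largest valuations. -/
theorem norm_degree_add_aux {k S Kx L Ω K K' : Type} [Field k] [Infinite k] [CommRing S]
    [IsDomain S]
    [Algebra k[X] S] [Module.Finite k[X] S] [FaithfulSMul k[X] S] [Algebra k S]
    [IsScalarTower k k[X] S] [Field Kx] [CharZero Kx] [Algebra k[X] Kx] [IsFractionRing k[X] Kx]
    [Field L] [Algebra S L] [IsFractionRing S L] [Algebra Kx L] [Algebra k[X] L]
    [IsScalarTower k[X] S L] [IsScalarTower k[X] Kx L] [FiniteDimensional Kx L]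
    [IsLocalization (Algebra.algebraMapSubmonoid S (nonZeroDivisors k[X])) L]
    [Field Ω] [IsAlgClosed Ω] [Algebra Kx Ω] [Algebra k[X] Ω] [IsScalarTower k[X] Kx Ω]
    [Fintype K] [Fintype K'] (F : K → S) (G : K' → S) (k0 : K) (l0 : K')
    (hF : F k0 ≠ 0) (hG : G l0 ≠ 0) :
    ∃ (Φ : MvPolynomial K k) (Ψ : MvPolynomial K' k) (Θ : MvPolynomial (K × K') k) (N N' : ℕ),
      Φ ≠ 0 ∧ Ψ ≠ 0 ∧ Θ ≠ 0 ∧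
      (∀ τ, MvPolynomial.eval τ Φ ≠ 0 → ∑ i, τ i • F i ≠ 0 ∧
        (Algebra.norm k[X] (∑ i, τ i • F i)).natDegree = N) ∧
      (∀ τ, MvPolynomial.eval τ Ψ ≠ 0 → ∑ i, τ i • G i ≠ 0 ∧
        (Algebra.norm k[X] (∑ i, τ i • G i)).natDegree = N') ∧
      (∀ τ, MvPolynomial.eval τ Θ ≠ 0 → ∑ i, τ i • (F i.1 * G i.2) ≠ 0 ∧
        (Algebra.norm k[X] (∑ i, τ i • (F i.1 * G i.2))).natDegree = N + N') := by
  have : FaithfulSMul k[X] Ω := by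
    rw [faithfulSMul_iff_algebraMap_injective, IsScalarTower.algebraMap_eq k[X] Kx Ω]
    exact (algebraMap Kx Ω).injective.comp (IsFractionRing.injective k[X] Kx)
  obtain ⟨V, hc, hx⟩ := exists_valuation (k := k) (Ω := Ω)
  have hinj : ∀ (θ : L →ₐ[Kx] Ω) (s : S), s ≠ 0 → θ (algebraMap S L s) ≠ 0 := by
    intro θ s hs
    rw [Ne, map_eq_zero, map_eq_zero_iff _ (IsFractionRing.injective S L)]
    exact hs
  have : Nonempty K := ⟨k0⟩
  have : Nonempty K' := ⟨l0⟩
  choose κ hκ using fun θ : L →ₐ[Kx] Ω =>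
    Finite.exists_max fun i => V.valuation (θ (algebraMap S L (F i)))
  choose μ hμ using fun θ : L →ₐ[Kx] Ω =>
    Finite.exists_max fun i => V.valuation (θ (algebraMap S L (G i)))
  have hκ0 : ∀ θ : L →ₐ[Kx] Ω, θ (algebraMap S L (F (κ θ))) ≠ 0 := by
    intro θ h
    have := hκ θ k0
    rw [h, map_zero, le_zero_iff, Valuation.zero_iff] at this
    exact hinj θ _ hF this
  have hμ0 : ∀ θ : L →ₐ[Kx] Ω, θ (algebraMap S L (G (μ θ))) ≠ 0 := by
    intro θ h
    have := hμ θ l0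
    rw [h, map_zero, le_zero_iff, Valuation.zero_iff] at this
    exact hinj θ _ hG this
  obtain ⟨Φ, hΦ, h1⟩ := norm_degree_form V.valuation hc hx F κ hκ0 hκ
  obtain ⟨Ψ, hΨ, h2⟩ := norm_degree_form V.valuation hc hx G μ hμ0 hμ
  obtain ⟨Θ, hΘ, h3⟩ := norm_degree_form V.valuation hc hx (fun i : K × K' => F i.1 * G i.2)
    (fun θ : L →ₐ[Kx] Ω => (κ θ, μ θ)) (fun θ => by
      rw [map_mul, map_mul]; exact mul_ne_zero (hκ0 θ) (hμ0 θ))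
    (fun θ i => by
      simp only [map_mul]
      exact mul_le_mul' (hκ θ i.1) (hμ θ i.2))
  obtain ⟨a, ha⟩ : ∃ a, MvPolynomial.eval a Φ ≠ 0 := by
    by_contra! h
    exact hΦ (MvPolynomial.funext (by simpa using h))
  obtain ⟨b, hb⟩ : ∃ b, MvPolynomial.eval b Ψ ≠ 0 := by
    by_contra! h
    exact hΨ (MvPolynomial.funext (by simpa using h))
  refine ⟨Φ, Ψ, Θ, _, _, hΦ, hΨ, hΘ, fun τ hτ => ⟨(h1 τ hτ).1, pow_inj_of_one_lt hx
    ((h1 τ hτ).2.trans (h1 a ha).2.symm)⟩, fun τ hτ => ⟨(h2 τ hτ).1, pow_inj_of_one_lt hx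
    ((h2 τ hτ).2.trans (h2 b hb).2.symm)⟩, fun τ hτ => ⟨(h3 τ hτ).1, pow_inj_of_one_lt hx
    ((h3 τ hτ).2.trans ?_)⟩⟩
  rw [pow_add, (h1 a ha).2, (h2 b hb).2, ← Finset.prod_mul_distrib]
  simp only [map_mul]

/-- `norm_degree_add_aux` without the auxiliary fields: take the fraction fields of `k[X]` and `S` and
an algebraic closure. -/
theorem norm_degree_add {k S K K' : Type} [Field k] [CharZero k] [CommRing S] [IsDomain S]
    [Algebra k[X] S] [Module.Finite k[X] S] [FaithfulSMul k[X] S] [Algebra k S]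
    [IsScalarTower k k[X] S]
    [Fintype K] [Fintype K'] (F : K → S) (G : K' → S) (k0 : K) (l0 : K')
    (hF : F k0 ≠ 0) (hG : G l0 ≠ 0) :
    ∃ (Φ : MvPolynomial K k) (Ψ : MvPolynomial K' k) (Θ : MvPolynomial (K × K') k) (N N' : ℕ),
      Φ ≠ 0 ∧ Ψ ≠ 0 ∧ Θ ≠ 0 ∧
      (∀ τ, MvPolynomial.eval τ Φ ≠ 0 → ∑ i, τ i • F i ≠ 0 ∧
        (Algebra.norm k[X] (∑ i, τ i • F i)).natDegree = N) ∧
      (∀ τ, MvPolynomial.eval τ Ψ ≠ 0 → ∑ i, τ i • G i ≠ 0 ∧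
        (Algebra.norm k[X] (∑ i, τ i • G i)).natDegree = N') ∧
      (∀ τ, MvPolynomial.eval τ Θ ≠ 0 → ∑ i, τ i • (F i.1 * G i.2) ≠ 0 ∧
        (Algebra.norm k[X] (∑ i, τ i • (F i.1 * G i.2))).natDegree = N + N') := by
  have : FaithfulSMul k[X] (FractionRing S) := by
    rw [faithfulSMul_iff_algebraMap_injective, IsScalarTower.algebraMap_eq k[X] S]
    exact (IsFractionRing.injective S _).comp (FaithfulSMul.algebraMap_injective k[X] S)
  have : Algebra.IsAlgebraic k[X] S := inferInstance
  let : Algebra (FractionRing k[X]) (FractionRing S) := FractionRing.liftAlgebra _ _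
  have : IsLocalization (Algebra.algebraMapSubmonoid S (nonZeroDivisors k[X])) (FractionRing S) :=
    inferInstance
  have : IsScalarTower k[X] (FractionRing k[X]) (FractionRing S) := inferInstance
  have : FiniteDimensional (FractionRing k[X]) (FractionRing S) :=
    Module.Finite.of_isLocalization k[X] S (nonZeroDivisors k[X])
  exact norm_degree_add_aux (Kx := FractionRing k[X]) (L := FractionRing S)
    (Ω := AlgebraicClosure (FractionRing k[X])) F G k0 l0 hF hG
end Coarsening

/-! ### Linear systems with generic coefficients and their incidence algebra -/

namespace Coarsening
open Polynomial

open CategoryTheory in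
/-- A square of rings with the universal property of a pushout, tested on rings in the lowest
universe, is a base change square. -/
theorem isPushout_of_universal {R S R' S' : Type} [CommRing R] [CommRing S] [CommRing R']
    [CommRing S'] [Algebra R S] [Algebra R R'] [Algebra R S'] [Algebra S S'] [Algebra R' S']
    [IsScalarTower R S S'] [IsScalarTower R R' S']
    (H : ∀ (Z : Type) [CommRing Z] (f : S →+* Z) (g : R' →+* Z),
      f.comp (algebraMap R S) = g.comp (algebraMap R R') →
      ∃ h : S' →+* Z, h.comp (algebraMap S S') = f ∧ h.comp (algebraMap R' S') = g)
    (huniq : ∀ (Z : Type) [CommRing Z] (h h' : S' →+* Z),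
      h.comp (algebraMap S S') = h'.comp (algebraMap S S') →
      h.comp (algebraMap R' S') = h'.comp (algebraMap R' S') → h = h') :
    Algebra.IsPushout R S R' S' := by
  rw [← CommRingCat.isPushout_iff_isPushout]
  have eq : CommRingCat.ofHom (algebraMap R S) ≫ CommRingCat.ofHom (algebraMap S S') =
    CommRingCat.ofHom (algebraMap R R') ≫ CommRingCat.ofHom (algebraMap R' S') := by
    ext x
    simp [← IsScalarTower.algebraMap_apply]
  have key := fun s : CategoryTheory.Limits.PushoutCocone (CommRingCat.ofHom (algebraMap R S))
    (CommRingCat.ofHom (algebraMap R R')) => H s.pt s.inl.hom s.inr.hom (by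
      have := s.condition
      exact congrArg CommRingCat.Hom.hom this)
  choose h h1 h2 using key
  refine ⟨⟨eq⟩, ⟨CategoryTheory.Limits.PushoutCocone.IsColimit.mk eq
    (fun s => CommRingCat.ofHom (h s)) ?_ ?_ ?_⟩⟩
  · intro s
    ext x
    exact congrArg (fun f => f x) (h1 s)
  · intro s
    ext x
    exact congrArg (fun f => f x) (h2 s)
  · intro s m hm1 hm2
    apply CommRingCat.hom_ext
    apply huniq
    · exact (congrArg CommRingCat.Hom.hom hm1).trans (h1 s).symm
    · exact (congrArg CommRingCat.Hom.hom hm2).trans (h2 s).symm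

section System

variable {A₁ B₁ : Type} [CommRing A₁] [CommRing B₁] [Algebra A₁ B₁]
  {J : Type} {κ : J → Type}

/-- The zeros, over a point `a` of `Spec A₁`, of the system of forms `∑ k, c ⟨j, k⟩ * m j k`: ring
homomorphisms `B₁ → ℂ` extending `a` at which all of the forms vanish. -/
def sols (a : A₁ →+* ℂ) [∀ j, Fintype (κ j)] (m : ∀ j, κ j → B₁) (c : (Σ j, κ j) → ℂ) :
    Set (B₁ →+* ℂ) :=
  {φ | φ.comp (algebraMap A₁ B₁) = a ∧ ∀ j, ∑ k, c ⟨j, k⟩ * φ (m j k) = 0}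

variable (A₁) in
/-- The system with monomials `m j k` has exactly `N` zeros for generic coefficients: off a hypersurface
`g = 0` in the space of base points `a` and coefficients `c`. -/
def IsCount [∀ j, Fintype (κ j)] (m : ∀ j, κ j → B₁) (N : ℕ) : Prop :=
  ∃ g : MvPolynomial (Σ j, κ j) A₁, g ≠ 0 ∧ ∀ (a : A₁ →+* ℂ) (c : (Σ j, κ j) → ℂ),
    MvPolynomial.eval₂ a c g ≠ 0 → (sols a m c).Finite ∧ (sols a m c).ncard = N

/-- Indices of the free coefficients of a system, those of monomials other than the pivots `k0 j`. -/
abbrev Free (k0 : ∀ j, κ j) := Σ j, {k : κ j // k ≠ k0 j}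

variable (A₁) in
/-- The map from the coefficient ring `A₁[c_{jk}]` to the coordinate ring of the incidence variety. When
the pivot monomial `m j (k0 j)` is `1`, the `j`-th equation expresses the pivot coefficient as
`-∑ c_{jk} m_{jk}` over the other monomials, so the incidence variety has as coordinate ring the
polynomial ring over `B₁` in the free coefficients. -/
noncomputable def inc [∀ j, Fintype (κ j)] [∀ j, DecidableEq (κ j)] (m : ∀ j, κ j → B₁) (k0 : ∀ j, κ j) :
    MvPolynomial (Σ j, κ j) A₁ →+* MvPolynomial (Free k0) B₁ :=
  MvPolynomial.eval₂Hom (MvPolynomial.C.comp (algebraMap A₁ B₁)) fun p =>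
    if h : p.2 = k0 p.1 then
      -∑ k : {k : κ p.1 // k ≠ k0 p.1}, MvPolynomial.X ⟨p.1, k⟩ * MvPolynomial.C (m p.1 k)
    else MvPolynomial.X ⟨p.1, ⟨p.2, h⟩⟩

variable [∀ j, Fintype (κ j)] [∀ j, DecidableEq (κ j)] (m : ∀ j, κ j → B₁) (k0 : ∀ j, κ j)

theorem sum_pivot {κ : Type} [Fintype κ] [DecidableEq κ] {Z : Type} [AddCommMonoid Z] (f : κ → Z)
    (k0 : κ) : ∑ k, f k = f k0 + ∑ k : {k // k ≠ k0}, f k := by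
  rw [← Fintype.sum_equiv (Equiv.optionSubtypeNe k0) (fun x => f (Equiv.optionSubtypeNe k0 x)) f
    (fun _ => rfl), Fintype.sum_option]
  simp

/-- Points of the incidence variety over given coefficients are the zeros of the system, with values
in any ring. -/
theorem comp_inc_iff (hm : ∀ j, m j (k0 j) = 1) {Z : Type} [CommRing Z]
    (ψ : MvPolynomial (Free k0) B₁ →+* Z) (a : A₁ →+* Z) (c : (Σ j, κ j) → Z) :
    ψ.comp (inc A₁ m k0) = MvPolynomial.eval₂Hom a c ↔
      (ψ.comp MvPolynomial.C).comp (algebraMap A₁ B₁) = a ∧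
      (∀ p : Free k0, ψ (MvPolynomial.X p) = c ⟨p.1, p.2⟩) ∧
      ∀ j, ∑ k, c ⟨j, k⟩ * ψ (MvPolynomial.C (m j k)) = 0 := by
  have e1 : ∀ r, inc A₁ m k0 (MvPolynomial.C r) = MvPolynomial.C (algebraMap A₁ B₁ r) := by
    intro r; simp [inc]
  have e2 : ∀ p : Free k0, inc A₁ m k0 (MvPolynomial.X ⟨p.1, p.2⟩) = MvPolynomial.X p := by
    rintro ⟨j, k, hk⟩; simp [inc, hk]
  have e3 : ∀ j, inc A₁ m k0 (MvPolynomial.X ⟨j, k0 j⟩) =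
      -∑ k : {k : κ j // k ≠ k0 j}, MvPolynomial.X ⟨j, k⟩ * MvPolynomial.C (m j k) := by
    intro j; simp [inc]
  constructor
  · intro h
    have h' : ∀ x, ψ (inc A₁ m k0 x) = MvPolynomial.eval₂Hom a c x := fun x =>
      congrArg (fun f => f x) h
    have hX : ∀ p : Free k0, ψ (MvPolynomial.X p) = c ⟨p.1, p.2⟩ := by
      intro p
      rw [← e2, h']; simp
    refine ⟨?_, hX, ?_⟩
    · ext r
      have := h' (MvPolynomial.C r)
      rw [e1] at this
      simpa using this
    · intro j
      rw [sum_pivot _ (k0 j), hm]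
      have := h' (MvPolynomial.X ⟨j, k0 j⟩)
      rw [e3, map_neg, map_sum] at this
      simp only [map_mul, hX, MvPolynomial.coe_eval₂Hom, MvPolynomial.eval₂_X] at this
      rw [← this]
      simp
  · rintro ⟨h1, h2, h3⟩
    apply MvPolynomial.ringHom_ext
    · intro r
      simp only [RingHom.comp_apply, e1]
      rw [← h1]; simp
    · rintro ⟨j, k⟩
      simp only [RingHom.comp_apply]
      by_cases hk : k = k0 j
      · subst hk
        rw [e3]
        have := h3 j
        rw [sum_pivot _ (k0 j), hm] at this
        simp only [map_neg, map_sum, map_mul, h2]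
        simp only [map_one, mul_one] at this
        simp only [MvPolynomial.coe_eval₂Hom, MvPolynomial.eval₂_X]
        exact (eq_neg_of_add_eq_zero_left this).symm
      · rw [e2 ⟨j, k, hk⟩, h2]; simp

/-- Fibres of the incidence variety over its coefficient space are solution sets. -/
theorem sols_bij (hm : ∀ j, m j (k0 j) = 1) (a : A₁ →+* ℂ) (c : (Σ j, κ j) → ℂ) :
    Set.BijOn (fun ψ : MvPolynomial (Free k0) B₁ →+* ℂ => ψ.comp MvPolynomial.C)
      {ψ | ψ.comp (inc A₁ m k0) = MvPolynomial.eval₂Hom a c} (sols a m c) := by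
  refine ⟨?_, ?_, ?_⟩
  · intro ψ hψ
    have := (comp_inc_iff m k0 hm ψ a c).mp hψ
    exact ⟨this.1, this.2.2⟩
  · intro ψ hψ ψ' hψ' h
    have h1 := (comp_inc_iff m k0 hm ψ a c).mp hψ
    have h2 := (comp_inc_iff m k0 hm ψ' a c).mp hψ'
    apply MvPolynomial.ringHom_ext
    · intro r; exact congrArg (fun f => f r) h
    · intro p; rw [h1.2.1, h2.2.1]
  · intro φ hφ
    refine ⟨MvPolynomial.eval₂Hom φ (fun p => c ⟨p.1, p.2⟩), ?_, ?_⟩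
    · refine (comp_inc_iff m k0 hm _ a c).mpr ⟨?_, ?_, ?_⟩
      · rw [← hφ.1]; ext; simp
      · simp
      · intro j; simpa using hφ.2 j
    · ext; simp

theorem BijOn.finite_ncard {α β : Type} {f : α → β} {s : Set α} {t : Set β} (h : Set.BijOn f s t)
    {N : ℕ} (hs : s.Finite ∧ s.ncard = N) : t.Finite ∧ t.ncard = N := by
  rw [← h.image_eq]
  exact ⟨hs.1.image f, by rw [Set.ncard_image_of_injOn h.injOn, hs.2]⟩

end System
end Coarsening

/-! ### Specialized coefficients as base change -/

namespace Coarsening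
open Polynomial

section System

variable {A₁ B₁ : Type} [CommRing A₁] [CommRing B₁] [Algebra A₁ B₁]
  {J : Type} {κ : J → Type} [∀ j, Fintype (κ j)] [∀ j, DecidableEq (κ j)]

/-- Specializing the coefficients to values `τ` in a localization `k₁` of `A₁` turns the incidence
algebra into the quotient `T` of `S₁ = k₁ ⊗ B₁` by the forms with coefficients `τ`. -/
theorem isPushout_inc {k₁ S₁ T : Type} (m : ∀ j, κ j → B₁) (k0 : ∀ j, κ j)
    (hm : ∀ j, m j (k0 j) = 1) [CommRing k₁] [CommRing S₁] [Algebra A₁ k₁]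
    [Algebra B₁ S₁] [Algebra k₁ S₁] [Algebra A₁ S₁] [IsScalarTower A₁ B₁ S₁]
    [IsScalarTower A₁ k₁ S₁] (M : Submonoid A₁) [IsLocalization M k₁]
    [IsLocalization (Algebra.algebraMapSubmonoid B₁ M) S₁] (τ : (Σ j, κ j) → k₁)
    [CommRing T] [Algebra S₁ T] (hT : Function.Surjective (algebraMap S₁ T))
    (hker : RingHom.ker (algebraMap S₁ T) =
      Ideal.span (Set.range fun j => ∑ k, τ ⟨j, k⟩ • algebraMap B₁ S₁ (m j k)))
    [Algebra (MvPolynomial (Σ j, κ j) A₁) (MvPolynomial (Free k0) B₁)]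
    [Algebra (MvPolynomial (Σ j, κ j) A₁) k₁] [Algebra (MvPolynomial (Σ j, κ j) A₁) T]
    [Algebra k₁ T] [Algebra (MvPolynomial (Free k0) B₁) T]
    [IsScalarTower (MvPolynomial (Σ j, κ j) A₁) k₁ T]
    [IsScalarTower (MvPolynomial (Σ j, κ j) A₁) (MvPolynomial (Free k0) B₁) T]
    (h1 : algebraMap (MvPolynomial (Σ j, κ j) A₁) (MvPolynomial (Free k0) B₁) = inc A₁ m k0)
    (h2 : algebraMap (MvPolynomial (Σ j, κ j) A₁) k₁ = MvPolynomial.eval₂Hom (algebraMap A₁ k₁) τ)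
    (h3 : algebraMap (MvPolynomial (Free k0) B₁) T = MvPolynomial.eval₂Hom
      ((algebraMap S₁ T).comp (algebraMap B₁ S₁)) (fun p => algebraMap S₁ T (algebraMap k₁ S₁ (τ ⟨p.1, p.2⟩))))
    (h4 : algebraMap k₁ T = (algebraMap S₁ T).comp (algebraMap k₁ S₁)) :
    Algebra.IsPushout (MvPolynomial (Σ j, κ j) A₁) k₁ (MvPolynomial (Free k0) B₁) T := by
  apply isPushout_of_universal
  · intro Z _ f g hfg
    rw [h1, h2] at hfg
    have hg := (comp_inc_iff m k0 hm g (f.comp (algebraMap A₁ k₁)) (fun p => f (τ p))).mp (by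
      rw [← hfg]
      apply MvPolynomial.ringHom_ext <;> simp)
    obtain ⟨hg1, hg2, hg3⟩ := hg
    have hu : ∀ y : Algebra.algebraMapSubmonoid B₁ M, IsUnit ((g.comp MvPolynomial.C) y) := by
      rintro ⟨y, y', hy', rfl⟩
      have : (g.comp MvPolynomial.C) (algebraMap A₁ B₁ y') = f (algebraMap A₁ k₁ y') :=
        congrArg (fun f => f y') hg1
      rw [show (⟨algebraMap A₁ B₁ y', y', hy', rfl⟩ : Algebra.algebraMapSubmonoid B₁ M).1 = algebraMap A₁ B₁ y' from rfl, this]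
      exact (IsLocalization.map_units k₁ ⟨y', hy'⟩).map f
    let s : S₁ →+* Z := IsLocalization.lift hu
    have hs : ∀ b, s (algebraMap B₁ S₁ b) = g (MvPolynomial.C b) := fun b =>
      IsLocalization.lift_eq hu b
    have hsk : s.comp (algebraMap k₁ S₁) = f := by
      apply IsLocalization.ringHom_ext M
      ext x
      simp only [RingHom.comp_apply, ← IsScalarTower.algebraMap_apply]
      rw [IsScalarTower.algebraMap_apply A₁ B₁ S₁, hs]
      exact congrArg (fun f => f x) hg1
    have hsk' : ∀ x, s (algebraMap k₁ S₁ x) = f x := fun x => congrArg (fun f => f x) hsk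
    have hsker : RingHom.ker (algebraMap S₁ T) ≤ RingHom.ker s := by
      rw [hker, Ideal.span_le]
      rintro _ ⟨j, rfl⟩
      simp only [SetLike.mem_coe, RingHom.mem_ker, map_sum, Algebra.smul_def, map_mul, hs, hsk', hg3]
    refine ⟨(algebraMap S₁ T).liftOfSurjective hT ⟨s, hsker⟩, ?_, ?_⟩
    · ext x
      rw [h4]
      simp only [RingHom.comp_apply]
      rw [RingHom.liftOfRightInverse_comp_apply, hsk']
    · rw [h3]
      apply MvPolynomial.ringHom_ext
      · intro r
        simp only [RingHom.comp_apply, MvPolynomial.coe_eval₂Hom, MvPolynomial.eval₂_C]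
        rw [RingHom.liftOfRightInverse_comp_apply, hs]
      · intro p
        simp only [RingHom.comp_apply, MvPolynomial.coe_eval₂Hom, MvPolynomial.eval₂_X]
        rw [RingHom.liftOfRightInverse_comp_apply, hsk', hg2]
  · intro Z _ h h' _ hB
    have : h.comp (algebraMap S₁ T) = h'.comp (algebraMap S₁ T) := by
      apply IsLocalization.ringHom_ext (Algebra.algebraMapSubmonoid B₁ M)
      rw [h3] at hB
      ext b
      have := congrArg (fun f => f (MvPolynomial.C b)) hB
      simpa using this
    ext t
    obtain ⟨x, rfl⟩ := hT t
    exact congrArg (fun f => f x) this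

end System
end Coarsening

/-! ### Generic number of solutions of a system -/

namespace Coarsening
open Polynomial

section System

variable {A₁ B₁ : Type} [CommRing A₁] [CommRing B₁] [Algebra A₁ B₁]
  {J : Type} {κ : J → Type} [∀ j, Fintype (κ j)] [∀ j, DecidableEq (κ j)]

/-- A system whose incidence algebra is algebraic over the coefficient ring has a generic number `N`
of zeros, nonzero iff the coefficient ring injects; and `N` is also the dimension of the algebra
cut out over a field of fractions of `A₁` by coefficients at which `g` does not vanish. -/
theorem system_count [Finite J] [IsDomain A₁] [CharZero A₁] [UniqueFactorizationMonoid A₁]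
    [IsDomain B₁] [Algebra.FiniteType A₁ B₁] (m : ∀ j, κ j → B₁) (k0 : ∀ j, κ j)
    (hm : ∀ j, m j (k0 j) = 1)
    (halg : @Algebra.IsAlgebraic _ _ _ _ (inc A₁ m k0).toAlgebra) :
    ∃ (N : ℕ) (g : MvPolynomial (Σ j, κ j) A₁), g ≠ 0 ∧
      (Function.Injective (inc A₁ m k0) → N ≠ 0) ∧
      (¬ Function.Injective (inc A₁ m k0) → N = 0) ∧
      (∀ (a : A₁ →+* ℂ) (c : (Σ j, κ j) → ℂ),
        MvPolynomial.eval₂ a c g ≠ 0 → (sols a m c).Finite ∧ (sols a m c).ncard = N) ∧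
      (∀ (k₁ S₁ : Type) [Field k₁] [CommRing S₁] [Algebra A₁ k₁]
        [Algebra B₁ S₁] [Algebra k₁ S₁] [Algebra A₁ S₁] [IsScalarTower A₁ B₁ S₁]
        [IsScalarTower A₁ k₁ S₁] (M : Submonoid A₁) [IsLocalization M k₁]
        [IsLocalization (Algebra.algebraMapSubmonoid B₁ M) S₁] (τ : (Σ j, κ j) → k₁),
        MvPolynomial.eval₂ (algebraMap A₁ k₁) τ g ≠ 0 →
        Module.finrank k₁ (S₁ ⧸ Ideal.span
          (Set.range fun j => ∑ k, τ ⟨j, k⟩ • algebraMap B₁ S₁ (m j k))) = N) := by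
  let := (inc A₁ m k0).toAlgebra
  have h1 : algebraMap (MvPolynomial (Σ j, κ j) A₁) (MvPolynomial (Free k0) B₁) = inc A₁ m k0 := rfl
  have : IsScalarTower A₁ (MvPolynomial (Σ j, κ j) A₁) (MvPolynomial (Free k0) B₁) :=
    IsScalarTower.of_algebraMap_eq fun r => by
      rw [h1, MvPolynomial.algebraMap_eq]; simp [inc, MvPolynomial.algebraMap_apply]
  have : Algebra.FiniteType A₁ (MvPolynomial (Free k0) B₁) :=
    Algebra.FiniteType.trans (S := B₁) inferInstance inferInstance
  have : Algebra.FiniteType (MvPolynomial (Σ j, κ j) A₁) (MvPolynomial (Free k0) B₁) :=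
    Algebra.FiniteType.of_restrictScalars_finiteType A₁ _ _
  obtain ⟨N, g, hN, hg, hN', hc, hb⟩ := generic_fibre (MvPolynomial (Σ j, κ j) A₁)
    (MvPolynomial (Free k0) B₁)
  refine ⟨N, g, hg, hN, hN', ?_, ?_⟩
  · intro a c hac
    exact BijOn.finite_ncard (sols_bij m k0 hm a c) (hc (MvPolynomial.eval₂Hom a c) hac)
  · intro k₁ S₁ _ _ _ _ _ _ _ _ M _ _ τ hτ
    obtain ⟨I, hI⟩ : ∃ I, I = Ideal.span
          (Set.range fun j => ∑ k, τ ⟨j, k⟩ • algebraMap B₁ S₁ (m j k)) := ⟨_, rfl⟩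
    rw [← hI]
    let i1 : Algebra (MvPolynomial (Σ j, κ j) A₁) k₁ :=
      (MvPolynomial.eval₂Hom (algebraMap A₁ k₁) τ).toAlgebra
    let i2 : Algebra (MvPolynomial (Free k0) B₁) (S₁ ⧸ I) := (MvPolynomial.eval₂Hom
      ((algebraMap S₁ (S₁ ⧸ I)).comp (algebraMap B₁ S₁))
        (fun p => algebraMap S₁ (S₁ ⧸ I) (algebraMap k₁ S₁ (τ ⟨p.1, p.2⟩)))).toAlgebra
    have h4 : algebraMap k₁ (S₁ ⧸ I) = (algebraMap S₁ (S₁ ⧸ I)).comp (algebraMap k₁ S₁) := rfl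
    let i3 : Algebra (MvPolynomial (Σ j, κ j) A₁) (S₁ ⧸ I) :=
      ((algebraMap k₁ (S₁ ⧸ I)).comp (MvPolynomial.eval₂Hom (algebraMap A₁ k₁) τ)).toAlgebra
    have t1 : IsScalarTower (MvPolynomial (Σ j, κ j) A₁) k₁ (S₁ ⧸ I) :=
      IsScalarTower.of_algebraMap_eq fun r => rfl
    have h3 : algebraMap (MvPolynomial (Free k0) B₁) (S₁ ⧸ I) = MvPolynomial.eval₂Hom
      ((algebraMap S₁ (S₁ ⧸ I)).comp (algebraMap B₁ S₁))
        (fun p => algebraMap S₁ (S₁ ⧸ I) (algebraMap k₁ S₁ (τ ⟨p.1, p.2⟩))) := rfl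
    have t2 : IsScalarTower (MvPolynomial (Σ j, κ j) A₁) (MvPolynomial (Free k0) B₁) (S₁ ⧸ I) := by
      apply IsScalarTower.of_algebraMap_eq'
      rw [h1, h3, eq_comm]
      have : algebraMap (MvPolynomial (Σ j, κ j) A₁) (S₁ ⧸ I) =
          MvPolynomial.eval₂Hom ((algebraMap k₁ (S₁ ⧸ I)).comp (algebraMap A₁ k₁))
          (fun p => algebraMap k₁ (S₁ ⧸ I) (τ p)) := by
        apply MvPolynomial.ringHom_ext
        · intro r
          change algebraMap k₁ (S₁ ⧸ I) (MvPolynomial.eval₂Hom (algebraMap A₁ k₁) τ _) = _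
          simp
        · intro r
          change algebraMap k₁ (S₁ ⧸ I) (MvPolynomial.eval₂Hom (algebraMap A₁ k₁) τ _) = _
          simp
      rw [this, comp_inc_iff m k0 hm]
      refine ⟨?_, ?_, ?_⟩
      · ext x
        simp only [RingHom.comp_apply, MvPolynomial.coe_eval₂Hom, MvPolynomial.eval₂_C, h4]
        rw [← IsScalarTower.algebraMap_apply A₁ B₁ S₁, ← IsScalarTower.algebraMap_apply A₁ k₁ S₁]
      · intro p
        rw [MvPolynomial.eval₂Hom_X']; rfl
      · intro j
        have e : ∑ k, algebraMap k₁ (S₁ ⧸ I) (τ ⟨j, k⟩) * (MvPolynomial.eval₂Hom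
            ((algebraMap S₁ (S₁ ⧸ I)).comp (algebraMap B₁ S₁))
            (fun p : Free k0 => algebraMap S₁ (S₁ ⧸ I) (algebraMap k₁ S₁ (τ ⟨p.1, p.2⟩))))
              (MvPolynomial.C (m j k)) = algebraMap S₁ (S₁ ⧸ I)
              (∑ k, τ ⟨j, k⟩ • algebraMap B₁ S₁ (m j k)) := by
          rw [map_sum]
          refine Finset.sum_congr rfl fun k _ => ?_
          rw [MvPolynomial.eval₂Hom_C, Algebra.smul_def, map_mul]
          rfl
        rw [e, Ideal.Quotient.algebraMap_eq, Ideal.Quotient.eq_zero_iff_mem, hI]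
        exact Ideal.subset_span ⟨j, rfl⟩
    have := isPushout_inc (T := S₁ ⧸ I) m k0 hm M τ Ideal.Quotient.mk_surjective
      (by rw [Ideal.Quotient.algebraMap_eq, Ideal.mk_ker, hI]) h1 rfl h3 h4
    exact hb k₁ (S₁ ⧸ I) hτ

end System
end Coarsening

/-! ### Transcendence degree of the incidence algebra -/

namespace Coarsening
open Polynomial Cardinal

/-- Over a base of finite relative transcendence degree, `B` is algebraic over `A` as soon as its
transcendence degree is at most that of `A`. Injectivity of `A → B` is not assumed: a
non-injective map from a domain makes `B` algebraic for trivial reasons. -/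
theorem isAlgebraic_of_trdeg {A₀ A B : Type} [CommRing A₀] [IsDomain A₀] [CommRing A] [IsDomain A] [CommRing B] [IsDomain B]
    [Algebra A₀ A] [Algebra A₀ B] [Algebra A B] [IsScalarTower A₀ A B] [FaithfulSMul A₀ A]
    (hfin : Algebra.trdeg A₀ B < ℵ₀) (h : Algebra.trdeg A₀ B ≤ Algebra.trdeg A₀ A) :
    Algebra.IsAlgebraic A B := by
  by_cases hinj : Function.Injective (algebraMap A B)
  · have : FaithfulSMul A B := (faithfulSMul_iff_algebraMap_injective _ _).mpr hinj
    rw [← trdeg_eq_zero_iff]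
    have e := trdeg_add_eq A₀ A (A := B)
    have h1 : Algebra.trdeg A₀ A < ℵ₀ := lt_of_le_of_lt (e ▸ self_le_add_right _ _) hfin
    have h2 : Algebra.trdeg A B < ℵ₀ := lt_of_le_of_lt (e ▸ self_le_add_left _ _) hfin
    obtain ⟨a, ha⟩ := lt_aleph0.mp h1
    obtain ⟨b, hb⟩ := lt_aleph0.mp h2
    rw [← e, ha, hb] at h
    rw [hb]
    norm_cast at h ⊢
    omega
  · exact Algebra.isAlgebraic_of_not_injective hinj

section System

variable {A₁ B₁ : Type} [CommRing A₁] [CommRing B₁] [Algebra A₁ B₁]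
  {J : Type} {κ : J → Type} [∀ j, Fintype (κ j)] [∀ j, DecidableEq (κ j)]

theorem card_sigma_free [Fintype J] (k0 : ∀ j, κ j) :
    Fintype.card (Σ j, κ j) = Fintype.card (Free k0) + Fintype.card J := by
  have : ∀ j, Fintype.card (κ j) = Fintype.card {k : κ j // k ≠ k0 j} + 1 := by
    intro j
    rw [Fintype.card_subtype_compl, Fintype.card_subtype_eq]
    have : 0 < Fintype.card (κ j) := Fintype.card_pos_iff.mpr ⟨k0 j⟩
    omega
  rw [Fintype.card_sigma, Fintype.card_sigma, Finset.sum_congr rfl fun j _ => this j,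
    Finset.sum_add_distrib]
  simp

theorem inc_isScalarTower (m : ∀ j, κ j → B₁) (k0 : ∀ j, κ j)
    [Algebra (MvPolynomial (Σ j, κ j) A₁) (MvPolynomial (Free k0) B₁)]
    (h1 : algebraMap (MvPolynomial (Σ j, κ j) A₁) (MvPolynomial (Free k0) B₁) = inc A₁ m k0) :
    IsScalarTower A₁ (MvPolynomial (Σ j, κ j) A₁) (MvPolynomial (Free k0) B₁) :=
  IsScalarTower.of_algebraMap_eq fun r => by
      rw [h1, MvPolynomial.algebraMap_eq]; simp [inc, MvPolynomial.algebraMap_apply]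

/-- A system with at least as many equations as the transcendence degree has an incidence algebra that
is algebraic over the coefficients: each equation removes one free coefficient. -/
theorem inc_isAlgebraic [Fintype J] [IsDomain A₁] [IsDomain B₁] (m : ∀ j, κ j → B₁)
    (k0 : ∀ j, κ j) (htr : Algebra.trdeg A₁ B₁ ≤ Fintype.card J) :
    @Algebra.IsAlgebraic _ _ _ _ (inc A₁ m k0).toAlgebra := by
  let := (inc A₁ m k0).toAlgebra
  have := inc_isScalarTower (A₁ := A₁) m k0 rfl
  by_cases hinj : Function.Injective (inc A₁ m k0)
  · have hA : Function.Injective (algebraMap A₁ B₁) := by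
      intro x y hxy
      apply MvPolynomial.C_injective (Σ j, κ j) A₁
      apply hinj
      simp [inc, hxy]
    have : FaithfulSMul A₁ B₁ := (faithfulSMul_iff_algebraMap_injective _ _).mpr hA
    have e : Algebra.trdeg A₁ (MvPolynomial (Free k0) B₁)
        = Algebra.trdeg A₁ B₁ + Fintype.card (Free k0) := by
      rw [← trdeg_add_eq A₁ B₁, MvPolynomial.trdeg_of_isDomain]; simp
    have e2 : Algebra.trdeg A₁ (MvPolynomial (Σ j, κ j) A₁) = Fintype.card (Σ j, κ j) := by
      rw [MvPolynomial.trdeg_of_isDomain]; simp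
    apply isAlgebraic_of_trdeg (A₀ := A₁)
    · rw [e]
      exact add_lt_aleph0 (htr.trans_lt natCast_lt_aleph0) natCast_lt_aleph0
    · rw [e, e2, card_sigma_free k0, add_comm]
      push_cast
      gcongr
  · exact Algebra.isAlgebraic_of_not_injective hinj

/-- Systems of more equations than the transcendence degree are generically inconsistent. -/
theorem card_le_of_inc_injective [Fintype J] [IsDomain A₁] [IsDomain B₁] (m : ∀ j, κ j → B₁)
    (k0 : ∀ j, κ j) (hinj : Function.Injective (inc A₁ m k0)) :
    (Fintype.card J : Cardinal) ≤ Algebra.trdeg A₁ B₁ := by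
  let := (inc A₁ m k0).toAlgebra
  have := inc_isScalarTower (A₁ := A₁) m k0 rfl
  have hA : Function.Injective (algebraMap A₁ B₁) := by
    intro x y hxy
    apply MvPolynomial.C_injective (Σ j, κ j) A₁
    apply hinj
    simp [inc, hxy]
  have : FaithfulSMul A₁ B₁ := (faithfulSMul_iff_algebraMap_injective _ _).mpr hA
  have e : Algebra.trdeg A₁ (MvPolynomial (Free k0) B₁)
      = Algebra.trdeg A₁ B₁ + Fintype.card (Free k0) := by
    rw [← trdeg_add_eq A₁ B₁, MvPolynomial.trdeg_of_isDomain]; simp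
  have e2 : Algebra.trdeg A₁ (MvPolynomial (Σ j, κ j) A₁) = Fintype.card (Σ j, κ j) := by
    rw [MvPolynomial.trdeg_of_isDomain]; simp
  have := trdeg_le_of_injective (IsScalarTower.toAlgHom A₁ (MvPolynomial (Σ j, κ j) A₁) (MvPolynomial (Free k0) B₁)) hinj
  rw [e, e2, card_sigma_free k0, add_comm] at this
  push_cast at this
  exact (Cardinal.add_le_add_iff_of_lt_aleph0 natCast_lt_aleph0).mp this

end System
end Coarsening

/-! ### Additivity of counts on curves -/

namespace Coarsening
open Polynomial Cardinal

/-- Additivity on an affine curve. By Noether normalization `S` is finite and free over `k[X]`, and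
`dim_k S/(f)` is the degree of the norm of `f`, which is additive by `norm_degree_add`. -/
theorem curve_finrank {k S K K' : Type} [Field k] [CharZero k] [CommRing S] [IsDomain S]
    [Algebra k S] [Algebra.FiniteType k S] (htr : Algebra.trdeg k S = 1)
    [Fintype K] [Fintype K'] (F : K → S) (G : K' → S) (k0 : K) (l0 : K')
    (hF : F k0 ≠ 0) (hG : G l0 ≠ 0) :
    ∃ (Φ : MvPolynomial K k) (Ψ : MvPolynomial K' k) (Θ : MvPolynomial (K × K') k) (N N' : ℕ),
      Φ ≠ 0 ∧ Ψ ≠ 0 ∧ Θ ≠ 0 ∧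
      (∀ τ, MvPolynomial.eval τ Φ ≠ 0 →
        Module.finrank k (S ⧸ Ideal.span {∑ i, τ i • F i}) = N) ∧
      (∀ τ, MvPolynomial.eval τ Ψ ≠ 0 →
        Module.finrank k (S ⧸ Ideal.span {∑ i, τ i • G i}) = N') ∧
      (∀ τ, MvPolynomial.eval τ Θ ≠ 0 →
        Module.finrank k (S ⧸ Ideal.span {∑ i, τ i • (F i.1 * G i.2)}) = N + N') := by
  obtain ⟨s, g, hg, hfin⟩ := exists_finite_inj_algHom_of_fg k S
  have hs : s = 1 := by
    let := g.toRingHom.toAlgebra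
    have : IsScalarTower k (MvPolynomial (Fin s) k) S :=
      IsScalarTower.of_algebraMap_eq fun r => (g.commutes r).symm
    have : Module.Finite (MvPolynomial (Fin s) k) S := hfin
    have : FaithfulSMul (MvPolynomial (Fin s) k) S :=
      (faithfulSMul_iff_algebraMap_injective _ _).mpr hg
    have e := trdeg_add_eq k (MvPolynomial (Fin s) k) (A := S)
    rw [(trdeg_eq_zero_iff (R := MvPolynomial (Fin s) k)).mpr inferInstance, MvPolynomial.trdeg_of_isDomain, htr] at e
    simpa using e
  subst hs
  let ψ : k[X] →ₐ[k] S := g.comp (MvPolynomial.uniqueAlgEquiv k (Fin 1)).symm.toAlgHom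
  have hψ : Function.Injective ψ := hg.comp (MvPolynomial.uniqueAlgEquiv k (Fin 1)).symm.injective
  have hψf : ψ.toRingHom.Finite := by
    have : ψ.toRingHom = (g.toRingHom).comp
      ((MvPolynomial.uniqueAlgEquiv k (Fin 1)).symm.toRingEquiv.toRingHom) := rfl
    rw [this]
    exact RingHom.Finite.comp hfin (RingHom.Finite.of_surjective _ (RingEquiv.surjective _))
  let := ψ.toRingHom.toAlgebra
  have : IsScalarTower k k[X] S :=
    IsScalarTower.of_algebraMap_eq fun r => (ψ.commutes r).symm
  have : Module.Finite k[X] S := hψf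
  have hfs : FaithfulSMul k[X] S :=
    (faithfulSMul_iff_algebraMap_injective _ _).mpr hψ
  have : Module.IsTorsionFree k[X] S := inferInstance
  have hfree : Module.Free k[X] S := inferInstance
  obtain ⟨Φ, Ψ, Θ, N, N', h1, h2, h3, h4, h5, h6⟩ := norm_degree_add (k := k) F G k0 l0 hF hG
  refine ⟨Φ, Ψ, Θ, N, N', h1, h2, h3, fun τ hτ => ?_, fun τ hτ => ?_, fun τ hτ => ?_⟩
  · rw [finrank_quotient_span_eq_natDegree_norm (Module.Free.chooseBasis k[X] S) (h4 τ hτ).1,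
      (h4 τ hτ).2]
  · rw [finrank_quotient_span_eq_natDegree_norm (Module.Free.chooseBasis k[X] S) (h5 τ hτ).1,
      (h5 τ hτ).2]
  · rw [finrank_quotient_span_eq_natDegree_norm (Module.Free.chooseBasis k[X] S) (h6 τ hτ).1,
      (h6 τ hτ).2]

/-- Over an infinite field there are values `τ` at which neither `Φ` nor `g` vanishes. -/
theorem exists_good {A k K : Type} [CommRing A] [Field k] [CharZero k] [Algebra A k] [FaithfulSMul A k]
    (Φ : MvPolynomial K k) (hΦ : Φ ≠ 0)
    (g : MvPolynomial (Σ _ : Unit, K) A) (hg : g ≠ 0) :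
    ∃ τ : K → k, MvPolynomial.eval τ Φ ≠ 0 ∧
      MvPolynomial.eval₂ (algebraMap A k) (fun p => τ p.2) g ≠ 0 := by
  have : Infinite k := Infinite.of_injective _ (Nat.cast_injective (R := k))
  let g' : MvPolynomial K k := MvPolynomial.map (algebraMap A k)
    (MvPolynomial.rename (fun p => p.2) g)
  have hg' : g' ≠ 0 := by
    intro h
    apply hg
    have hi : Function.Injective (fun p : (Σ _ : Unit, K) => p.2) := by
      rintro ⟨⟨⟩, a⟩ ⟨⟨⟩, b⟩ h; simpa using h
    apply MvPolynomial.rename_injective _ hi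
    apply MvPolynomial.map_injective _ (FaithfulSMul.algebraMap_injective A k)
    rw [map_zero, map_zero]; exact h
  obtain ⟨τ, hτ⟩ : ∃ τ, MvPolynomial.eval τ (Φ * g') ≠ 0 := by
    by_contra! h
    exact mul_ne_zero hΦ hg' (MvPolynomial.funext fun x => by simpa using h x)
  rw [map_mul] at hτ
  refine ⟨τ, left_ne_zero_of_mul hτ, ?_⟩
  have := right_ne_zero_of_mul hτ
  rwa [MvPolynomial.eval_map, MvPolynomial.eval₂_rename] at this

/-- Additivity of the counts on a family of curves over `Spec A₁`. The counts over `ℂ` are the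
dimensions of the algebras cut out on the generic curve `S₁` over `k₁ = Frac A₁`, to which
`curve_finrank` applies. -/
theorem curve_count_aux {A₁ B₁ k₁ S₁ : Type} [CommRing A₁] [CommRing B₁] [Algebra A₁ B₁] [IsDomain A₁]
    [CharZero A₁] [UniqueFactorizationMonoid A₁] [IsDomain B₁] [Algebra.FiniteType A₁ B₁]
    (htr : Algebra.trdeg A₁ B₁ = 1)
    [Field k₁] [CommRing S₁] [Algebra A₁ k₁] [Algebra B₁ S₁] [Algebra k₁ S₁] [Algebra A₁ S₁]
    [IsScalarTower A₁ B₁ S₁] [IsScalarTower A₁ k₁ S₁] [IsFractionRing A₁ k₁]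
    [IsLocalization (Algebra.algebraMapSubmonoid B₁ (nonZeroDivisors A₁)) S₁]
    {K K' : Type} [Fintype K] [Fintype K'] [DecidableEq K] [DecidableEq K']
    (F : K → B₁) (G : K' → B₁) (k0 : K) (l0 : K') (hF : F k0 = 1) (hG : G l0 = 1) :
    ∃ N N', IsCount A₁ (fun _ : Unit => F) N ∧ IsCount A₁ (fun _ : Unit => G) N' ∧
      IsCount A₁ (fun _ : Unit => fun i : K × K' => F i.1 * G i.2) (N + N') := by
  have hfaith : FaithfulSMul A₁ B₁ := by
    rw [faithfulSMul_iff_algebraMap_injective]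
    by_contra h
    rw [trdeg_eq_zero_of_not_injective h] at htr
    exact zero_ne_one htr
  have hAB := FaithfulSMul.algebraMap_injective A₁ B₁
  have hle : Algebra.algebraMapSubmonoid B₁ (nonZeroDivisors A₁) ≤ nonZeroDivisors B₁ := by
    rintro _ ⟨a, ha, rfl⟩
    exact map_mem_nonZeroDivisors _ hAB ha
  have hSd : IsDomain S₁ := IsLocalization.isDomain_of_le_nonZeroDivisors (R := B₁) (S := S₁) hle
  have hBS : Function.Injective (algebraMap B₁ S₁) := IsLocalization.injective S₁ hle
  have hfBS : FaithfulSMul B₁ S₁ := (faithfulSMul_iff_algebraMap_injective _ _).mpr hBS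
  have hfAS : FaithfulSMul A₁ S₁ := by
    rw [faithfulSMul_iff_algebraMap_injective, IsScalarTower.algebraMap_eq A₁ B₁ S₁]
    exact hBS.comp hAB
  have hfAk : FaithfulSMul A₁ k₁ := by
    rw [faithfulSMul_iff_algebraMap_injective]; exact IsFractionRing.injective A₁ k₁
  have hck : CharZero k₁ := charZero_of_injective_algebraMap (IsFractionRing.injective A₁ k₁)
  have hft : Algebra.FiniteType k₁ S₁ := by
    have : IsLocalization ((nonZeroDivisors A₁).map (algebraMap A₁ B₁)) S₁ :=
      ‹IsLocalization (Algebra.algebraMapSubmonoid B₁ (nonZeroDivisors A₁)) S₁›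
    have h := RingHom.finiteType_localizationPreserves (algebraMap A₁ B₁) (nonZeroDivisors A₁) k₁ S₁
      (RingHom.finiteType_algebraMap.mpr inferInstance)
    rw [← RingHom.finiteType_algebraMap (A := k₁) (B := S₁)]
    convert h
    apply IsLocalization.ringHom_ext (nonZeroDivisors A₁)
    rw [IsLocalization.map_comp, ← IsScalarTower.algebraMap_eq, ← IsScalarTower.algebraMap_eq]
  have htr1 : Algebra.trdeg k₁ S₁ = 1 := by
    have e1 := trdeg_add_eq A₁ B₁ (A := S₁)
    have e2 := trdeg_add_eq A₁ k₁ (A := S₁)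
    rw [trdeg_eq_zero_iff.mpr (IsLocalization.isAlgebraic (R := B₁) (S := S₁) (M := Algebra.algebraMapSubmonoid B₁ (nonZeroDivisors A₁))), add_zero] at e1
    rw [trdeg_eq_zero_iff.mpr (IsLocalization.isAlgebraic (R := A₁) (S := k₁) (M := nonZeroDivisors A₁)), zero_add] at e2
    rw [e2, ← e1, htr]
  obtain ⟨Φ, Ψ, Θ, N, N', h1, h2, h3, h4, h5, h6⟩ := curve_finrank htr1
    (fun i => algebraMap B₁ S₁ (F i)) (fun i => algebraMap B₁ S₁ (G i)) k0 l0
    (by simp [hF]) (by simp [hG])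
  have key : ∀ {K : Type} [Fintype K] [DecidableEq K] (F : K → B₁) (k0 : K) (_ : F k0 = 1)
      (Φ : MvPolynomial K k₁) (_ : Φ ≠ 0) (N : ℕ) (_ : ∀ τ, MvPolynomial.eval τ Φ ≠ 0 →
        Module.finrank k₁ (S₁ ⧸ Ideal.span {∑ i, τ i • algebraMap B₁ S₁ (F i)}) = N),
      IsCount A₁ (fun _ : Unit => F) N := by
    intro K _ _ F k0 hF Φ hΦ N h
    obtain ⟨N₁, g, hg, -, -, hc, hp⟩ := system_count (fun _ : Unit => F) (fun _ => k0) (fun _ => hF)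
      (inc_isAlgebraic (A₁ := A₁) _ _ (by simp [htr]))
    obtain ⟨τ, hτ1, hτ2⟩ := exists_good Φ hΦ g hg
    have e := hp k₁ S₁ (nonZeroDivisors A₁) (fun p => τ p.2) hτ2
    have e' := h τ hτ1
    have hr : (Set.range fun _ : Unit => ∑ i, τ i • algebraMap B₁ S₁ (F i))
        = {∑ i, τ i • algebraMap B₁ S₁ (F i)} := Set.range_const
    have e2 := (congrArg (fun T => Module.finrank k₁ (S₁ ⧸ Ideal.span T)) hr).symm.trans e
    have e3 : N₁ = N := e2.symm.trans e'
    subst e3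
    exact ⟨g, hg, hc⟩
  refine ⟨N, N', key F k0 hF Φ h1 N h4, key G l0 hG Ψ h2 N' h5,
    key _ (k0, l0) (by simp [hF, hG]) Θ h3 _ ?_⟩
  intro τ hτ
  rw [← h6 τ hτ]
  exact congrArg (fun T : K × K' → S₁ => Module.finrank k₁ (S₁ ⧸ Ideal.span {∑ i, τ i • T i}))
    (funext fun i => map_mul _ _ _)

/-- The case of transcendence degree `0` is degenerate: all three counts vanish, since a single
equation is inconsistent there. -/
theorem curve_count {A₁ B₁ : Type} [CommRing A₁] [CommRing B₁] [Algebra A₁ B₁] [IsDomain A₁]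
    [CharZero A₁] [UniqueFactorizationMonoid A₁] [IsDomain B₁] [Algebra.FiniteType A₁ B₁]
    (htr : Algebra.trdeg A₁ B₁ ≤ 1)
    {K K' : Type} [Fintype K] [Fintype K'] [DecidableEq K] [DecidableEq K']
    (F : K → B₁) (G : K' → B₁) (k0 : K) (l0 : K') (hF : F k0 = 1) (hG : G l0 = 1) :
    ∃ N N', IsCount A₁ (fun _ : Unit => F) N ∧ IsCount A₁ (fun _ : Unit => G) N' ∧
      IsCount A₁ (fun _ : Unit => fun i : K × K' => F i.1 * G i.2) (N + N') := by
  by_cases h : Algebra.trdeg A₁ B₁ = 1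
  · exact curve_count_aux (k₁ := FractionRing A₁)
      (S₁ := Localization (Algebra.algebraMapSubmonoid B₁ (nonZeroDivisors A₁))) h F G k0 l0 hF hG
  · have key : ∀ {K : Type} [Fintype K] [DecidableEq K] (F : K → B₁) (k0 : K) (_ : F k0 = 1),
      IsCount A₁ (fun _ : Unit => F) 0 := by
      intro K _ _ F k0 hF
      obtain ⟨N₁, g, hg, -, h0, hc, hp⟩ := system_count (fun _ : Unit => F) (fun _ => k0) (fun _ => hF)
        (inc_isAlgebraic (A₁ := A₁) _ _ (by simpa using htr))
      have : N₁ = 0 := h0 fun hi => h (le_antisymm htr (by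
        simpa using card_le_of_inc_injective _ _ hi))
      subst this
      exact ⟨g, hg, hc⟩
    exact ⟨0, 0, key F k0 hF, key G l0 hG, key _ (k0, l0) (by simp [hF, hG])⟩
end Coarsening

/-! ### Injectivity of the incidence map -/

namespace Coarsening
open Polynomial Cardinal

/-- The coefficient ring injects into the incidence algebra if the chosen non-pivot monomials
`m j (k1 j)` are algebraically independent. Suppose a polynomial `P` in the coefficients maps to `0`,
and restrict it to an arc of systems. At `t = 0` the `j`-th form involves only the pivot and
`m j (k1 j)`, so the lowest nonvanishing coefficient in `t` of the restriction of `P` is an algebraic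
relation between the `m j (k1 j)`. -/
theorem inc_injective {R J : Type} {κ : J → Type} [CommRing R] [Algebra ℂ R] [IsDomain R]
    [∀ j, Fintype (κ j)] [∀ j, DecidableEq (κ j)] (m : ∀ j, κ j → R) (k0 k1 : ∀ j, κ j)
    (hk : ∀ j, k1 j ≠ k0 j) (hind : AlgebraicIndependent ℂ fun j => m j (k1 j)) :
    Function.Injective (inc ℂ m k0) := by
  rw [injective_iff_map_eq_zero]
  intro P hP
  by_contra hP0
  obtain ⟨a, ha⟩ : ∃ a, MvPolynomial.eval a P ≠ 0 := by
    by_contra! h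
    exact hP0 (MvPolynomial.funext fun x => by simpa using h x)
  -- the arc from the coordinate forms at `t = 0` to the forms `a` at `t = 1`
  let u : (p : Σ j, κ j) → ℂ := fun p => if p.2 = k1 p.1 then 1 else 0
  let arc : (p : Σ j, κ j) → ℂ[X] := fun p => C (u p) + X * C (a p - u p)
  let θ : MvPolynomial (Σ j, κ j) ℂ →ₐ[ℂ] (MvPolynomial J ℂ)[X] := MvPolynomial.aeval fun p =>
    if p.2 = k0 p.1 then -C (MvPolynomial.X p.1 : MvPolynomial J ℂ) else (arc p).map (algebraMap ℂ _)
  have hθ : θ P ≠ 0 := by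
    intro h
    apply ha
    let ev : (MvPolynomial J ℂ)[X] →ₐ[ℂ] ℂ :=
      (Polynomial.aeval (1 : ℂ)).restrictScalars ℂ |>.comp
        (Polynomial.mapAlgHom (MvPolynomial.aeval fun j => -a ⟨j, k0 j⟩))
    have : ev.comp θ = MvPolynomial.aeval a := by
      ext ⟨j, k⟩
      simp only [AlgHom.comp_apply, θ, MvPolynomial.aeval_X]
      split_ifs with h
      · obtain rfl : k = k0 j := h
        simp [ev]
      · simp [ev, arc]
    have h2 := congrArg (fun f => f P) this
    simp only [AlgHom.comp_apply, h, map_zero] at h2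
    rw [← MvPolynomial.coe_aeval_eq_eval]
    exact h2.symm
  let η : (MvPolynomial J ℂ)[X] →+* R[X] := Polynomial.eval₂RingHom
    (MvPolynomial.aeval (R := ℂ) (S₁ := R[X]) fun j => ∑ k : {k : κ j // k ≠ k0 j},
      (arc ⟨j, k⟩).map (algebraMap ℂ R) * C (m j k)).toRingHom X
  let σ : MvPolynomial (Free k0) R →+* R[X] := MvPolynomial.eval₂Hom C
    fun p => (arc ⟨p.1, p.2⟩).map (algebraMap ℂ R)
  have hcomm : η.comp θ.toRingHom = σ.comp (inc ℂ m k0) := by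
    apply MvPolynomial.ringHom_ext
    · intro r
      simp [η, σ, inc, Polynomial.algebraMap_apply]
    · rintro ⟨j, k⟩
      simp only [RingHom.comp_apply, AlgHom.toRingHom_eq_coe, RingHom.coe_coe, θ, MvPolynomial.aeval_X, inc,
        MvPolynomial.coe_eval₂Hom, MvPolynomial.eval₂_X]
      split_ifs with h
      · simp [η, σ]
      · simp [η, σ, arc]
  obtain ⟨n, hn⟩ : ∃ n, n = (θ P).natTrailingDegree := ⟨_, rfl⟩
  obtain ⟨Q, hQ⟩ : (X : (MvPolynomial J ℂ)[X]) ^ n ∣ θ P := by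
    rw [X_pow_dvd_iff]
    intro d hd
    exact coeff_eq_zero_of_lt_natTrailingDegree (hn ▸ hd)
  have hQ0 : Q.coeff 0 ≠ 0 := by
    have : (θ P).coeff n ≠ 0 := by
      rw [hn]; exact (trailingCoeff_nonzero_iff_nonzero).mpr hθ
    rw [hQ] at this
    simpa [coeff_X_pow_mul'] using this
  have h0 : η Q = 0 := by
    have := congrArg (fun f => f P) hcomm
    simp only [RingHom.comp_apply, hP, map_zero, AlgHom.toRingHom_eq_coe, RingHom.coe_coe, hQ, map_mul, map_pow] at this
    rcases mul_eq_zero.mp this with h | h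
    · exfalso
      have hx : η X = X := by simp [η]
      rw [hx] at h
      exact pow_ne_zero _ X_ne_zero h
    · exact h
  apply hQ0
  rw [AlgebraicIndependent] at hind
  apply hind
  rw [map_zero]
  have hev : ((evalRingHom (0 : R)).comp η) =
      ((MvPolynomial.aeval (R := ℂ) fun j => m j (k1 j)).toRingHom).comp
        (evalRingHom (0 : MvPolynomial J ℂ)) := by
    apply Polynomial.ringHom_ext'
    · apply MvPolynomial.ringHom_ext
      · intro r; simp [η, Polynomial.algebraMap_apply]
      · intro j
        simp only [RingHom.comp_apply, η, coe_eval₂RingHom, eval₂_C, AlgHom.toRingHom_eq_coe, RingHom.coe_coe, MvPolynomial.aeval_X, map_sum, map_mul, coe_evalRingHom, eval_C, eval_map]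
        rw [Finset.sum_eq_single ⟨k1 j, hk j⟩]
        · simp [arc, u]
        · rintro ⟨k, hk'⟩ - h
          have : k ≠ k1 j := fun h' => h (Subtype.ext h')
          simp [arc, u, this]
        · simp
    · simp [η]
  have := congrArg (fun f => f Q) hev
  simp only [RingHom.comp_apply, h0, map_zero] at this
  rw [Polynomial.coeff_zero_eq_eval_zero]
  exact this.symm
end Coarsening

/-! ### Eliminating one equation at a time -/

namespace Coarsening
open Polynomial Cardinal

/-- Counts can be taken in two steps: the zeros of the whole system are the zeros of the equation `none`
on the incidence variety of the remaining equations. -/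
theorem isCount_option {A₀ B₀ J : Type} {κ : Option J → Type} [CommRing A₀] [CommRing B₀] [IsDomain A₀] [CharZero A₀]
    [Algebra A₀ B₀] [∀ o, Fintype (κ o)] [∀ o, DecidableEq (κ o)]
    (m : ∀ o, κ o → B₀) (k0 : ∀ o, κ o) (hm : ∀ o, m o (k0 o) = 1)
    [Algebra (MvPolynomial (Σ j : J, κ (some j)) A₀) (MvPolynomial (Free fun j : J => k0 (some j)) B₀)]
    (halg : algebraMap (MvPolynomial (Σ j : J, κ (some j)) A₀)
      (MvPolynomial (Free fun j : J => k0 (some j)) B₀) =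
        inc A₀ (fun j : J => m (some j)) (fun j : J => k0 (some j))) (N : ℕ)
    (h : IsCount (MvPolynomial (Σ j : J, κ (some j)) A₀) (fun _ : Unit => fun k : κ none =>
      (MvPolynomial.C (m none k) : MvPolynomial (Free fun j : J => k0 (some j)) B₀)) N) :
    IsCount A₀ m N := by
  obtain ⟨g, hg, hc⟩ := h
  have : Infinite A₀ := Infinite.of_injective _ (Nat.cast_injective (R := A₀))
  let ι₀ : MvPolynomial (Σ j : J, κ (some j)) A₀ →+* MvPolynomial (Σ o, κ o) A₀ :=
    (MvPolynomial.rename fun p : (Σ j : J, κ (some j)) => (⟨some p.1, p.2⟩ : Σ o, κ o)).toRingHom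
  let G : MvPolynomial (Σ o, κ o) A₀ := MvPolynomial.eval₂ ι₀
    (fun p : (Σ _ : Unit, κ none) => MvPolynomial.X ⟨none, p.2⟩) g
  have key : ∀ (Z : Type) [CommRing Z] (a : A₀ →+* Z) (c : (Σ o, κ o) → Z), MvPolynomial.eval₂ a c G =
      MvPolynomial.eval₂ (MvPolynomial.eval₂Hom a fun p : (Σ j : J, κ (some j)) => c ⟨some p.1, p.2⟩)
        (fun p => c ⟨none, p.2⟩) g := by
    intro Z _ a c
    have : (MvPolynomial.eval₂Hom a c).comp ι₀ =
        MvPolynomial.eval₂Hom a fun p : (Σ j : J, κ (some j)) => c ⟨some p.1, p.2⟩ := by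
      apply MvPolynomial.ringHom_ext <;> simp [ι₀]
    have h2 := MvPolynomial.hom_eval₂ g ι₀ (MvPolynomial.eval₂Hom a c)
      (fun p : (Σ _ : Unit, κ none) => MvPolynomial.X ⟨none, p.2⟩)
    rw [this] at h2
    simpa using h2
  refine ⟨G, ?_, ?_⟩
  · intro hG
    obtain ⟨y, hy⟩ : ∃ y, MvPolynomial.eval y g ≠ 0 := by
      by_contra! h
      exact hg (MvPolynomial.funext fun x => by simpa using h x)
    obtain ⟨z, hz⟩ : ∃ z, MvPolynomial.eval z (MvPolynomial.eval y g) ≠ 0 := by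
      by_contra! h
      exact hy (MvPolynomial.funext fun x => by simpa using h x)
    apply hz
    have := key A₀ (RingHom.id A₀) (fun p => match p with
      | ⟨some j, k⟩ => z ⟨j, k⟩
      | ⟨none, k⟩ => MvPolynomial.eval z (y ⟨(), k⟩))
    rw [hG] at this
    simp only [MvPolynomial.eval₂_zero] at this
    rw [this]
    exact (MvPolynomial.hom_eval₂ g (RingHom.id _) (MvPolynomial.eval z) y).trans (by
      congr 1)
  · intro a c hac
    rw [key] at hac
    have hb := sols_bij (fun j : J => m (some j)) (fun j : J => k0 (some j)) (fun j => hm _) a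
      (fun p => c ⟨some p.1, p.2⟩)
    refine BijOn.finite_ncard
      (f := fun ψ : MvPolynomial (Free fun j : J => k0 (some j)) B₀ →+* ℂ => ψ.comp MvPolynomial.C)
      ⟨?_, ?_, ?_⟩ (hc _ _ hac)
    · rintro ψ ⟨h1, h2⟩
      rw [halg] at h1
      have := hb.mapsTo h1
      refine ⟨this.1, ?_⟩
      rintro (_ | j)
      · simpa using h2 ()
      · exact this.2 j
    · rintro ψ ⟨h1, -⟩ ψ' ⟨h1', -⟩ h
      rw [halg] at h1 h1'
      exact hb.injOn h1 h1' h
    · rintro φ ⟨h1, h2⟩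
      obtain ⟨ψ, hψ, rfl⟩ := hb.surjOn ⟨h1, fun j => h2 (some j)⟩
      refine ⟨ψ, ⟨by rw [halg]; exact hψ, fun _ => ?_⟩, rfl⟩
      simpa using h2 none
end Coarsening

/-! ### Counts on an affine chart -/

namespace Coarsening
open Polynomial Cardinal

section Chart
variable {n : Bool → ℕ}

/-- Indices of the monomials of a form: linear on the factor `i` for the type `some i`, bilinear for the
type `none`. -/
def Kt (n : Bool → ℕ) : Option Bool → Type
  | some i => Fin (n i + 1)
  | none => Fin (n false + 1) × Fin (n true + 1)

instance (t : Option Bool) : Fintype (Kt n t) := by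
  cases t <;> simp only [Kt] <;> infer_instance

instance (t : Option Bool) : DecidableEq (Kt n t) := by
  cases t <;> simp only [Kt] <;> infer_instance

/-- The monomials of a form of type `t` in the coordinates `x`. -/
def mon {R : Type} [Mul R] (x : (i : Bool) → Fin (n i + 1) → R) : (t : Option Bool) → Kt n t → R
  | some i, k => x i k
  | none, k => x false k.1 * x true k.2

/-- The monomial that equals `1` on the chart where the coordinates `p` are normalized to `1`. -/
def piv (p : (i : Bool) → Fin (n i + 1)) : (t : Option Bool) → Kt n t
  | some i => p i
  | none => (p false, p true)

theorem mon_piv {R : Type} [CommRing R] {x : (i : Bool) → Fin (n i + 1) → R}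
    {p : (i : Bool) → Fin (n i + 1)} (hx : ∀ i, x i (p i) = 1) (t : Option Bool) :
    mon x t (piv p t) = 1 := by
  rcases t with _ | i <;> simp [mon, piv, hx]

theorem map_mon {R S : Type} [CommRing R] [CommRing S] (φ : R →+* S)
    (x : (i : Bool) → Fin (n i + 1) → R) (t : Option Bool) (k : Kt n t) :
    φ (mon x t k) = mon (fun i k => φ (x i k)) t k := by
  rcases t with _ | i <;> simp [mon]

variable {R : Type} [CommRing R] [IsDomain R] [Algebra ℂ R] [Algebra.FiniteType ℂ R]
  {x : (i : Bool) → Fin (n i + 1) → R} {p : (i : Bool) → Fin (n i + 1)} (hx : ∀ i, x i (p i) = 1)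
  {J : Type} [Fintype J]

include hx

/-- A system of at least `trdeg R` forms has a generic count on the chart, which is `0` if there are
more forms than that. -/
theorem chart_count (τ : J → Option Bool) (htr : Algebra.trdeg ℂ R ≤ Fintype.card J) :
    ∃ N, IsCount ℂ (fun j => mon x (τ j)) N ∧ (Algebra.trdeg ℂ R < Fintype.card J → N = 0) := by
  obtain ⟨N, g, hg, -, h0, hc, -⟩ := system_count (fun j => mon x (τ j)) (fun j => piv p (τ j))
    (fun j => mon_piv hx _) (inc_isAlgebraic (A₁ := ℂ) _ _ htr)
  refine ⟨N, ⟨g, hg, hc⟩, fun hlt => h0 fun hi => ?_⟩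
  exact absurd (card_le_of_inc_injective _ _ hi) (not_le.mpr hlt)

omit [Algebra.FiniteType ℂ R] in
/-- The value of a function `h` at the zeros of a system of at least `trdeg R` forms is algebraic over
the coefficients. -/
theorem chart_algebraic (τ : J → Option Bool) (htr : Algebra.trdeg ℂ R ≤ Fintype.card J) (h : R) :
    ∃ q : (MvPolynomial (Σ j, Kt n (τ j)) ℂ)[X], q ≠ 0 ∧
      ∀ c, ∀ φ ∈ sols (RingHom.id ℂ) (fun j => mon x (τ j)) c,
        Polynomial.eval₂ (MvPolynomial.eval c) (φ h) q = 0 := by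
  let := (inc ℂ (fun j => mon x (τ j)) (fun j => piv p (τ j))).toAlgebra
  have halg : Algebra.IsAlgebraic _ _ :=
    inc_isAlgebraic (A₁ := ℂ) (fun j => mon x (τ j)) (fun j => piv p (τ j)) htr
  obtain ⟨q, hq, hqh⟩ := halg.isAlgebraic (MvPolynomial.C h)
  refine ⟨q, hq, fun c φ hφ => ?_⟩
  obtain ⟨ψ, hψ, rfl⟩ := (sols_bij (fun j => mon x (τ j)) (fun j => piv p (τ j))
    (fun j => mon_piv hx _) (RingHom.id ℂ) c).surjOn hφ
  have := congrArg ψ hqh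
  rw [Polynomial.aeval_def, Polynomial.hom_eval₂, map_zero] at this
  rw [← this]
  change _ = Polynomial.eval₂ (ψ.comp (inc ℂ _ _)) _ _
  rw [hψ]
  rfl

/-- Additivity on the chart: the forms indexed by `J` cut out a curve (or something generically
inconsistent) over the ring of their coefficients, and `curve_count` applies to the remaining
form. -/
theorem chart_split (τ : J → Option Bool) (htr : Algebra.trdeg ℂ R ≤ Fintype.card J + 1) :
    ∃ N N', IsCount ℂ (fun o : Option J => mon x (o.elim (some false) τ)) N ∧
      IsCount ℂ (fun o : Option J => mon x (o.elim (some true) τ)) N' ∧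
      IsCount ℂ (fun o : Option J => mon x (o.elim none τ)) (N + N') := by
  let m := fun j => mon x (τ j)
  let k0 := fun j => piv p (τ j)
  let := (inc ℂ m k0).toAlgebra
  have hst := inc_isScalarTower (A₁ := ℂ) m k0 rfl
  have hft : Algebra.FiniteType ℂ (MvPolynomial (Free k0) R) :=
    Algebra.FiniteType.trans (S := R) inferInstance inferInstance
  have hft : Algebra.FiniteType (MvPolynomial (Σ j, Kt n (τ j)) ℂ) (MvPolynomial (Free k0) R) :=
    Algebra.FiniteType.of_restrictScalars_finiteType ℂ _ _
  have htr' : Algebra.trdeg (MvPolynomial (Σ j, Kt n (τ j)) ℂ) (MvPolynomial (Free k0) R) ≤ 1 := by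
    by_cases hinj : Function.Injective (algebraMap (MvPolynomial (Σ j, Kt n (τ j)) ℂ) (MvPolynomial (Free k0) R))
    · have : FaithfulSMul (MvPolynomial (Σ j, Kt n (τ j)) ℂ) (MvPolynomial (Free k0) R) :=
        (faithfulSMul_iff_algebraMap_injective _ _).mpr hinj
      have e1 := trdeg_add_eq ℂ (MvPolynomial (Σ j, Kt n (τ j)) ℂ) (A := MvPolynomial (Free k0) R)
      have e2 := trdeg_add_eq ℂ R (A := MvPolynomial (Free k0) R)
      rw [← e2, MvPolynomial.trdeg_of_isDomain, MvPolynomial.trdeg_of_isDomain] at e1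
      simp only [mk_fintype, card_sigma_free k0] at e1
      have h3 : Algebra.trdeg ℂ R + Fintype.card (Free k0) ≤
        (Fintype.card J + 1) + Fintype.card (Free k0) := by gcongr
      simp only [lift_natCast] at e1
      rw [← e1] at h3
      rw [← Cardinal.add_le_add_iff_of_lt_aleph0 (γ := ((Fintype.card (Free k0) + Fintype.card J : ℕ) : Cardinal)) natCast_lt_aleph0]
      rw [add_comm] at h3
      refine h3.trans (le_of_eq ?_)
      push_cast
      ring
    · rw [trdeg_eq_zero_of_not_injective hinj]; exact zero_le_one
  obtain ⟨N, N', h1, h2, h3⟩ := curve_count htr'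
    (fun k : Fin (n false + 1) => MvPolynomial.C (x false k))
    (fun k : Fin (n true + 1) => MvPolynomial.C (x true k)) (p false) (p true) (by simp [hx]) (by simp [hx])
  refine ⟨N, N', ?_, ?_, ?_⟩
  · let : Algebra (MvPolynomial (Σ j : J, Kt n ((some j).elim (some false) τ)) ℂ)
      (MvPolynomial (Free fun j : J => piv p ((some j).elim (some false) τ)) R) :=
      (inc ℂ m k0).toAlgebra
    exact isCount_option (fun o : Option J => mon x (o.elim (some false) τ))
      (fun o : Option J => piv p (o.elim (some false) τ)) (fun _ => mon_piv hx _) rfl _ h1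
  · let : Algebra (MvPolynomial (Σ j : J, Kt n ((some j).elim (some true) τ)) ℂ)
      (MvPolynomial (Free fun j : J => piv p ((some j).elim (some true) τ)) R) :=
      (inc ℂ m k0).toAlgebra
    exact isCount_option (fun o : Option J => mon x (o.elim (some true) τ))
      (fun o : Option J => piv p (o.elim (some true) τ)) (fun _ => mon_piv hx _) rfl _ h2
  · have h3' : IsCount (MvPolynomial (Σ j, Kt n (τ j)) ℂ) (fun _ : Unit =>
        fun k : Fin (n false + 1) × Fin (n true + 1) =>
        (MvPolynomial.C (x false k.1 * x true k.2) : MvPolynomial (Free k0) R)) (N + N') := by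
      simpa only [map_mul] using h3
    let : Algebra (MvPolynomial (Σ j : J, Kt n ((some j).elim none τ)) ℂ)
      (MvPolynomial (Free fun j : J => piv p ((some j).elim none τ)) R) :=
      (inc ℂ m k0).toAlgebra
    exact isCount_option (fun o : Option J => mon x (o.elim none τ))
      (fun o : Option J => piv p (o.elim none τ)) (fun _ => mon_piv hx _) rfl _ h3'

/-- There is a multilinear slice with a nonzero count, obtained from a transcendence basis of `R`
consisting of coordinates: the `j`-th linear form is taken on the factor of the `j`-th coordinate
of the basis. -/
theorem chart_basis (hgen : Algebra.adjoin ℂ (Set.range fun q : Σ i, Fin (n i + 1) => x q.1 q.2) = ⊤)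
    (d : ℕ) (hd : Algebra.trdeg ℂ R = d) :
    ∃ (β : Fin d → Bool) (N : ℕ), N ≠ 0 ∧ IsCount ℂ (fun j => mon x (some (β j))) N := by
  have : Algebra.IsAlgebraic (Algebra.adjoin ℂ (Set.range fun q : Σ i, Fin (n i + 1) => x q.1 q.2)) R := by
    rw [hgen]
    refine ⟨fun r => ?_⟩
    exact isAlgebraic_algebraMap (R := (⊤ : Subalgebra ℂ R)) (A := R) ⟨r, trivial⟩
  have : FaithfulSMul ℂ R := inferInstance
  obtain ⟨t, ht, hb⟩ := exists_isTranscendenceBasis_subset (R := ℂ)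
    (Set.range fun q : Σ i, Fin (n i + 1) => x q.1 q.2)
  have hcard : #t = d := hb.cardinalMk_eq_trdeg.trans hd
  obtain ⟨e⟩ : Nonempty (Fin d ≃ t) := by
    rw [← Cardinal.eq, hcard]; simp
  choose q hq using fun j => ht (e j).2
  have hind : AlgebraicIndependent ℂ fun j => x (q j).1 (q j).2 := by
    have := hb.1.comp e e.injective
    convert this using 2 with j
    exact hq j
  have hinj := inc_injective (fun j => mon x (some (q j).1)) (fun j => piv p (some (q j).1))
    (fun j => (q j).2) (fun j h => by
      have := hind.transcendental j
      apply this
      have h' : (q j).2 = p (q j).1 := h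
      simp only [h', hx]
      exact isAlgebraic_one) hind
  obtain ⟨N, g, hg, h1, -, hc, -⟩ := system_count (fun j => mon x (some (q j).1))
    (fun j => piv p (some (q j).1))
    (fun j => mon_piv hx _) (inc_isAlgebraic (A₁ := ℂ) _ _ (by rw [hd]; simp))
  exact ⟨fun j => (q j).1, N, h1 hinj, g, hg, hc⟩
end Chart
end Coarsening

/-! ### Homogeneous representatives and affine charts -/

namespace Coarsening
open MultiProj

section Points
variable {n : Bool → ℕ}

/-- `v` is a system of homogeneous coordinates of the point `x`. -/
def Rep (v : (i : Bool) → Fin (n i + 1) → ℂ) (x : PStack n) : Prop :=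
  ∀ i, ∃ hv : v i ≠ 0, Projectivization.mk ℂ (v i) hv = x i

theorem exists_rep (x : PStack n) : ∃ v, Rep v x :=
  ⟨fun i => (x i).rep, fun i => ⟨(x i).rep_nonzero, (x i).mk_rep⟩⟩

theorem Rep.smul {v : (i : Bool) → Fin (n i + 1) → ℂ} {x : PStack n} (h : Rep v x) (l : Bool → ℂ)
    (hl : ∀ i, l i ≠ 0) : Rep (fun i => l i • v i) x := by
  intro i
  obtain ⟨h1, h2⟩ := h i
  refine ⟨smul_ne_zero (hl i) h1, ?_⟩
  rw [← h2, Projectivization.mk_eq_mk_iff']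
  exact ⟨l i, rfl⟩

theorem Rep.exists_smul {v w : (i : Bool) → Fin (n i + 1) → ℂ} {x : PStack n} (h : Rep v x)
    (h' : Rep w x) : ∃ l : Bool → ℂ, (∀ i, l i ≠ 0) ∧ ∀ i, w i = l i • v i := by
  have : ∀ i, ∃ a : ℂˣ, a • v i = w i := by
    intro i
    obtain ⟨h1, h2⟩ := h i
    obtain ⟨h3, h4⟩ := h' i
    rw [← Projectivization.mk_eq_mk_iff ℂ _ _ h3 h1, h2, h4]
  choose a ha using this
  exact ⟨fun i => a i, fun i => (a i).ne_zero, fun i => (ha i).symm⟩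

theorem Rep.unique {v : (i : Bool) → Fin (n i + 1) → ℂ} {x y : PStack n} (h : Rep v x)
    (h' : Rep v y) : x = y := by
  funext i
  rw [← (h i).2, ← (h' i).2]

theorem exists_rep_of_ne {v : (i : Bool) → Fin (n i + 1) → ℂ} (h : ∀ i, v i ≠ 0) :
    ∃ x : PStack n, Rep v x := ⟨fun i => Projectivization.mk ℂ (v i) (h i), fun i => ⟨h i, rfl⟩⟩

/-- The affine chart of `Y` where the coordinates `p` are nonzero, as a subset of affine space: the
homogeneous coordinates, normalized to `1` at `p`, of the points of `Y`. -/
def chart (Y : Set (PStack n)) (p : (i : Bool) → Fin (n i + 1)) :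
    Set ((Σ i, Fin (n i + 1)) → ℂ) :=
  {w | (∀ i, w ⟨i, p i⟩ = 1) ∧ ∃ x ∈ Y, Rep (fun i k => w ⟨i, k⟩) x}

theorem chart_of_rep {Y : Set (PStack n)} {p : (i : Bool) → Fin (n i + 1)} {x : PStack n} (hx : x ∈ Y)
    {v : (i : Bool) → Fin (n i + 1) → ℂ} (hv : Rep v x) (hp : ∀ i, v i (p i) ≠ 0) :
    (fun q : Σ i, Fin (n i + 1) => (v q.1 (p q.1))⁻¹ * v q.1 q.2) ∈ chart Y p ∧
     Rep (fun i k => (v i (p i))⁻¹ * v i k) x := by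
  have : Rep (fun i k => (v i (p i))⁻¹ * v i k) x := hv.smul (fun i => (v i (p i))⁻¹) fun i => inv_ne_zero (hp i)
  exact ⟨⟨fun i => inv_mul_cancel₀ (hp i), x, hx, this⟩, this⟩

theorem exists_chart (x : PStack n) {v : (i : Bool) → Fin (n i + 1) → ℂ} (hv : Rep v x) :
    ∃ p : (i : Bool) → Fin (n i + 1), ∀ i, v i (p i) ≠ 0 := by
  have : ∀ i, ∃ k, v i k ≠ 0 := fun i => by
    by_contra! h
    exact (hv i).1 (funext h)
  choose p hp using this
  exact ⟨p, hp⟩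

/-- A polynomial `f` on the chart, multiplied by a high power of the product of the pivot coordinates,
becomes a polynomial `F` in homogeneous coordinates. -/
theorem exists_homogenization (p : (i : Bool) → Fin (n i + 1)) (f : MvPolynomial (Σ i, Fin (n i + 1)) ℂ) :
    ∃ (F : MvPolynomial (Σ i, Fin (n i + 1)) ℂ) (N : ℕ), ∀ v : (i : Bool) → Fin (n i + 1) → ℂ,
      (∀ i, v i (p i) ≠ 0) → MvPolynomial.eval (fun q => v q.1 q.2) F =
        (v false (p false) * v true (p true)) ^ N *
          MvPolynomial.eval (fun q => (v q.1 (p q.1))⁻¹ * v q.1 q.2) f := by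
  induction f using MvPolynomial.induction_on with
  | C a => exact ⟨MvPolynomial.C a, 0, fun v hv => by simp⟩
  | add f g hf hg =>
    obtain ⟨F, N, hF⟩ := hf
    obtain ⟨G, M, hG⟩ := hg
    refine ⟨(MvPolynomial.X ⟨false, p false⟩ * MvPolynomial.X ⟨true, p true⟩) ^ M * F +
      (MvPolynomial.X ⟨false, p false⟩ * MvPolynomial.X ⟨true, p true⟩) ^ N * G, N + M, fun v hv => ?_⟩
    simp [hF v hv, hG v hv]
    ring
  | mul_X f q hf =>
    obtain ⟨F, N, hF⟩ := hf
    obtain ⟨i, k⟩ := q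
    cases i
    · refine ⟨F * MvPolynomial.X ⟨false, k⟩ * MvPolynomial.X ⟨true, p true⟩, N + 1, fun v hv => ?_⟩
      have h1 := hv false
      simp only [map_mul, hF v hv, MvPolynomial.eval_X]
      have h2 : v false (p false) * ((v false (p false))⁻¹ * v false k) = v false k := by field_simp
      rw [← h2, mul_inv_cancel_left₀ h1, pow_succ]
      generalize (MvPolynomial.eval fun q : Σ i, Fin (n i + 1) => (v q.fst (p q.fst))⁻¹ * v q.fst q.snd) f = E
      linear_combination (-((v false (p false) * v true (p true)) ^ N * E * v true (p true))) * h2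
    · refine ⟨F * MvPolynomial.X ⟨true, k⟩ * MvPolynomial.X ⟨false, p false⟩, N + 1, fun v hv => ?_⟩
      have h1 := hv true
      simp only [map_mul, hF v hv, MvPolynomial.eval_X]
      have h2 : v true (p true) * ((v true (p true))⁻¹ * v true k) = v true k := by field_simp
      rw [← h2, mul_inv_cancel_left₀ h1, pow_succ]
      generalize (MvPolynomial.eval fun q : Σ i, Fin (n i + 1) => (v q.fst (p q.fst))⁻¹ * v q.fst q.snd) f = E
      linear_combination (-((v false (p false) * v true (p true)) ^ N * E * v false (p false))) * h2

/-- The vanishing ideal of a chart is prime. Homogenizing `f` and `g` and multiplying both by the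
product of the pivot coordinates gives two algebraic sets covering `Y`. -/
theorem chart_prime {Y : Set (PStack n)} (hY : IsIrredVariety Y) (p : (i : Bool) → Fin (n i + 1))
    (f g : MvPolynomial (Σ i, Fin (n i + 1)) ℂ)
    (h : ∀ w ∈ chart Y p, MvPolynomial.eval w (f * g) = 0) :
    (∀ w ∈ chart Y p, MvPolynomial.eval w f = 0) ∨ (∀ w ∈ chart Y p, MvPolynomial.eval w g = 0) := by
  let H : MvPolynomial (Σ i, Fin (n i + 1)) ℂ :=
    MvPolynomial.X ⟨false, p false⟩ * MvPolynomial.X ⟨true, p true⟩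
  obtain ⟨F, N, hF⟩ := exists_homogenization p f
  obtain ⟨G, M, hG⟩ := exists_homogenization p g
  have alg : ∀ F : MvPolynomial (Σ i, Fin (n i + 1)) ℂ, IsAlgebraicSet {x : PStack n | PolyVanish F x} :=
    fun F => ⟨{F}, by simp⟩
  have back : ∀ (f F : MvPolynomial (Σ i, Fin (n i + 1)) ℂ) (N : ℕ) (_ : ∀ v : (i : Bool) → Fin (n i + 1) → ℂ,
      (∀ i, v i (p i) ≠ 0) → MvPolynomial.eval (fun q => v q.1 q.2) F =
        (v false (p false) * v true (p true)) ^ N *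
          MvPolynomial.eval (fun q => (v q.1 (p q.1))⁻¹ * v q.1 q.2) f),
      Y ⊆ {x | PolyVanish (H * F) x} → ∀ w ∈ chart Y p, MvPolynomial.eval w f = 0 := by
    rintro f F N hF hs w ⟨hw, x, hx, hr⟩
    have h1 := hs hx _ hr
    have h2 := hF (fun i k => w ⟨i, k⟩) (by simp [hw])
    simp only [hw, map_mul, H, MvPolynomial.eval_X, one_mul] at h1
    rw [h1] at h2
    simpa [hw] using h2.symm
  have : Y ⊆ {x | PolyVanish (H * F) x} ∪ {x | PolyVanish (H * G) x} := by
    intro x hx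
    obtain ⟨v, hv⟩ := exists_rep x
    by_cases hp : ∀ i, v i (p i) ≠ 0
    · have h1 := (chart_of_rep hx hv hp).1
      have h2 := h _ h1
      have key : ∀ (f F : MvPolynomial (Σ i, Fin (n i + 1)) ℂ) (N : ℕ) (_ : ∀ v : (i : Bool) → Fin (n i + 1) → ℂ,
        (∀ i, v i (p i) ≠ 0) → MvPolynomial.eval (fun q => v q.1 q.2) F =
        (v false (p false) * v true (p true)) ^ N *
          MvPolynomial.eval (fun q => (v q.1 (p q.1))⁻¹ * v q.1 q.2) f),
        MvPolynomial.eval (fun q : Σ i, Fin (n i + 1) => (v q.1 (p q.1))⁻¹ * v q.1 q.2) f = 0 →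
        PolyVanish (H * F) x := by
        intro f F N hF h0 w hw
        obtain ⟨l, hl, hlw⟩ := hv.exists_smul hw
        have e : ∀ q : Σ i, Fin (n i + 1), (w q.1 (p q.1))⁻¹ * w q.1 q.2 = (v q.1 (p q.1))⁻¹ * v q.1 q.2 := by
          intro q
          have h1 := hl q.1
          have h2 := hp q.1
          simp only [hlw, Pi.smul_apply, smul_eq_mul]
          field_simp
        rw [map_mul, hF w (fun i => by simp [hlw, hl, hp])]
        simp only [e, h0, mul_zero]
      rw [map_mul, mul_eq_zero] at h2
      exact h2.imp (key f F N hF) (key g G M hG)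
    · left
      intro w hw
      obtain ⟨l, hl, hlw⟩ := hv.exists_smul hw
      push Not at hp
      obtain ⟨i, hi⟩ := hp
      have : w i (p i) = 0 := by simp [hlw, hi]
      cases i <;> simp [H, this]
  exact (hY.2.2 _ _ (alg _) (alg _) this).imp (back f F N hF) (back g G M hG)

theorem eval_scale {P : Type} (l w : P → ℂ) (f : MvPolynomial P ℂ) :
    MvPolynomial.eval w (MvPolynomial.aeval (fun q => MvPolynomial.C (l q) * MvPolynomial.X q) f)
      = MvPolynomial.eval (fun q => l q * w q) f := by
  induction f using MvPolynomial.induction_on with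
  | C a => simp
  | add f g hf hg => rw [map_add, map_add, map_add, hf, hg]
  | mul_X f q hf =>
    rw [map_mul, map_mul, map_mul, hf, MvPolynomial.aeval_X, map_mul, MvPolynomial.eval_C,
      MvPolynomial.eval_X, MvPolynomial.eval_X]

/-- The chart is closed: it contains every point at which all polynomials vanishing on it vanish. -/
theorem mem_chart {Y : Set (PStack n)} (hY : IsAlgebraicSet Y) (p : (i : Bool) → Fin (n i + 1))
    (w : (Σ i, Fin (n i + 1)) → ℂ)
    (hw : ∀ f : MvPolynomial (Σ i, Fin (n i + 1)) ℂ, (∀ w ∈ chart Y p, MvPolynomial.eval w f = 0) →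
      MvPolynomial.eval w f = 0) : w ∈ chart Y p := by
  have h1 : ∀ i, w ⟨i, p i⟩ = 1 := by
    intro i
    have := hw (MvPolynomial.X ⟨i, p i⟩ - 1) (fun w hw => by simp [hw.1])
    simpa [sub_eq_zero] using this
  obtain ⟨x, hx⟩ := exists_rep_of_ne (v := fun i k => w ⟨i, k⟩) (fun i h => by
    have := congrFun h (p i)
    simp [h1] at this)
  refine ⟨h1, x, ?_, hx⟩
  obtain ⟨S, rfl⟩ := hY
  intro f hf v hv
  obtain ⟨l, hl, hlv⟩ := hx.exists_smul hv
  have e := fun w : (Σ i, Fin (n i + 1)) → ℂ => eval_scale (fun q => l q.1) w f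
  have := hw (MvPolynomial.aeval (fun q : Σ i, Fin (n i + 1) => MvPolynomial.C (l q.1) * MvPolynomial.X q) f) ?_
  · rw [e] at this
    rw [← this]
    congr 2
    funext q
    simp [hlv]
  · rintro w' ⟨h1', x', hx', hr'⟩
    rw [e]
    have h2 := hx' f hf
    have h3 := h2 _ (hr'.smul l hl)
    simpa only [Pi.smul_apply, smul_eq_mul] using h3
end Points
end Coarsening

/-! ### Coordinate rings of charts -/

namespace Coarsening
open MultiProj

section ChartRing
variable {n : Bool → ℕ}

/-- `R` is the coordinate ring of the affine chart `chart Y p`, with coordinate functions `x`: it is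
generated by them, and its complex points are the points of the chart. -/
structure IsChartRing (Y : Set (PStack n)) (p : (i : Bool) → Fin (n i + 1)) {R : Type} [CommRing R]
    [Algebra ℂ R] (x : (i : Bool) → Fin (n i + 1) → R) : Prop where
  one : ∀ i, x i (p i) = 1
  gen : Algebra.adjoin ℂ (Set.range fun q : Σ i, Fin (n i + 1) => x q.1 q.2) = ⊤
  mem : ∀ φ : R →+* ℂ, φ.comp (algebraMap ℂ R) = RingHom.id ℂ →
    (fun q : Σ i, Fin (n i + 1) => φ (x q.1 q.2)) ∈ chart Y p
  exists_hom : ∀ w ∈ chart Y p, ∃ φ : R →+* ℂ, φ.comp (algebraMap ℂ R) = RingHom.id ℂ ∧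
    ∀ q : Σ i, Fin (n i + 1), φ (x q.1 q.2) = w q

/-- The quotient of the polynomial ring by the vanishing ideal of the chart. -/
theorem exists_chart_ring {Y : Set (PStack n)} (hY : IsIrredVariety Y) (p : (i : Bool) → Fin (n i + 1))
    (hne : (chart Y p).Nonempty) :
    ∃ (R : Type) (_ : CommRing R) (_ : IsDomain R) (_ : Algebra ℂ R) (_ : Algebra.FiniteType ℂ R)
      (x : (i : Bool) → Fin (n i + 1) → R), IsChartRing Y p x := by
  let I : Ideal (MvPolynomial (Σ i, Fin (n i + 1)) ℂ) :=
    { carrier := {f | ∀ w ∈ chart Y p, MvPolynomial.eval w f = 0}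
      add_mem' := fun {a b} ha hb w hw => by
        rw [map_add, ha w hw, hb w hw, add_zero]
      zero_mem' := fun w _ => map_zero _
      smul_mem' := fun a b hb w hw => by
        rw [smul_eq_mul, map_mul, hb w hw, mul_zero] }
  have hI : ∀ f, f ∈ I ↔ ∀ w ∈ chart Y p, MvPolynomial.eval w f = 0 := fun f => Iff.rfl
  clear_value I
  have hprime : I.IsPrime := by
    refine ⟨fun h => ?_, fun {f g} hfg => ?_⟩
    · obtain ⟨w, hw⟩ := hne
      have : (1 : MvPolynomial (Σ i, Fin (n i + 1)) ℂ) ∈ I := by rw [h]; trivial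
      simpa using (hI 1).1 this w hw
    · simp only [hI] at hfg ⊢
      exact chart_prime hY p f g hfg
  have hae : ∀ f : MvPolynomial (Σ i, Fin (n i + 1)) ℂ,
      MvPolynomial.aeval (fun q : Σ i, Fin (n i + 1) => Ideal.Quotient.mk I (MvPolynomial.X q)) f =
        Ideal.Quotient.mk I f := by
    intro f
    have : MvPolynomial.aeval (fun q : Σ i, Fin (n i + 1) => Ideal.Quotient.mk I (MvPolynomial.X q)) =
      Ideal.Quotient.mkₐ ℂ I := by
      ext q
      simp
    rw [this]; rfl
  have hgen : Algebra.adjoin ℂ (Set.range fun q : Σ i, Fin (n i + 1) => Ideal.Quotient.mk I (MvPolynomial.X q)) = ⊤ := by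
    rw [Algebra.adjoin_range_eq_range_aeval, AlgHom.range_eq_top]
    intro r
    obtain ⟨f, rfl⟩ := Ideal.Quotient.mk_surjective r
    exact ⟨f, hae f⟩
  refine ⟨_ ⧸ I, inferInstance, inferInstance, inferInstance, inferInstance,
    fun i k => Ideal.Quotient.mk I (MvPolynomial.X ⟨i, k⟩), fun i => ?_, hgen, ?_, ?_⟩
  · rw [← map_one (Ideal.Quotient.mk I), Ideal.Quotient.eq, hI]
    intro w hw
    simp [hw.1]
  · intro φ hφ
    refine mem_chart hY.1 p _ fun f hf => ?_
    have h1 : Ideal.Quotient.mk I f = 0 := Ideal.Quotient.eq_zero_iff_mem.2 ((hI f).2 hf)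
    have h2 : φ (Ideal.Quotient.mk I f) = MvPolynomial.eval (fun q : Σ i, Fin (n i + 1) =>
        φ (Ideal.Quotient.mk I (MvPolynomial.X q))) f := by
      rw [← hae f, MvPolynomial.aeval_def, MvPolynomial.hom_eval₂, hφ]
      rfl
    rw [h1, map_zero] at h2
    exact h2.symm
  · intro w hw
    refine ⟨Ideal.Quotient.lift I (MvPolynomial.eval w) fun f hf => (hI f).1 hf w hw, ?_, fun q => ?_⟩
    · ext a
      rw [RingHom.comp_apply, IsScalarTower.algebraMap_apply ℂ (MvPolynomial (Σ i, Fin (n i + 1)) ℂ) (_ ⧸ I)]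
      simp
    · rw [Ideal.Quotient.lift_mk, MvPolynomial.eval_X]

theorem hom_ext_of_adjoin {R : Type} [CommRing R] [Algebra ℂ R] {x : (i : Bool) → Fin (n i + 1) → R}
    (hgen : Algebra.adjoin ℂ (Set.range fun q : Σ i, Fin (n i + 1) => x q.1 q.2) = ⊤)
    {φ ψ : R →+* ℂ} (hφ : φ.comp (algebraMap ℂ R) = RingHom.id ℂ)
    (hψ : ψ.comp (algebraMap ℂ R) = RingHom.id ℂ) (h : ∀ q : Σ i, Fin (n i + 1), φ (x q.1 q.2) = ψ (x q.1 q.2)) :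
    φ = ψ := by
  let f : R →ₐ[ℂ] ℂ := { φ with commutes' := fun a => RingHom.congr_fun hφ a }
  let g : R →ₐ[ℂ] ℂ := { ψ with commutes' := fun a => RingHom.congr_fun hψ a }
  have : f = g := AlgHom.ext_of_adjoin_eq_top hgen (by
    rintro _ ⟨q, rfl⟩
    exact h q)
  ext r
  exact AlgHom.congr_fun this r

end ChartRing
end Coarsening

/-! ### From counts on a chart to counts on the variety -/

namespace Coarsening
open MultiProj

section Zeros
variable {n : Bool → ℕ}

/-- The factor by which a form of type `t` scales when homogeneous coordinates are rescaled by `l`. -/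
def sc (l : Bool → ℂ) : Option Bool → ℂ
  | some i => l i
  | none => l false * l true

theorem sc_ne {l : Bool → ℂ} (hl : ∀ i, l i ≠ 0) (t : Option Bool) : sc l t ≠ 0 := by
  cases t
  · exact mul_ne_zero (hl _) (hl _)
  · exact hl _

theorem mon_smul (l : Bool → ℂ) (v : (i : Bool) → Fin (n i + 1) → ℂ) (t : Option Bool) (k : Kt n t) :
    mon (fun i => l i • v i) t k = sc l t * mon v t k := by
  cases t
  · simp only [mon, sc, Pi.smul_apply, smul_eq_mul]; ring
  · rfl

/-- The form of type `t` with coefficients `c` vanishes at `x`. -/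
def FV (t : Option Bool) (c : Kt n t → ℂ) (x : PStack n) : Prop :=
  ∀ v, Rep v x → ∑ k, c k * mon v t k = 0

theorem FV_iff {t : Option Bool} {c : Kt n t → ℂ} {x : PStack n} {v} (hv : Rep v x) :
    FV t c x ↔ ∑ k, c k * mon v t k = 0 := by
  refine ⟨fun h => h v hv, fun h w hw => ?_⟩
  obtain ⟨l, hl, hlw⟩ := hv.exists_smul hw
  obtain rfl : w = fun i => l i • v i := funext hlw
  simp only [mon_smul, mul_left_comm _ (sc l t), ← Finset.mul_sum, h, mul_zero]

/-- The zeros on `Y` of the system of types `τ` with coefficients `c`. -/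
def Z (Y : Set (PStack n)) {J : Type} (τ : J → Option Bool) (c : (Σ j, Kt n (τ j)) → ℂ) :
    Set (PStack n) :=
  {x | x ∈ Y ∧ ∀ j, FV (τ j) (fun k => c ⟨j, k⟩) x}

/-- The system of types `τ` has exactly `N` zeros on `Y` off a hypersurface `G = 0` in its space of
coefficients. -/
def GCount (Y : Set (PStack n)) {J : Type} (τ : J → Option Bool) (N : ℕ) : Prop :=
  ∃ G : MvPolynomial (Σ j, Kt n (τ j)) ℂ, G ≠ 0 ∧ ∀ c, MvPolynomial.eval c G ≠ 0 →
    (Z Y τ c).Finite ∧ (Z Y τ c).ncard = N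

/-- Any two nonempty charts of an irreducible variety meet. -/
theorem exists_overlap {Y : Set (PStack n)} (hY : IsIrredVariety Y) {p p' : (i : Bool) → Fin (n i + 1)}
    (hp : (chart Y p).Nonempty) (hp' : (chart Y p').Nonempty) :
    ∃ w ∈ chart Y p', w ⟨false, p false⟩ * w ⟨true, p true⟩ ≠ 0 := by
  let H (p : (i : Bool) → Fin (n i + 1)) : MvPolynomial (Σ i, Fin (n i + 1)) ℂ :=
    MvPolynomial.X ⟨false, p false⟩ * MvPolynomial.X ⟨true, p true⟩
  have alg : ∀ F : MvPolynomial (Σ i, Fin (n i + 1)) ℂ, IsAlgebraicSet {x : PStack n | PolyVanish F x} :=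
    fun F => ⟨{F}, by simp⟩
  have contra : ∀ p : (i : Bool) → Fin (n i + 1), (chart Y p).Nonempty →
      ¬ Y ⊆ {x | PolyVanish (H p) x} := by
    rintro p ⟨w, hw, x, hx, hr⟩ h
    have := h hx _ hr
    simp [H, hw] at this
  by_contra! h
  have : Y ⊆ {x | PolyVanish (H p) x} ∪ {x | PolyVanish (H p') x} := by
    intro x hx
    obtain ⟨v, hv⟩ := exists_rep x
    by_cases hq : ∀ i, v i (p' i) ≠ 0
    · left
      have h1 := h _ (chart_of_rep hx hv hq).1
      intro w hw
      obtain ⟨l, hl, hlw⟩ := hv.exists_smul hw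
      have h2 : v false (p false) * v true (p true) = 0 := by
        have h3 := hq false
        have h4 := hq true
        simpa [h3, h4] using h1
      simp only [H, map_mul, MvPolynomial.eval_X, hlw, Pi.smul_apply, smul_eq_mul]
      linear_combination (l false * l true) * h2
    · right
      intro w hw
      obtain ⟨l, hl, hlw⟩ := hv.exists_smul hw
      push Not at hq
      obtain ⟨i, hi⟩ := hq
      have : w i (p' i) = 0 := by simp [hlw, hi]
      cases i <;> simp [H, this]
  rcases hY.2.2 _ _ (alg _) (alg _) this with h | h
  · exact contra p hp h
  · exact contra p' hp' h

variable {Y : Set (PStack n)} {p : (i : Bool) → Fin (n i + 1)} {R : Type} [CommRing R]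
    [Algebra ℂ R] {x : (i : Bool) → Fin (n i + 1) → R} {J : Type} [Fintype J] {τ : J → Option Bool}

omit [Fintype J] in
/-- A zero on `Y` lying in the chart of `p` gives a solution in the coordinate ring. -/
theorem IsChartRing.rescale (hR : IsChartRing Y p x) {c : (Σ j, Kt n (τ j)) → ℂ} {y : PStack n} (hy : y ∈ Z Y τ c)
    {v : (i : Bool) → Fin (n i + 1) → ℂ} (hv : Rep v y) (hp : ∀ i, v i (p i) ≠ 0) :
    ∃ φ ∈ sols (RingHom.id ℂ) (fun j => mon x (τ j)) c,
      ∀ i k, φ (x i k) = (v i (p i))⁻¹ * v i k := by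
  obtain ⟨h1, h2⟩ := chart_of_rep hy.1 hv hp
  obtain ⟨φ, hφ, hφx⟩ := hR.exists_hom _ h1
  refine ⟨φ, ⟨hφ, fun j => ?_⟩, fun i k => hφx ⟨i, k⟩⟩
  have h3 := (FV_iff h2).1 (hy.2 j)
  rw [← h3]
  refine Finset.sum_congr rfl fun k _ => ?_
  rw [map_mon]
  congr 2
  funext i k
  exact hφx ⟨i, k⟩

/-- A generic system of at least `trdeg R` forms has no zeros outside the chart of `p`. It suffices to
consider another chart, that of `p'`, and the product `H` of the coordinates `p` on it. At zeros
where `H ≠ 0` the function `1 / H` satisfies a relation `q` over the coefficient ring. Multiply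
`q` by `H ^ natDegree q` and, for fixed `c`, let the pivot coefficients vary so that every point
of the chart is a zero of the system: this yields a polynomial `F` with `F * H = 0` on the chart.
Hence `F = 0` on it, and at a zero with `H = 0` this says that the leading coefficient of `q`
vanishes at `c`. -/
theorem boundary [IsDomain R] [Algebra.FiniteType ℂ R] (hY : IsIrredVariety Y)
    (hne : (chart Y p).Nonempty) (hR : IsChartRing Y p x) (htr : Algebra.trdeg ℂ R ≤ Fintype.card J)
    (p' : (i : Bool) → Fin (n i + 1)) :
    ∃ q : MvPolynomial (Σ j, Kt n (τ j)) ℂ, q ≠ 0 ∧ ∀ c, MvPolynomial.eval c q ≠ 0 →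
      ∀ w ∈ chart Y p', (∀ j, ∑ k, c ⟨j, k⟩ * mon (fun i k => w ⟨i, k⟩) (τ j) k = 0) →
        w ⟨false, p false⟩ * w ⟨true, p true⟩ ≠ 0 := by
  classical
  by_cases hne' : (chart Y p').Nonempty
  swap
  · exact ⟨1, one_ne_zero, fun c _ w hw => absurd ⟨w, hw⟩ hne'⟩
  obtain ⟨q, hq, hqs⟩ := chart_algebraic hR.one τ htr (x false (p' false) * x true (p' true))
  let H : MvPolynomial (Σ i, Fin (n i + 1)) ℂ :=
    MvPolynomial.X ⟨false, p false⟩ * MvPolynomial.X ⟨true, p true⟩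
  have hH : ∀ w, MvPolynomial.eval w H = w ⟨false, p false⟩ * w ⟨true, p true⟩ := fun w => by simp [H]
  -- `1 / H` satisfies the relation `q`; here it is multiplied by a power of `H`
  have key : ∀ c, ∀ w ∈ chart Y p', (∀ j, ∑ k, c ⟨j, k⟩ * mon (fun i k => w ⟨i, k⟩) (τ j) k = 0) →
      MvPolynomial.eval w H ≠ 0 →
      ∑ k ∈ Finset.range (q.natDegree + 1), MvPolynomial.eval c (q.coeff k) *
        MvPolynomial.eval w H ^ (q.natDegree - k) = 0 := by
    rintro c w ⟨hw, y, hy, hr⟩ hs h0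
    have h00 := h0
    rw [hH] at h00
    have hp : ∀ i, w ⟨i, p i⟩ ≠ 0 := by
      rintro (_ | _)
      · exact left_ne_zero_of_mul h00
      · exact right_ne_zero_of_mul h00
    obtain ⟨φ, hφ, hφx⟩ := hR.rescale (c := c) ⟨hy, fun j => (FV_iff hr).2 (hs j)⟩ hr hp
    have h1 := hqs c φ hφ
    rw [map_mul, hφx, hφx, hw, hw, mul_one, mul_one, ← mul_inv, ← hH, Polynomial.eval₂_eq_sum_range] at h1
    have h2 := congrArg (fun z => MvPolynomial.eval w H ^ q.natDegree * z) h1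
    simp only [mul_zero, Finset.mul_sum] at h2
    rw [← h2]
    refine Finset.sum_congr rfl fun k hk => ?_
    have hk' : k ≤ q.natDegree := by simpa [Nat.lt_succ_iff] using hk
    rw [pow_sub₀ _ h0 hk', inv_pow]
    ring
  let mX : ∀ t, Kt n t → MvPolynomial (Σ i, Fin (n i + 1)) ℂ := mon fun i k => MvPolynomial.X ⟨i, k⟩
  have hmX : ∀ w t k, MvPolynomial.eval w (mX t k) = mon (fun i k => w ⟨i, k⟩) t k := by
    intro w t k
    rw [map_mon]
    simp
  refine ⟨q.leadingCoeff, Polynomial.leadingCoeff_ne_zero.2 hq, fun c hc w hw hs h0 => hc ?_⟩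
  -- the coefficients `c`, with each pivot coefficient replaced so that the point is a zero
  let γ : (Σ j, Kt n (τ j)) → MvPolynomial (Σ i, Fin (n i + 1)) ℂ := fun jk =>
    if jk.2 = piv p' (τ jk.1) then - ∑ k ∈ Finset.univ.erase (piv p' (τ jk.1)), MvPolynomial.C (c ⟨jk.1, k⟩) * mX _ k
    else MvPolynomial.C (c jk)
  have hγ : ∀ w ∈ chart Y p', ∀ j, ∑ k, MvPolynomial.eval w (γ ⟨j, k⟩) * mon (fun i k => w ⟨i, k⟩) (τ j) k = 0 := by
    intro w hw j
    have h1 := mon_piv (x := fun i k => w ⟨i, k⟩) (p := p') hw.1 (τ j)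
    rw [← Finset.add_sum_erase _ _ (Finset.mem_univ (piv p' (τ j))), h1]
    simp only [γ, if_true, map_neg, map_sum, map_mul, MvPolynomial.eval_C, hmX, mul_one]
    rw [neg_add_eq_zero]
    refine Finset.sum_congr rfl fun k hk => ?_
    rw [if_neg (Finset.ne_of_mem_erase hk), MvPolynomial.eval_C]
  let F : MvPolynomial (Σ i, Fin (n i + 1)) ℂ := ∑ k ∈ Finset.range (q.natDegree + 1),
    MvPolynomial.aeval γ (q.coeff k) * H ^ (q.natDegree - k)
  have hF : ∀ w, MvPolynomial.eval w F = ∑ k ∈ Finset.range (q.natDegree + 1),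
      MvPolynomial.eval (fun jk => MvPolynomial.eval w (γ jk)) (q.coeff k) *
        MvPolynomial.eval w H ^ (q.natDegree - k) := by
    intro w
    simp only [F, map_sum, map_mul, map_pow]
    refine Finset.sum_congr rfl fun k hk => ?_
    congr 1
    rw [MvPolynomial.aeval_def, MvPolynomial.hom_eval₂]
    have : (MvPolynomial.eval w).comp (algebraMap ℂ (MvPolynomial (Σ i, Fin (n i + 1)) ℂ)) = RingHom.id ℂ := by
      ext a; simp
    rw [this]
    rfl
  have hFH : ∀ w ∈ chart Y p', MvPolynomial.eval w (F * H) = 0 := by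
    intro w hw
    rw [map_mul, mul_eq_zero]
    by_contra! h
    exact h.1 ((hF w).trans (key _ w hw (hγ w hw) h.2))
  rcases chart_prime hY p' F H hFH with h | h
  · have h1 := h w hw
    have h2 : (fun jk => MvPolynomial.eval w (γ jk)) = c := by
      funext ⟨j, k⟩
      by_cases hk : k = piv p' (τ j)
      · subst hk
        have h1 := mon_piv (x := fun i k => w ⟨i, k⟩) (p := p') hw.1 (τ j)
        have h2 := hs j
        rw [← Finset.add_sum_erase _ _ (Finset.mem_univ (piv p' (τ j))), h1, mul_one] at h2
        simp only [γ, if_true, map_neg, map_sum, map_mul, MvPolynomial.eval_C, hmX]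
        rw [neg_eq_iff_add_eq_zero, add_comm]
        exact h2
      · simp only [γ, if_neg hk, MvPolynomial.eval_C]
    rw [hF, h2, hH, h0, Finset.sum_range_succ, Nat.sub_self, pow_zero, mul_one, Finset.sum_eq_zero, zero_add] at h1
    · exact h1
    · intro k hk
      rw [zero_pow, mul_zero]
      have := Finset.mem_range.1 hk
      omega
  · obtain ⟨w, hw, h0⟩ := exists_overlap hY hne hne'
    exact absurd ((hH w).symm.trans (h w hw)) h0

/-- A generic count on a chart is a generic count on `Y`, since by `boundary`, applied to all charts,
no zeros are missed. -/
theorem IsChartRing.gcount [IsDomain R] [Algebra.FiniteType ℂ R] (hY : IsIrredVariety Y)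
    (hne : (chart Y p).Nonempty) (hR : IsChartRing Y p x) (htr : Algebra.trdeg ℂ R ≤ Fintype.card J)
    {N : ℕ} (hN : IsCount ℂ (fun j => mon x (τ j)) N) : GCount Y τ N := by
  classical
  obtain ⟨g, hg, hgs⟩ := hN
  choose q hq hqs using fun p' => boundary (τ := τ) hY hne hR htr p'
  refine ⟨g * ∏ p', q p', mul_ne_zero hg (Finset.prod_ne_zero_iff.2 fun p' _ => hq p'), fun c hc => ?_⟩
  rw [map_mul, map_prod] at hc
  have h1 := hgs (RingHom.id ℂ) c (left_ne_zero_of_mul hc)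
  have h2 : ∀ p', MvPolynomial.eval c (q p') ≠ 0 := fun p' =>
    Finset.prod_ne_zero_iff.1 (right_ne_zero_of_mul hc) p' (Finset.mem_univ _)
  have h3 : ∀ φ : R →+* ℂ, ∃ y : PStack n, φ ∈ sols (RingHom.id ℂ) (fun j => mon x (τ j)) c →
      y ∈ Y ∧ Rep (fun i k => φ (x i k)) y := by
    intro φ
    by_cases hφ : φ ∈ sols (RingHom.id ℂ) (fun j => mon x (τ j)) c
    · obtain ⟨y, hy, hr⟩ := (hR.mem φ hφ.1).2
      exact ⟨y, fun _ => ⟨hy, hr⟩⟩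
    · exact ⟨(hne.some_mem.2).choose, fun h => absurd h hφ⟩
  choose f hf using h3
  refine BijOn.finite_ncard (f := f) ⟨?_, ?_, ?_⟩ h1
  · intro φ hφ
    refine ⟨(hf φ hφ).1, fun j => (FV_iff (hf φ hφ).2).2 ?_⟩
    rw [← hφ.2 j]
    simp only [map_mon]
  · intro φ hφ ψ hψ h
    obtain ⟨-, h4⟩ := hf φ hφ
    obtain ⟨-, h5⟩ := hf ψ hψ
    rw [h] at h4
    obtain ⟨l, hl, hlw⟩ := h4.exists_smul h5
    refine hom_ext_of_adjoin hR.gen hφ.1 hψ.1 fun ⟨i, k⟩ => ?_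
    have h6 := congrFun (hlw i) (p i)
    have h7 := congrFun (hlw i) k
    simp only [Pi.smul_apply, smul_eq_mul, hR.one, map_one, mul_one] at h6 h7
    rw [h7, ← h6, one_mul]
  · intro y hy
    obtain ⟨v, hv⟩ := exists_rep y
    obtain ⟨p', hp'⟩ := exists_chart y hv
    obtain ⟨h4, h5⟩ := chart_of_rep hy.1 hv hp'
    have h6 := hqs p' c (h2 p') _ h4 (fun j => (FV_iff h5).1 (hy.2 j))
    have hp : ∀ i, (v i (p' i))⁻¹ * v i (p i) ≠ 0 := by
      rintro (_ | _)
      · exact left_ne_zero_of_mul h6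
      · exact right_ne_zero_of_mul h6
    obtain ⟨φ, hφ, hφx⟩ := hR.rescale hy hv (fun i => right_ne_zero_of_mul (hp i))
    refine ⟨φ, hφ, ?_⟩
    have h7 := (hf φ hφ).2
    have h8 : Rep (fun i k => φ (x i k)) y := by
      have := (chart_of_rep hy.1 hv (fun i => right_ne_zero_of_mul (hp i))).2
      simpa only [hφx] using this
    exact h7.unique h8

end Zeros
end Coarsening

/-! ### Generic counts on an irreducible variety -/

namespace Coarsening
open MultiProj

section Counts
variable {n : Bool → ℕ}

/-- The number `d` is the transcendence degree of the coordinate ring of any nonempty chart; the four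
claims are those of `chart_count`, `chart_split` and `chart_basis`, transferred to `Y`. -/
theorem exists_counts {Y : Set (PStack n)} (hY : IsIrredVariety Y) : ∃ d : ℕ,
    (∀ (J : Type) [Fintype J] (τ : J → Option Bool), d < Fintype.card J → GCount Y τ 0) ∧
    (∀ (J : Type) [Fintype J] (τ : J → Option Bool), d = Fintype.card J → ∃ N, GCount Y τ N) ∧
    (∀ (J : Type) [Fintype J] (τ : J → Option Bool), d = Fintype.card J + 1 → ∃ N N',
      GCount Y (fun o : Option J => o.elim (some false) τ) N ∧
      GCount Y (fun o : Option J => o.elim (some true) τ) N' ∧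
      GCount Y (fun o : Option J => o.elim none τ) (N + N')) ∧
    ∃ (β : Fin d → Bool) (N : ℕ), N ≠ 0 ∧ GCount Y (fun j => some (β j)) N := by
  obtain ⟨y, hy⟩ := hY.2.1
  obtain ⟨v, hv⟩ := exists_rep y
  obtain ⟨p, hp⟩ := exists_chart y hv
  have hne : (chart Y p).Nonempty := ⟨_, (chart_of_rep hy hv hp).1⟩
  obtain ⟨R, _, _, _, _, x, hR⟩ := exists_chart_ring hY p hne
  obtain ⟨d, hd⟩ := Cardinal.lt_aleph0.1 (trdeg_lt_aleph0_of_finiteType (R := ℂ) (S := R))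
  refine ⟨d, fun J _ τ hJ => ?_, fun J _ τ hJ => ?_, fun J _ τ hJ => ?_, ?_⟩
  · have h1 : Algebra.trdeg ℂ R < Fintype.card J := by rw [hd]; exact_mod_cast hJ
    obtain ⟨N, hN, h0⟩ := chart_count hR.one τ h1.le
    rw [← h0 h1]
    exact hR.gcount hY hne h1.le hN
  · have h1 : Algebra.trdeg ℂ R ≤ Fintype.card J := by rw [hd, hJ]
    obtain ⟨N, hN, -⟩ := chart_count hR.one τ h1
    exact ⟨N, hR.gcount hY hne h1 hN⟩
  · have h1 : Algebra.trdeg ℂ R ≤ Fintype.card J + 1 := by rw [hd, hJ]; norm_cast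
    have h2 : Algebra.trdeg ℂ R ≤ Fintype.card (Option J) := by rw [hd, hJ, Fintype.card_option]
    obtain ⟨N, N', a, b, c⟩ := chart_split hR.one τ h1
    exact ⟨N, N', hR.gcount hY hne h2 a, hR.gcount hY hne h2 b, hR.gcount hY hne h2 c⟩
  · obtain ⟨β, N, hN, h⟩ := chart_basis hR.one hR.gen d hd
    exact ⟨β, N, hN, hR.gcount hY hne (by rw [hd, Fintype.card_fin]) h⟩

variable {Y : Set (PStack n)} {J J' : Type} {τ : J → Option Bool}

theorem GCount.unique {N N' : ℕ} (h : GCount Y τ N) (h' : GCount Y τ N') : N = N' := by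
  obtain ⟨G, hG, h⟩ := h
  obtain ⟨G', hG', h'⟩ := h'
  obtain ⟨c, hc⟩ : ∃ c, MvPolynomial.eval c (G * G') ≠ 0 := by
    by_contra! h
    exact mul_ne_zero hG hG' (MvPolynomial.funext fun c => by rw [h, map_zero])
  rw [map_mul] at hc
  rw [← (h c (left_ne_zero_of_mul hc)).2, (h' c (right_ne_zero_of_mul hc)).2]

/-- The coefficients of the subsystem indexed along `u`. -/
def pull (τ : J → Option Bool) (u : J' → J) (c : (Σ j, Kt n (τ j)) → ℂ) : (Σ j, Kt n (τ (u j))) → ℂ :=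
  fun jk => c ⟨u jk.1, jk.2⟩

/-- Generic coefficients of a system restrict to generic coefficients of a subsystem. -/
theorem GCount.exists_pull {u : J' → J} (hu : u.Injective) {N : ℕ} (h : GCount Y (fun j => τ (u j)) N) :
    ∃ G : MvPolynomial (Σ j, Kt n (τ j)) ℂ, G ≠ 0 ∧ ∀ c, MvPolynomial.eval c G ≠ 0 →
      (Z Y (fun j => τ (u j)) (pull τ u c)).Finite ∧ (Z Y (fun j => τ (u j)) (pull τ u c)).ncard = N := by
  obtain ⟨G, hG, h⟩ := h
  let f : (Σ j, Kt n (τ (u j))) → (Σ j, Kt n (τ j)) := fun jk => ⟨u jk.1, jk.2⟩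
  have hf : f.Injective := by
    rintro ⟨j, k⟩ ⟨j', k'⟩ h
    obtain ⟨h1, h2⟩ := Sigma.mk.inj h
    obtain rfl := hu h1
    obtain rfl := eq_of_heq h2
    rfl
  refine ⟨MvPolynomial.rename f G, fun h0 => hG (MvPolynomial.rename_injective f hf (by rw [h0, map_zero])), fun c hc => ?_⟩
  rw [MvPolynomial.eval_rename] at hc
  exact h _ hc

theorem Z_subset_pull (u : J' → J) (c : (Σ j, Kt n (τ j)) → ℂ) :
    Z Y τ c ⊆ Z Y (fun j => τ (u j)) (pull τ u c) := fun _ hx => ⟨hx.1, fun j => hx.2 (u j)⟩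

theorem GCount.of_equiv (u : J' ≃ J) {τ' : J' → Option Bool} (hτ : ∀ j, τ' j = τ (u j)) {N : ℕ}
    (h : GCount Y τ' N) : GCount Y τ N := by
  obtain rfl : τ' = fun j => τ (u j) := funext hτ
  obtain ⟨G, hG, h⟩ := h.exists_pull u.injective
  refine ⟨G, hG, fun c hc => ?_⟩
  have : Z Y τ c = Z Y (fun j => τ (u j)) (pull τ u c) := by
    refine (Z_subset_pull u c).antisymm fun x hx => ⟨hx.1, fun j => ?_⟩
    obtain ⟨j, rfl⟩ := u.surjective j
    exact hx.2 j
  rw [this]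
  exact h c hc

/-- A system with a generically inconsistent subsystem is generically inconsistent. -/
theorem GCount.eq_zero_of_pull {u : J' → J} (hu : u.Injective) (h : GCount Y (fun j => τ (u j)) 0)
    {N : ℕ} (hN : GCount Y τ N) : N = 0 := by
  obtain ⟨G, hG, h⟩ := h.exists_pull hu
  refine hN.unique ⟨G, hG, fun c hc => ?_⟩
  obtain ⟨h1, h2⟩ := h c hc
  rw [Set.ncard_eq_zero h1] at h2
  have : Z Y τ c = ∅ := Set.subset_empty_iff.1 (h2 ▸ Z_subset_pull u c)
  rw [this]
  simp

theorem FV_some {i : Bool} {c : Fin (n i + 1) → ℂ} {x : PStack n} :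
    FV (some i) c x ↔ PLinVanish c (x i) := by
  constructor
  · intro h v hv hx
    obtain ⟨w, hw⟩ := exists_rep x
    obtain ⟨h1, h2⟩ := hw i
    rw [← hx, Projectivization.mk_eq_mk_iff'] at h2
    obtain ⟨a, ha⟩ := h2
    have h3 : ∑ k, c k * w i k = 0 := h w hw
    have h4 : a ≠ 0 := by
      rintro rfl
      exact h1 (by rw [← ha, zero_smul])
    simp only [← ha, Pi.smul_apply, smul_eq_mul, mul_left_comm _ a, ← Finset.mul_sum] at h3
    exact (mul_eq_zero.1 h3).resolve_left h4
  · intro h v hv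
    obtain ⟨h1, h2⟩ := hv i
    exact h (v i) h1 h2

/-- Generically `n i + 1` linear forms on `ℙ^{n i}` have no common zero: their coefficient matrix is
invertible. -/
theorem gcount_full (i : Bool) : GCount Y (fun _ : Fin (n i + 1) => some i) 0 := by
  let A (c : (Σ _ : Fin (n i + 1), Kt n (some i)) → ℂ) : Matrix (Fin (n i + 1)) (Fin (n i + 1)) ℂ :=
    Matrix.of fun j k => c ⟨j, k⟩
  let P : Matrix (Fin (n i + 1)) (Fin (n i + 1)) (MvPolynomial (Σ _ : Fin (n i + 1), Kt n (some i)) ℂ) :=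
    Matrix.of fun j k => MvPolynomial.X ⟨j, k⟩
  have hP : ∀ c, MvPolynomial.eval c P.det = (A c).det := by
    intro c
    rw [RingHom.map_det]
    congr 1
    ext j k
    simp [P, A]
  refine ⟨P.det, fun h0 => ?_, fun c hc => ?_⟩
  · have h1 := hP (fun jk => (1 : Matrix (Fin (n i + 1)) (Fin (n i + 1)) ℂ) jk.1 jk.2)
    rw [h0, map_zero] at h1
    have h2 : A (fun jk => (1 : Matrix (Fin (n i + 1)) (Fin (n i + 1)) ℂ) jk.1 jk.2) = 1 := rfl
    rw [h2, Matrix.det_one] at h1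
    exact zero_ne_one h1
  · rw [hP] at hc
    have : Z Y (fun _ : Fin (n i + 1) => some i) c = ∅ := by
      refine Set.eq_empty_of_forall_notMem fun x hx => ?_
      obtain ⟨v, hv⟩ := exists_rep x
      refine (hv i).1 (Matrix.eq_zero_of_mulVec_eq_zero hc ?_)
      funext j
      exact hx.2 j v hv
    rw [this]
    simp

/-- A slice with a nonzero count has at most `n i` forms on the factor `i`, by `gcount_full`. -/
theorem gcount_slice_le {ε : Bool → ℕ} {N : ℕ} (hN0 : N ≠ 0)
    (hN : GCount Y (fun j : Σ i, Fin (ε i) => some j.1) N) (i : Bool) : ε i ≤ n i := by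
  by_contra! h
  let u : Fin (n i + 1) → Σ i, Fin (ε i) := fun a => ⟨i, Fin.castLE h a⟩
  have hu : u.Injective := fun a b hab => by
    have := eq_of_heq (Sigma.mk.inj hab).2
    exact Fin.castLE_injective h this
  exact hN0 (GCount.eq_zero_of_pull hu (gcount_full i) hN)

end Counts
end Coarsening

/-! ### Generic properties and multilinear slices -/

namespace Coarsening
open MultiProj

section Gen
variable {α β : Type} [TopologicalSpace α] [TopologicalSpace β]

theorem _root_.MultiProj.Generic.mono {P Q : α → Prop} (h : Generic P) (hPQ : ∀ a, P a → Q a) : Generic Q := by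
  obtain ⟨U, h1, h2, h3⟩ := h
  exact ⟨U, h1, h2, fun a ha => hPQ a (h3 a ha)⟩

theorem _root_.MultiProj.Generic.and {P Q : α → Prop} (h : Generic P) (h' : Generic Q) :
    Generic fun a => P a ∧ Q a := by
  obtain ⟨U, h1, h2, h3⟩ := h
  obtain ⟨V, h4, h5, h6⟩ := h'
  exact ⟨U ∩ V, h1.inter h4, h2.inter_of_isOpen_left h5 h1, fun a ha => ⟨h3 a ha.1, h6 a ha.2⟩⟩

theorem _root_.MultiProj.Generic.exists [Nonempty α] {P : α → Prop} (h : Generic P) : ∃ a, P a := by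
  obtain ⟨U, -, h2, h3⟩ := h
  obtain ⟨a, ha⟩ := h2.nonempty
  exact ⟨a, h3 a ha⟩

theorem generic_forall [BaireSpace α] {κ : Type} [Finite κ] {P : κ → α → Prop} (h : ∀ k, Generic (P k)) :
    Generic fun a => ∀ k, P k a := by
  choose U h1 h2 h3 using h
  exact ⟨⋂ k, U k, isOpen_iInter_of_finite h1, dense_iInter_of_isOpen h1 h2,
    fun a ha k => h3 k a (Set.mem_iInter.1 ha k)⟩

theorem _root_.MultiProj.Generic.comp {P : β → Prop} (h : Generic P) {f : α → β} (hf : Continuous f)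
    (ho : IsOpenMap f) : Generic fun a => P (f a) := by
  obtain ⟨U, h1, h2, h3⟩ := h
  exact ⟨f ⁻¹' U, h1.preimage hf, h2.preimage ho, fun a ha => h3 _ ha⟩

/-- The complement of a hypersurface is open and dense. -/
theorem generic_ne_zero {κ : Type} [Finite κ] {G : MvPolynomial κ ℂ} (hG : G ≠ 0) :
    Generic fun c : κ → ℂ => MvPolynomial.eval c G ≠ 0 := by
  refine ⟨{c | MvPolynomial.eval c G ≠ 0}, isOpen_ne_fun (MvPolynomial.continuous_eval G) continuous_const, ?_, fun c hc => hc⟩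
  rw [dense_iff_inter_open]
  rintro U hU ⟨c, hc⟩
  by_contra h
  obtain ⟨u, hu, hs⟩ := (isOpen_pi_iff' (s := U)).1 hU c hc
  refine hG (MvPolynomial.funext_set u (fun i => infinite_of_mem_nhds (c i) ((hu i).1.mem_nhds (hu i).2)) fun x hx => ?_)
  by_contra h'
  rw [map_zero] at h'
  exact h ⟨x, hs hx, h'⟩

theorem generic_ne_zero_comp {κ E : Type} [Finite κ] [AddCommGroup E] [Module ℂ E] [TopologicalSpace E]
    [IsTopologicalAddGroup E] [ContinuousSMul ℂ E] [T2Space E] [FiniteDimensional ℂ E]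
    {G : MvPolynomial κ ℂ} (hG : G ≠ 0) (f : E →ₗ[ℂ] (κ → ℂ)) (hf : Function.Surjective f) :
    Generic fun c : E => MvPolynomial.eval (f c) G ≠ 0 :=
  (generic_ne_zero hG).comp f.continuous_of_finiteDimensional (f.isOpenMap_of_finiteDimensional hf)

end Gen

section Slices
variable {n : Bool → ℕ} {Y : Set (PStack n)}

/-- The parameters of a multilinear slice of type `ε` as coefficients of a system of linear forms. -/
def sliceMap (ε : Bool → ℕ) : SliceParams n ε →ₗ[ℂ]
    ((Σ j : (Σ i, Fin (ε i)), Kt n (some j.1)) → ℂ) where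
  toFun L jk := L jk.1.1 jk.1.2 jk.2
  map_add' _ _ := rfl
  map_smul' _ _ := rfl

theorem sliceMap_surjective (ε : Bool → ℕ) : Function.Surjective (sliceMap (n := n) ε) :=
  fun c => ⟨fun i a k => c ⟨⟨i, a⟩, k⟩, rfl⟩

theorem Z_sliceMap {ε : Bool → ℕ} (L : SliceParams n ε) :
    Z Y (fun j : Σ i, Fin (ε i) => some j.1) (sliceMap ε L) = Y ∩ SliceZeros L := by
  ext x
  constructor
  · rintro ⟨h1, h2⟩
    exact ⟨h1, fun i j => FV_some.1 (h2 ⟨i, j⟩)⟩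
  · rintro ⟨h1, h2⟩
    exact ⟨h1, fun ⟨i, j⟩ => FV_some.2 (h2 i j)⟩

theorem GCount.degIs {ε : Bool → ℕ} {N : ℕ} (h : GCount Y (fun j : Σ i, Fin (ε i) => some j.1) N) :
    DegIs Y ε N := by
  obtain ⟨G, hG, h⟩ := h
  refine (generic_ne_zero_comp hG _ (sliceMap_surjective ε)).mono fun L hL => ?_
  rw [← Z_sliceMap]
  exact h _ hL

theorem DegIs.unique {ε : Bool → ℕ} {N N' : ℕ} (h : DegIs Y ε N) (h' : DegIs Y ε N') : N = N' := by
  obtain ⟨L, h1, h2⟩ := (h.and h').exists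
  rw [← h1.2, h2.2]

/-- Nonzero counts characterize the multidimension. -/
theorem GCount.mem_MDim_iff {ε : Bool → ℕ} {N : ℕ} (h : GCount Y (fun j : Σ i, Fin (ε i) => some j.1) N) :
    ε ∈ MDim Y ↔ N ≠ 0 := by
  constructor
  · rintro ⟨-, h1⟩ rfl
    obtain ⟨L, h2, h3⟩ := (h1.and h.degIs).exists
    exact (h2.2.ncard_pos h2.1).ne' h3.2
  · intro hN
    refine ⟨gcount_slice_le hN h, h.degIs.mono fun L hL => ⟨hL.1, ?_⟩⟩
    refine Set.nonempty_of_ncard_ne_zero ?_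
    rw [hL.2]
    exact hN

theorem GCount.slice {J : Type} [Fintype J] {β : J → Bool} {N : ℕ} (h : GCount Y (fun j => some (β j)) N)
    {ε : Bool → ℕ} (hε : ∀ i, Fintype.card {j // β j = i} = ε i) :
    GCount Y (fun j : Σ i, Fin (ε i) => some j.1) N := by
  let u : (Σ i, Fin (ε i)) ≃ J :=
    (Equiv.sigmaCongrRight fun i => (Fintype.equivFinOfCardEq (hε i)).symm).trans (Equiv.sigmaFiberEquiv β)
  refine GCount.of_equiv u.symm (fun j => ?_) h
  obtain ⟨⟨i, a⟩, rfl⟩ := u.surjective j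
  rw [Equiv.symm_apply_apply]
  exact congrArg some ((Fintype.equivFinOfCardEq (hε i)).symm a).2

end Slices
end Coarsening

/-! ### Expansion of bilinear systems and the Segre map -/

namespace Coarsening
open MultiProj

section Main
variable {n : Bool → ℕ}

/-- The types of a partially expanded bilinear system: forms outside `T` are still bilinear, and those in
`T` are replaced by a linear form on the first factor (for indices in `S`) or on the second. -/
def pat {J : Type} [DecidableEq J] (T S : Finset J) (j : J) : Option Bool :=
  if j ∈ T then some (decide (j ∉ S)) else none

/-- `exists_counts` with `d = dimOf Y`: some slice of total size `d` has a nonzero count, so lies in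
the multidimension, and larger slices are generically inconsistent. -/
theorem exists_dim {Y : Set (PStack n)} (hY : IsIrredVariety Y) {e : ℕ} (he : dimOf Y = e) :
    (∀ (J : Type) [Fintype J] (τ : J → Option Bool), e < Fintype.card J → GCount Y τ 0) ∧
    ∃ cnt : (Fin e → Option Bool) → ℕ, (∀ τ, GCount Y τ (cnt τ)) ∧
      ∀ (τ : Fin e → Option Bool) (j : Fin e), τ j = none →
        cnt τ = cnt (Function.update τ j (some false)) + cnt (Function.update τ j (some true)) := by
  obtain ⟨d, h1, h2, h3, β, N, hN0, hN⟩ := exists_counts hY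
  have hd : dimOf Y = d := by
    refine IsGreatest.csSup_eq ⟨⟨fun i => Fintype.card {j // β j = i}, ?_, ?_⟩, ?_⟩
    · exact (hN.slice (fun i => rfl)).mem_MDim_iff.2 hN0
    · rw [← Fintype.card_sigma, Fintype.card_congr (Equiv.sigmaFiberEquiv β), Fintype.card_fin]
    · rintro _ ⟨ε, hε, rfl⟩
      by_contra! h
      have h4 := h1 (Σ i, Fin (ε i)) (fun j => some j.1) (by simpa using h)
      exact (h4.mem_MDim_iff.1 hε) rfl
  obtain rfl : d = e := hd.symm.trans he
  refine ⟨h1, ?_⟩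
  have h4 : ∀ τ : Fin d → Option Bool, ∃ N, GCount Y τ N := fun τ => h2 _ τ (Fintype.card_fin d).symm
  choose cnt hcnt using h4
  refine ⟨cnt, hcnt, fun τ j hj => ?_⟩
  obtain ⟨N, N', a, b, c⟩ := h3 {i // i ≠ j} (fun i => τ i) (by
    have := Fintype.card_congr (Equiv.optionSubtypeNe j)
    rw [Fintype.card_option, Fintype.card_fin] at this
    exact this.symm)
  have key : ∀ (t : Option Bool) (N : ℕ),
      GCount Y (fun o : Option {i // i ≠ j} => o.elim t fun i => τ i) N → cnt (Function.update τ j t) = N := by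
    intro t N h
    refine (hcnt _).unique (GCount.of_equiv (Equiv.optionSubtypeNe j) (fun o => ?_) h)
    rcases o with _ | i
    · simp
    · simp [i.2]
  rw [key _ _ a, key _ _ b, ← key _ _ c, ← hj, Function.update_eq_self]

/-- Full expansion of a bilinear system, by induction on the set `T` of expanded forms. -/
theorem cnt_none {J : Type} [Fintype J] [DecidableEq J] (cnt : (J → Option Bool) → ℕ)
    (h : ∀ (τ : J → Option Bool) (j : J), τ j = none →
        cnt τ = cnt (Function.update τ j (some false)) + cnt (Function.update τ j (some true)))
    (T : Finset J) : cnt (fun _ => none) = ∑ S ∈ T.powerset, cnt (pat T S) := by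
  induction T using Finset.induction_on with
  | empty =>
    rw [Finset.powerset_empty, Finset.sum_singleton]
    congr 1
  | insert j T hj ih =>
    rw [Finset.sum_powerset_insert hj, ih, ← Finset.sum_add_distrib]
    refine Finset.sum_congr rfl fun S hS => ?_
    have hjS : j ∉ S := fun h => hj (Finset.mem_powerset.1 hS h)
    rw [h _ j (by simp [pat, hj]), add_comm]
    congr 2
    · funext i
      by_cases hi : i = j
      · subst hi; simp [pat, hjS]
      · simp [pat, hi]
    · funext i
      by_cases hi : i = j
      · subst hi; simp [pat]
      · simp [pat, hi]

/-- `Deg` is the generic count of multilinear slices of total size `e`. -/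
theorem cnt_eq_deg {Y : Set (PStack n)} {e : ℕ} {Deg : ℕ → ℕ → ℕ}
    (hDeg : ∀ e₁ e₂ : ℕ, e₁ + e₂ = e →
      (((fun t => if t then e₂ else e₁) : Bool → ℕ) ∈ MDim Y →
        DegIs Y (fun t => if t then e₂ else e₁) (Deg e₁ e₂)) ∧
      (((fun t => if t then e₂ else e₁) : Bool → ℕ) ∉ MDim Y → Deg e₁ e₂ = 0))
    (S : Finset (Fin e)) {N : ℕ} (hN : GCount Y (fun j => some (decide (j ∉ S))) N) :
    N = Deg S.card (e - S.card) := by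
  have hS : S.card ≤ e := by simpa using S.card_le_univ
  obtain ⟨h1, h2⟩ := hDeg S.card (e - S.card) (by omega)
  have h3 := hN.slice (ε := fun t => if t then e - S.card else S.card) (by
    rintro (_ | _)
    · simp
    · simp [Fintype.card_subtype_compl])
  by_cases h : ((fun t => if t then e - S.card else S.card) : Bool → ℕ) ∈ MDim Y
  · exact DegIs.unique h3.degIs (h1 h)
  · rw [h2 h]
    by_contra h4
    exact h (h3.mem_MDim_iff.2 h4)

/-- The coefficients of `e` pairs of linear forms as coefficients of a system of `2e` forms, indexed by
the pair and the factor. -/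
def pairMap (n : Bool → ℕ) (e : ℕ) : (Fin e → ((Fin (n false + 1) → ℂ) × (Fin (n true + 1) → ℂ))) →ₗ[ℂ]
    ((Σ j : Fin e × Bool, Kt n (some j.2)) → ℂ) where
  toFun ℓ jk := match jk with
    | ⟨(i, false), k⟩ => (ℓ i).1 k
    | ⟨(i, true), k⟩ => (ℓ i).2 k
  map_add' ℓ ℓ' := by
    funext ⟨⟨i, b⟩, k⟩
    cases b <;> rfl
  map_smul' a ℓ := by
    funext ⟨⟨i, b⟩, k⟩
    cases b <;> rfl

theorem pairMap_surjective (e : ℕ) : Function.Surjective (pairMap n e) := fun c =>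
  ⟨fun i => (fun k => c ⟨(i, false), k⟩, fun k => c ⟨(i, true), k⟩), by
    funext ⟨⟨i, b⟩, k⟩
    cases b <;> rfl⟩

theorem FV_pairMap_false {e : ℕ} (ℓ : Fin e → ((Fin (n false + 1) → ℂ) × (Fin (n true + 1) → ℂ)))
    (i : Fin e) (x : PStack n) :
    FV (some false) (fun k => pairMap n e ℓ ⟨(i, false), k⟩) x ↔ PLinVanish (ℓ i).1 (x false) :=
  FV_some

theorem FV_pairMap_true {e : ℕ} (ℓ : Fin e → ((Fin (n false + 1) → ℂ) × (Fin (n true + 1) → ℂ)))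
    (i : Fin e) (x : PStack n) :
    FV (some true) (fun k => pairMap n e ℓ ⟨(i, true), k⟩) x ↔ PLinVanish (ℓ i).2 (x true) :=
  FV_some

/-- The coefficients of `e` hyperplanes in Segre space as coefficients of `e` bilinear forms. -/
def tensorMap (n : Bool → ℕ) (e : ℕ) : (Fin e → ((i : Bool) → Fin (n i + 1)) → ℂ) →ₗ[ℂ]
    ((Σ _ : Fin e, Kt n none) → ℂ) where
  toFun c jk := c jk.1 fun | false => jk.2.1 | true => jk.2.2
  map_add' _ _ := rfl
  map_smul' _ _ := rfl

theorem tensorMap_surjective (e : ℕ) : Function.Surjective (tensorMap n e) := fun c =>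
  ⟨fun j a => c ⟨j, (a false, a true)⟩, rfl⟩

theorem PLinVanish_iff {κ : Type} [Fintype κ] {c : κ → ℂ} {v : κ → ℂ} (hv : v ≠ 0) :
    PLinVanish c (Projectivization.mk ℂ v hv) ↔ ∑ a, c a * v a = 0 := by
  refine ⟨fun h => h v hv rfl, fun h w hw hwv => ?_⟩
  rw [Projectivization.mk_eq_mk_iff'] at hwv
  obtain ⟨a, rfl⟩ := hwv
  simp only [Pi.smul_apply, smul_eq_mul, mul_left_comm _ a, ← Finset.mul_sum, h, mul_zero]

/-- A hyperplane in Segre space pulls back to a bilinear form. -/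
theorem segre_vanish {σ : PStack n → Projectivization ℂ (((i : Bool) → Fin (n i + 1)) → ℂ)}
    (hσ : IsSegreMap n σ) (e : ℕ) (c : Fin e → ((i : Bool) → Fin (n i + 1)) → ℂ) (j : Fin e) (x : PStack n) :
    PLinVanish (c j) (σ x) ↔ FV none (fun k => tensorMap n e c ⟨j, k⟩) x := by
  obtain ⟨v, hv⟩ := exists_rep x
  obtain ⟨h1, h2⟩ := hσ x v hv
  rw [← h2, PLinVanish_iff, FV_iff hv]
  let E : Fin (n false + 1) × Fin (n true + 1) ≃ ((i : Bool) → Fin (n i + 1)) :=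
    { toFun := fun k => fun | false => k.1 | true => k.2
      invFun := fun a => (a false, a true)
      left_inv := fun _ => rfl
      right_inv := fun a => by funext i; cases i <;> rfl }
  rw [← Equiv.sum_comp E]
  apply Eq.congr _ rfl
  refine Finset.sum_congr rfl fun k _ => ?_
  rw [Fintype.prod_bool, mul_comm (v true _)]
  rfl

/-- A tensor `v ⊗ w` of nonzero vectors determines each of them up to a scalar. -/
theorem segre_injective {σ : PStack n → Projectivization ℂ (((i : Bool) → Fin (n i + 1)) → ℂ)}
    (hσ : IsSegreMap n σ) : Function.Injective σ := by
  intro x y hxy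
  obtain ⟨v, hv⟩ := exists_rep x
  obtain ⟨w, hw⟩ := exists_rep y
  obtain ⟨h1, h2⟩ := hσ x v hv
  obtain ⟨h3, h4⟩ := hσ y w hw
  rw [← h2, ← h4, Projectivization.mk_eq_mk_iff'] at hxy
  obtain ⟨a, ha⟩ := hxy
  obtain ⟨p, hp⟩ := exists_chart x hv
  have key : ∀ (k : Fin (n false + 1)) (l : Fin (n true + 1)),
      a * (w false k * w true l) = v false k * v true l := by
    intro k l
    have := congrFun ha fun | false => k | true => l
    simp only [Fintype.prod_bool, Pi.smul_apply, smul_eq_mul] at this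
    linear_combination this
  funext i
  rw [← (hv i).2, ← (hw i).2, Projectivization.mk_eq_mk_iff']
  cases i
  · refine ⟨a * w true (p true) / v true (p true), funext fun k => ?_⟩
    have := hp true
    simp only [Pi.smul_apply, smul_eq_mul]
    field_simp
    linear_combination key k (p true)
  · refine ⟨a * w false (p false) / v false (p false), funext fun k => ?_⟩
    have := hp false
    simp only [Pi.smul_apply, smul_eq_mul]
    field_simp
    linear_combination key (p false) k

end Main
end Coarsening

/-! ### The count -/

open MultiProj

open Coarsening

/-- Let `Y ⊂ ℙ^{n₁} × ℙ^{n₂}` be an irreducible multiprojective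
variety of dimension `e` and let `M` consist of `e` general products of a linear form
from each factor.  Then `Y ∩ V(M)` is the disjoint union, over partitions
`S ⊔ T = {1,…,e}`, of the multilinear sections `W_{S,T}`, each of cardinality
`Deg_Y(|S|,|T|)`, and the total count is
`δ = ∑_{e₁+e₂=e} C(e,e₁)·Deg_Y(e₁,e₂)`, the degree of the Segre embedding of `Y`. -/
theorem coarsening_count {n : Bool → ℕ}
    (Y : Set (PStack n)) (hY : IsIrredVariety Y) (e : ℕ) (he : dimOf Y = e)
    (σ : PStack n → Projectivization ℂ (((i : Bool) → Fin (n i + 1)) → ℂ))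
    (hσ : IsSegreMap n σ)
    (Deg : ℕ → ℕ → ℕ)
    (hDeg : ∀ e₁ e₂ : ℕ, e₁ + e₂ = e →
      (((fun t => if t then e₂ else e₁) : Bool → ℕ) ∈ MDim Y →
        DegIs Y (fun t => if t then e₂ else e₁) (Deg e₁ e₂)) ∧
      (((fun t => if t then e₂ else e₁) : Bool → ℕ) ∉ MDim Y → Deg e₁ e₂ = 0)) :
    Generic (fun ℓ : Fin e → ((Fin (n false + 1) → ℂ) × (Fin (n true + 1) → ℂ)) =>
      (Y ∩ {x | ∀ i, PLinVanish (ℓ i).1 (x false) ∨ PLinVanish (ℓ i).2 (x true)}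
        = ⋃ S : Finset (Fin e),
            Y ∩ {x | (∀ i ∈ S, PLinVanish (ℓ i).1 (x false)) ∧
                     (∀ i ∉ S, PLinVanish (ℓ i).2 (x true))}) ∧
      (∀ S T : Finset (Fin e), S ≠ T →
        (Y ∩ {x | (∀ i ∈ S, PLinVanish (ℓ i).1 (x false)) ∧
                  (∀ i ∉ S, PLinVanish (ℓ i).2 (x true))}) ∩
        (Y ∩ {x | (∀ i ∈ T, PLinVanish (ℓ i).1 (x false)) ∧
                  (∀ i ∉ T, PLinVanish (ℓ i).2 (x true))}) = ∅) ∧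
      (∀ S : Finset (Fin e),
        (Y ∩ {x | (∀ i ∈ S, PLinVanish (ℓ i).1 (x false)) ∧
                  (∀ i ∉ S, PLinVanish (ℓ i).2 (x true))}).Finite ∧
        (Y ∩ {x | (∀ i ∈ S, PLinVanish (ℓ i).1 (x false)) ∧
                  (∀ i ∉ S, PLinVanish (ℓ i).2 (x true))}).ncard
          = Deg S.card (e - S.card)) ∧
      (Y ∩ {x | ∀ i, PLinVanish (ℓ i).1 (x false) ∨ PLinVanish (ℓ i).2 (x true)}).Finite ∧
      (Y ∩ {x | ∀ i, PLinVanish (ℓ i).1 (x false) ∨ PLinVanish (ℓ i).2 (x true)}).ncard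
        = ∑ e₁ ∈ Finset.range (e + 1), Nat.choose e e₁ * Deg e₁ (e - e₁)) ∧
    ProjDegIs (σ '' Y) e
      (∑ e₁ ∈ Finset.range (e + 1), Nat.choose e e₁ * Deg e₁ (e - e₁)) := by
  obtain ⟨h1, cnt, hcnt, hsplit⟩ := exists_dim hY he
  have hS : ∀ S : Finset (Fin e), GCount Y (fun j => some (decide (j ∉ S))) (Deg S.card (e - S.card)) := by
    intro S
    have h := hcnt fun j => some (decide (j ∉ S))
    rwa [cnt_eq_deg hDeg S h] at h
  have htot : ∑ S : Finset (Fin e), Deg S.card (e - S.card) =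
      ∑ e₁ ∈ Finset.range (e + 1), Nat.choose e e₁ * Deg e₁ (e - e₁) := by
    have := Finset.sum_powerset_apply_card (fun k => Deg k (e - k)) (x := (Finset.univ : Finset (Fin e)))
    simpa using this
  constructor
  · have hneg : ∀ (S : Finset (Fin e)) (ℓ : Fin e → ((Fin (n false + 1) → ℂ) × (Fin (n true + 1) → ℂ))) (x : PStack n) (i : Fin e),
        FV (some (decide (i ∉ S))) (fun k => pairMap n e ℓ ⟨(i, decide (i ∉ S)), k⟩) x ↔
          ((i ∈ S → PLinVanish (ℓ i).1 (x false)) ∧ (i ∉ S → PLinVanish (ℓ i).2 (x true))) := by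
      intro S ℓ x i
      by_cases hi : i ∈ S
      · rw [decide_eq_false (not_not.2 hi), FV_pairMap_false]
        simp only [hi, true_imp_iff, not_true_eq_false, false_imp_iff, and_true]
      · rw [decide_eq_true hi, FV_pairMap_true]
        simp only [hi, true_imp_iff, not_false_eq_true, false_imp_iff, true_and]
    -- the section for `S` is a slice by `e` of the `2e` generic linear forms
    have hcount : Generic fun ℓ : Fin e → ((Fin (n false + 1) → ℂ) × (Fin (n true + 1) → ℂ)) =>
        ∀ S : Finset (Fin e),
        (Y ∩ {x | (∀ i ∈ S, PLinVanish (ℓ i).1 (x false)) ∧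
                  (∀ i ∉ S, PLinVanish (ℓ i).2 (x true))}).Finite ∧
        (Y ∩ {x | (∀ i ∈ S, PLinVanish (ℓ i).1 (x false)) ∧
                  (∀ i ∉ S, PLinVanish (ℓ i).2 (x true))}).ncard
          = Deg S.card (e - S.card) := by
      refine generic_forall fun S => ?_
      obtain ⟨G, hG, h⟩ := GCount.exists_pull (τ := fun j : Fin e × Bool => some j.2)
        (u := fun i => (i, decide (i ∉ S))) (fun i j h => (Prod.ext_iff.1 h).1) (hS S)
      refine (generic_ne_zero_comp hG _ (pairMap_surjective e)).mono fun ℓ hℓ => ?_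
      have h2 := h _ hℓ
      have : Y ∩ {x | (∀ i ∈ S, PLinVanish (ℓ i).1 (x false)) ∧ (∀ i ∉ S, PLinVanish (ℓ i).2 (x true))} =
          Z Y (fun i => some (decide (i ∉ S))) (pull (fun j : Fin e × Bool => some j.2)
            (fun i => (i, decide (i ∉ S))) (pairMap n e ℓ)) := by
        ext x
        exact and_congr_right fun _ => (forall_and.symm.trans (forall_congr' fun i => (hneg S ℓ x i).symm))
      rw [this]
      exact h2
    -- adding to the section for `S` the other form of the `i`-th pair gives `e + 1` generic forms,
    -- which have no common zero on `Y`
    have hdisj : Generic fun ℓ : Fin e → ((Fin (n false + 1) → ℂ) × (Fin (n true + 1) → ℂ)) =>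
        ∀ (S : Finset (Fin e)) (i : Fin e),
        ¬ ∃ x ∈ Y, ((∀ i ∈ S, PLinVanish (ℓ i).1 (x false)) ∧ (∀ i ∉ S, PLinVanish (ℓ i).2 (x true))) ∧
          (PLinVanish (ℓ i).1 (x false) ∧ PLinVanish (ℓ i).2 (x true)) := by
      refine generic_forall fun S => generic_forall fun i => ?_
      let u : Option (Fin e) → Fin e × Bool := fun o => o.elim (i, decide (i ∈ S)) fun j => (j, decide (j ∉ S))
      have hu : u.Injective := by
        rintro (_ | j) (_ | k) h
        · rfl
        · obtain ⟨h1, h2⟩ := Prod.ext_iff.1 h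
          obtain rfl : i = k := h1
          simp [u] at h2
        · obtain ⟨h1, h2⟩ := Prod.ext_iff.1 h
          obtain rfl : j = i := h1
          simp [u] at h2
        · rw [show j = k from (Prod.ext_iff.1 h).1]
      obtain ⟨G, hG, h⟩ := GCount.exists_pull (Y := Y) (τ := fun j : Fin e × Bool => some j.2)
        hu (h1 _ _ (by simp))
      refine (generic_ne_zero_comp hG _ (pairMap_surjective e)).mono fun ℓ hℓ => ?_
      obtain ⟨h2, h3⟩ := h _ hℓ
      rw [Set.ncard_eq_zero h2] at h3
      rintro ⟨x, hx, hxS, hi1, hi2⟩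
      refine Set.eq_empty_iff_forall_notMem.1 h3 x ⟨hx, ?_⟩
      rintro (_ | j)
      · change FV (some (decide (i ∈ S))) (fun k => pairMap n e ℓ ⟨(i, decide (i ∈ S)), k⟩) x
        by_cases hi : i ∈ S
        · rw [decide_eq_true hi, FV_pairMap_true]; exact hi2
        · rw [decide_eq_false hi, FV_pairMap_false]; exact hi1
      · exact (hneg S ℓ x j).2 ⟨hxS.1 j, hxS.2 j⟩
    refine (hcount.and hdisj).mono fun ℓ hℓ => ?_
    obtain ⟨hc, hd⟩ := hℓ
    have hunion : Y ∩ {x | ∀ i, PLinVanish (ℓ i).1 (x false) ∨ PLinVanish (ℓ i).2 (x true)}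
        = ⋃ S : Finset (Fin e),
            Y ∩ {x | (∀ i ∈ S, PLinVanish (ℓ i).1 (x false)) ∧
                     (∀ i ∉ S, PLinVanish (ℓ i).2 (x true))} := by
      classical
      ext x
      simp only [Set.mem_inter_iff, Set.mem_ofPred_eq, Set.mem_iUnion]
      constructor
      · rintro ⟨hx, h⟩
        refine ⟨Finset.univ.filter fun i => PLinVanish (ℓ i).1 (x false), hx, fun i hi => ?_, fun i hi => ?_⟩
        · simpa using hi
        · exact (h i).resolve_left (by simpa using hi)
      · rintro ⟨S, hx, h2, h3⟩
        refine ⟨hx, fun i => ?_⟩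
        by_cases hi : i ∈ S
        · exact Or.inl (h2 i hi)
        · exact Or.inr (h3 i hi)
    have hdis : ∀ S T : Finset (Fin e), S ≠ T →
        (Y ∩ {x | (∀ i ∈ S, PLinVanish (ℓ i).1 (x false)) ∧
                  (∀ i ∉ S, PLinVanish (ℓ i).2 (x true))}) ∩
        (Y ∩ {x | (∀ i ∈ T, PLinVanish (ℓ i).1 (x false)) ∧
                  (∀ i ∉ T, PLinVanish (ℓ i).2 (x true))}) = ∅ := by
      intro S T hST
      obtain ⟨i, hi⟩ : ∃ i, ¬ (i ∈ S ↔ i ∈ T) := by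
        by_contra! h
        exact hST (Finset.ext h)
      refine Set.eq_empty_iff_forall_notMem.2 ?_
      rintro x ⟨⟨hx, hxS⟩, -, hxT⟩
      refine hd S i ⟨x, hx, hxS, ?_⟩
      by_cases hiS : i ∈ S
      · have hiT : i ∉ T := fun h => hi (by simp [hiS, h])
        exact ⟨hxS.1 i hiS, hxT.2 i hiT⟩
      · have hiT : i ∈ T := by
          by_contra h
          exact hi (by simp [hiS, h])
        exact ⟨hxT.1 i hiT, hxS.2 i hiS⟩
    refine ⟨hunion, hdis, hc, ?_, ?_⟩
    · rw [hunion]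
      exact Set.finite_iUnion fun S => (hc S).1
    · rw [hunion, Set.ncard_iUnion_of_finite (fun S => (hc S).1)
        (fun S T hST => Set.disjoint_iff_inter_eq_empty.2 (hdis S T hST)), finsum_eq_sum_of_fintype, ← htot]
      exact Finset.sum_congr rfl fun S _ => (hc S).2
  · have h2 : GCount Y (fun _ : Fin e => none)
        (∑ e₁ ∈ Finset.range (e + 1), Nat.choose e e₁ * Deg e₁ (e - e₁)) := by
      have h3 := hcnt fun _ => none
      rw [cnt_none cnt hsplit Finset.univ, Finset.powerset_univ] at h3
      rw [← htot]
      convert! h3 using 2 with S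
      have : pat Finset.univ S = fun j => some (decide (j ∉ S)) := by
        funext j; simp [pat]
      rw [this]
      exact (hS S).unique (hcnt _)
    obtain ⟨G, hG, h⟩ := h2
    refine (generic_ne_zero_comp hG _ (tensorMap_surjective e)).mono fun c hc => ?_
    have h3 : σ '' Y ∩ {p | ∀ j, PLinVanish (c j) p} =
        σ '' Z Y (fun _ : Fin e => none) (tensorMap n e c) := by
      ext p
      constructor
      · rintro ⟨⟨x, hx, rfl⟩, h⟩
        exact ⟨x, ⟨hx, fun j => (segre_vanish hσ e c j x).1 (h j)⟩, rfl⟩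
      · rintro ⟨x, hx, rfl⟩
        exact ⟨⟨x, hx.1, rfl⟩, fun j => (segre_vanish hσ e c j x).2 (hx.2 j)⟩
    obtain ⟨h4, h5⟩ := h _ hc
    rw [h3, Set.ncard_image_of_injective _ (segre_injective hσ)]
    exact ⟨h4.image σ, h5⟩
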